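/- For every η > 0 there exist κ > 0 and a constant C = C(η) such that the following holds. Let p be a prime and R a real number with p^{1/8 + η} ≤ R < p^{1/2}, let χ be a non-trivial multiplicative character modulo p, and let ℱ(R) = {r/s : gcd(r, s) = 1, 0 ≤ r ≤ s ≤ R} be the set of Farey fractions of order R, embedded into 𝔽_p by sending r/s to r·s̄ mod p, where s̄ is the multiplicative inverse of s modulo p. Then for all complex weights (ξ_ρ)_{ρ ∈ ℱ(R)} and (ζ_ϱ)_{ϱ ∈ ℱ(R)} with |ξ_ρ| ≤ 1 and |ζ_ϱ| ≤ 1 for all ρ, ϱ, one has |∑_{ρ ∈ ℱ(R)} ∑_{ϱ ∈ ℱ(R)} ξ_ρ · ζ_ϱ · χ(ρ − ϱ)| ≤ C·R⁴·p^{−κ}, where χ(ρ − ϱ) means χ applied to the difference in 𝔽_p of the embedded images of ρ and ϱ. -/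

import Mathlib

open Finset

/-- The set of Farey fractions of order `R`: rationals `r/s` in lowest terms with
`0 ≤ r ≤ s ≤ R`. -/
noncomputable def fareySet (R : ℝ) : Finset ℚ :=
  (((Finset.Icc 0 ⌊R⌋₊) ×ˢ (Finset.Icc 1 ⌊R⌋₊)).filter
      fun rs => rs.1 ≤ rs.2 ∧ Nat.gcd rs.1 rs.2 = 1).image
    fun rs => (rs.1 : ℚ) / (rs.2 : ℚ)

/-- The canonical embedding of a rational `ρ = r/s` (in lowest terms) into `𝔽_p`,
sending `ρ` to `r · s̄ mod p`. -/
def fareyEmb (p : ℕ) (ρ : ℚ) : ZMod p :=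
  (ρ.num : ZMod p) * ((ρ.den : ZMod p))⁻¹

/-!
By Cauchy-Schwarz over `ρ`, the weights `ξ` are replaced by the mean square over `r` of
`∑ a, ζ a * χ (r - a)`. For every pair `(u, v)` and every shift `t`, the numerator
`r.num * a.den - a.num * r.den` of `r - a` equals `t * D - N`, where `N / D` is the image of `a`
under the Möbius transformation with columns `(t * u - r.num, u)` and `(t * v + r.den, v)`. Letting
`(u, v)` run over the coprime pairs of size `V ≈ p ^ (1 / 8)` and `t` over an interval of length
about `R / V`, and enlarging the set of transformations that arise to one, independent of `t`, of
size about `V ^ 2 * R ^ 2`, one is led to the sums `∑ t, |∑ a, e a * χ (t - X a)| ^ 2` averaged over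
all such transformations `X`, for new weights `|e a| ≤ 1`.

Expanding the square and applying Hölder's inequality leaves two independent problems.
* How often `X a = Y b` modulo `p`, in mean square over `X` and `Y`. When `R ^ 3 * V` is small
  compared to `p` this forces equality in `ℚ`, and for fixed `X` and `Y` the solutions are few
  because Farey fractions are well spaced; the loss is the greatest common divisor of the four
  determinants pairing a column of `X` with one of `Y`, which is small on average.
* The high moments of `∑ t, χ (t - x) * conj (χ (t - y))` over `x` and `y` in `𝔽_p`, which Weil's
  bound for complete character sums controls. Stepanov's method proves it, up to a constant, for
  the norms of extensions of even degree, and the `L`-function of a character of `k[X]` transfers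
  it to the ground field, since a bound on all large even power sums of its reciprocal roots bounds
  each root.

For `R ≥ p ^ (13 / 50)` the orthogonality of `χ` suffices: it bounds the sum by `4 * √p * R ^ 2`.
-/

section Stepanov

open Polynomial

lemma sum_pow_of_card_eq_sq {K ι : Type*} [Field K] [Fintype K] {Q : ℕ}
    (hK : Fintype.card K = Q ^ 2) (s : Finset ι) (f : ι → K) :
    (∑ i ∈ s, f i) ^ Q = ∑ i ∈ s, f i ^ Q := by
  obtain ⟨p, _⟩ := CharP.exists K
  obtain ⟨m, hp, hm⟩ := FiniteField.card K p
  have : Fact p.Prime := ⟨hp⟩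
  have hdvd : Q ∣ p ^ (m : ℕ) := ⟨Q, by rw [← hm, hK, sq]⟩
  obtain ⟨n, -, rfl⟩ := (Nat.dvd_prime_pow hp).1 hdvd
  exact sum_pow_char_pow p n s f

variable {D H M I L Q : ℕ}

-- `D * (l + i * Q + j * H * M) + D * M = (i * D + j * M) * Q + (D * l + (D - j) * M)`, and the
-- last summand is a remainder modulo `Q`.
lemma stepanov_exponent_injective (hQ : D * H + 1 = Q) (hc : M.Coprime D)
    (hL : D * (L + M) ≤ Q) {j j' i i' l l' : ℕ} (hj : j < D) (hj' : j' < D) (hl : l < L)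
    (hl' : l' < L) (h : l + i * Q + j * H * M = l' + i' * Q + j' * H * M) :
    j = j' ∧ i = i' ∧ l = l' := by
  obtain ⟨d, hd⟩ := Nat.exists_eq_add_of_lt hj
  obtain ⟨d', hd'⟩ := Nat.exists_eq_add_of_lt hj'
  have remainder_lt {x y : ℕ} (hx : x < L) (hy : y ≤ D) : D * x + y * M < Q := by nlinarith
  have hdivmod : D * l + (d + 1) * M + Q * (i * D + j * M) =
      D * l' + (d' + 1) * M + Q * (i' * D + j' * M) := by
    subst hQ
    zify at h hd hd' ⊢
    linear_combination (D : ℤ) * h - M * hd + M * hd'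
  have hquot : i * D + j * M = i' * D + j' * M := by
    have hQ0 : 0 < Q := by omega
    have hlt := remainder_lt hl (y := d + 1) (by omega)
    have hlt' := remainder_lt hl' (y := d' + 1) (by omega)
    rw [← ((Nat.div_mod_unique hQ0).2 ⟨hdivmod, hlt⟩).1, ((Nat.div_mod_unique hQ0).2 ⟨rfl, hlt'⟩).1]
  obtain rfl : j = j' := by
    have hmod : j * M ≡ j' * M [MOD D] := by
      simpa [Nat.ModEq] using congrArg (· % D) hquot
    exact (Nat.ModEq.cancel_right_of_coprime hc.symm hmod).eq_of_lt_of_lt hj hj'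
  obtain rfl : i = i' := Nat.eq_of_mul_eq_mul_right (by omega) (Nat.add_right_cancel hquot)
  exact ⟨rfl, rfl, by omega⟩

variable {K : Type*} [Field K] {F : K[X]}

/-- The monomials `X ^ (l + i * Q) * F ^ (j * H)`, indexed by `t = (j, i, l)`, of which Stepanov's
auxiliary polynomial is a linear combination. -/
noncomputable def stepanovMonomial (F : K[X]) (H Q : ℕ) (t : Fin D × Fin I × Fin L) : K[X] :=
  X ^ (t.2.2 + t.2.1 * Q : ℕ) * F ^ (t.1 * H : ℕ)

/-- A polynomial of low degree agreeing with `stepanovMonomial F H Q t ^ Q * F ^ ((D - 1) * H)` at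
the points of the field with `Q ^ 2` elements where `F ^ (H * (Q + 1))` takes the value `c`. -/
noncomputable def stepanovReduction (F : K[X]) (H Q : ℕ) (c : K) (t : Fin D × Fin I × Fin L) :
    K[X] :=
  C (c ^ (t.1 : ℕ)) * X ^ (t.2.2 * Q + t.2.1 : ℕ) * F ^ ((D - 1 - t.1) * H)

lemma natDegree_stepanovMonomial (hF : F.Monic) (t : Fin D × Fin I × Fin L) :
    (stepanovMonomial F H Q t).natDegree = t.2.2 + t.2.1 * Q + t.1 * H * F.natDegree := by
  rw [stepanovMonomial, (monic_X_pow _).natDegree_mul (hF.pow _), natDegree_X_pow,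
    hF.natDegree_pow]

lemma stepanovReduction_mem_degreeLT (hF : F.Monic) (c : K) (t : Fin D × Fin I × Fin L) :
    stepanovReduction F H Q c t ∈ degreeLT K (L * Q + I + F.natDegree * (D * H)) := by
  have hl : (t.2.2 : ℕ) * Q ≤ L * Q := Nat.mul_le_mul_right _ t.2.2.2.le
  have hi := t.2.1.2
  have hj : (D - 1 - t.1) * H * F.natDegree ≤ F.natDegree * (D * H) := by
    rw [mul_comm F.natDegree]; gcongr; omega
  have hdeg : (stepanovReduction F H Q c t).natDegree ≤
      (t.2.2 * Q + t.2.1 : ℕ) + (D - 1 - t.1) * H * F.natDegree := by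
    refine natDegree_mul_le.trans (add_le_add (natDegree_C_mul_X_pow_le _ _) ?_)
    rw [hF.natDegree_pow]
  rw [mem_degreeLT]
  exact degree_le_natDegree.trans_lt (by exact_mod_cast hdeg.trans_lt (by omega))

lemma exists_ne_zero_sum_smul_stepanovReduction_eq_zero (hF : F.Monic) (c : K)
    (hcount : L * Q + I + F.natDegree * (D * H) < D * I * L) :
    ∃ b : Fin D × Fin I × Fin L → K, b ≠ 0 ∧ ∑ t, b t • stepanovReduction F H Q c t = 0 := by
  let φ := Fintype.linearCombination K fun t : Fin D × Fin I × Fin L =>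
    (⟨_, stepanovReduction_mem_degreeLT (H := H) (Q := Q) hF c t⟩ :
      degreeLT K (L * Q + I + F.natDegree * (D * H)))
  have hker : LinearMap.ker φ ≠ ⊥ := by
    apply LinearMap.ker_ne_bot_of_finrank_lt
    simpa [(degreeLTEquiv K _).finrank_eq, ← mul_assoc] using hcount
  obtain ⟨b, hb, hb0⟩ := (Submodule.ne_bot_iff _).1 hker
  refine ⟨b, hb0, ?_⟩
  simpa [φ, Fintype.linearCombination_apply] using congrArg Subtype.val (LinearMap.mem_ker.1 hb)

lemma sum_smul_stepanovMonomial_ne_zero (hF : F.Monic) (hQ : D * H + 1 = Q)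
    (hc : F.natDegree.Coprime D) (hL : D * (L + F.natDegree) ≤ Q) {b : Fin D × Fin I × Fin L → K}
    (hb : b ≠ 0) : ∑ t, b t • stepanovMonomial F H Q t ≠ 0 := by
  have hmonic (t : Fin D × Fin I × Fin L) : (stepanovMonomial F H Q t).Monic :=
    (monic_X_pow _).mul (hF.pow _)
  have hdeg (t) (ht : b t ≠ 0) : (b t • stepanovMonomial F H Q t).natDegree =
      t.2.2 + t.2.1 * Q + t.1 * H * F.natDegree := by
    rw [natDegree_smul _ ht, natDegree_stepanovMonomial hF]
  intro hsum
  obtain ⟨t, ht⟩ := Function.ne_iff.1 hb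
  have hdisjoint := degree_sum_eq_of_disjoint (fun t => b t • stepanovMonomial F H Q t) univ (by
    rintro s ⟨-, hs⟩ t ⟨-, ht⟩ hst heq
    have hdegs := natDegree_eq_of_degree_eq heq
    rw [hdeg s (left_ne_zero_of_smul hs), hdeg t (left_ne_zero_of_smul ht)] at hdegs
    obtain ⟨hj, hi, hl⟩ :=
      stepanov_exponent_injective hQ hc hL s.1.2 t.1.2 s.2.2.2 t.2.2.2 hdegs
    exact hst (Prod.ext (Fin.ext hj) (Prod.ext (Fin.ext hi) (Fin.ext hl))))
  have hle := le_sup (f := fun t => (b t • stepanovMonomial F H Q t).degree) (mem_univ t)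
  rw [← hdisjoint, hsum, degree_zero, le_bot_iff, degree_eq_bot] at hle
  exact smul_ne_zero ht (hmonic t).ne_zero hle

lemma natDegree_sum_smul_stepanovMonomial_le (hF : F.Monic) (b : Fin D × Fin I × Fin L → K) :
    (∑ t, b t • stepanovMonomial F H Q t).natDegree ≤ L + I * Q + F.natDegree * (D * H) := by
  refine natDegree_sum_le_of_forall_le _ _ fun t _ => (natDegree_smul_le _ _).trans ?_
  have hi : (t.2.1 : ℕ) * Q ≤ I * Q := Nat.mul_le_mul_right _ t.2.1.2.le
  have hj : t.1 * H * F.natDegree ≤ F.natDegree * (D * H) := by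
    rw [mul_comm F.natDegree]; gcongr; exact t.1.2.le
  have := t.2.2.2
  rw [natDegree_stepanovMonomial hF]
  omega

lemma eval_stepanovMonomial_pow [Fintype K] (hK : Fintype.card K = Q ^ 2)
    (t : Fin D × Fin I × Fin L) (x : K) :
    (stepanovMonomial F H Q t).eval x ^ Q * F.eval x ^ ((D - 1) * H) =
      (stepanovReduction F H Q (F.eval x ^ (H * (Q + 1))) t).eval x := by
  have hx : (x ^ ((t.2.2 : ℕ) + t.2.1 * Q)) ^ Q = x ^ (t.2.2 * Q + t.2.1 : ℕ) := by
    rw [← pow_mul, add_mul, pow_add, mul_assoc, ← sq, mul_comm (t.2.1 : ℕ), pow_mul x (Q ^ 2), ← hK,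
      FiniteField.pow_card, ← pow_add]
  obtain ⟨d, hd⟩ : ∃ d, D - 1 = t.1 + d := ⟨D - 1 - t.1, by have := t.1.2; omega⟩
  simp only [stepanovMonomial, stepanovReduction, eval_mul, eval_C, eval_pow, eval_X, mul_pow, hx,
    hd, Nat.add_sub_cancel_left, ← pow_mul]
  ring

theorem card_eval_pow_eq_le_of_stepanov [Fintype K] [DecidableEq K] (hK : Fintype.card K = Q ^ 2)
    (hQ : D * H + 1 = Q) (hH : 0 < H) (hF : F.Monic) (hc : F.natDegree.Coprime D)
    (hL : D * (L + F.natDegree) ≤ Q) (hcount : L * Q + I + F.natDegree * (D * H) < D * I * L)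
    {c : K} (hc0 : c ≠ 0) :
    #{x : K | F.eval x ^ (H * (Q + 1)) = c} ≤ L + I * Q + F.natDegree * (D * H) := by
  obtain ⟨b, hb, hred⟩ := exists_ne_zero_sum_smul_stepanovReduction_eq_zero hF c hcount
  have hQ0 : Q ≠ 0 := by omega
  set P := ∑ t, b t ^ Q • stepanovMonomial F H Q t
  have hP : P ≠ 0 := sum_smul_stepanovMonomial_ne_zero hF hQ hc hL fun h =>
    hb (funext fun t => eq_zero_of_pow_eq_zero (congrFun h t))
  have hroot (x : K) (hx : F.eval x ^ (H * (Q + 1)) = c) : P.IsRoot x := by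
    have hFx : F.eval x ≠ 0 := by
      rintro h
      rw [h, zero_pow (by positivity)] at hx
      exact hc0 hx.symm
    have heval : P.eval x ^ Q * F.eval x ^ ((D - 1) * H) = 0 := calc
      _ = ∑ t, b t * ((stepanovMonomial F H Q t).eval x ^ Q * F.eval x ^ ((D - 1) * H)) := by
        rw [eval_finsetSum, sum_pow_of_card_eq_sq hK, sum_mul]
        refine sum_congr rfl fun t _ => ?_
        rw [eval_smul, smul_eq_mul, mul_pow, ← pow_mul, ← sq, ← hK, FiniteField.pow_card, mul_assoc]
      _ = (∑ t, b t • stepanovReduction F H Q c t).eval x := by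
        simp only [eval_stepanovMonomial_pow hK, hx, eval_finsetSum, eval_smul, smul_eq_mul]
      _ = 0 := by rw [hred, eval_zero]
    exact eq_zero_of_pow_eq_zero ((mul_eq_zero_iff_right (pow_ne_zero _ hFx)).1 heval)
  calc #{x : K | F.eval x ^ (H * (Q + 1)) = c} ≤ #P.roots.toFinset :=
        card_le_card fun x hx => by simpa [hP] using hroot x (by simpa using hx)
    _ ≤ P.natDegree := (Multiset.toFinset_card_le _).trans (card_roots' _)
    _ ≤ _ := natDegree_sum_smul_stepanovMonomial_le hF _

end Stepanov

section NormCharacterSum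

open Polynomial

lemma card_norm_aeval_eq_zero_le {k K : Type*} [Field k] [DecidableEq k] [Field K] [Fintype K]
    [Algebra k K] {F : k[X]} (hF : F.Monic) :
    #{x : K | Algebra.norm k (aeval x F) = 0} ≤ F.natDegree := by
  classical
  calc #{x : K | Algebra.norm k (aeval x F) = 0}
      ≤ #(F.map (algebraMap k K)).roots.toFinset := card_le_card fun x hx => by
        rw [Multiset.mem_toFinset, mem_roots (hF.map _).ne_zero, IsRoot, eval_map_algebraMap]
        exact Algebra.norm_eq_zero_iff.1 (mem_filter.1 hx).2
    _ ≤ (F.map (algebraMap k K)).natDegree :=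
        (Multiset.toFinset_card_le _).trans (card_roots' _)
    _ = F.natDegree := hF.natDegree_map _

variable {k : Type*} [Field k] [Fintype k]

lemma norm_mulChar_apply_le_one {A : Type*} [CommRing A] [Finite A] (ψ : MulChar A ℂ) (a : A) :
    ‖ψ a‖ ≤ 1 := by
  have := Fintype.ofFinite Aˣ
  by_cases ha : IsUnit a
  · obtain ⟨u, rfl⟩ := ha
    exact (Complex.norm_eq_one_of_mem_rootsOfUnity (ψ.apply_mem_rootsOfUnity u)).le
  · rw [ψ.map_nonunit ha, norm_zero]
    exact zero_le_one

lemma two_lt_card_of_mulChar_ne_one {R : Type*} [CommMonoidWithZero R] {ψ : MulChar k R}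
    (hψ : ψ ≠ 1) : 2 < Fintype.card k := by
  classical
  by_contra! hle
  refine hψ (MulChar.ext fun u => ?_)
  have hcard : Fintype.card kˣ ≤ 1 := by rw [Fintype.card_units]; omega
  have := Fintype.card_le_one_iff_subsingleton.1 hcard
  rw [Subsingleton.elim u 1, Units.val_one, map_one, map_one]

lemma norm_sum_mulChar_le_of_card_fiber [DecidableEq k] {ψ : MulChar k ℂ} (hψ : ψ ≠ 1) {ι : Type*}
    [Fintype ι] (g : ι → k) {a B : ℝ} (h : ∀ c ≠ 0, |(#{x | g x = c} : ℝ) - a| ≤ B) :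
    ‖∑ x, ψ (g x)‖ ≤ (Fintype.card k - 1 : ℕ) * B := by
  have hfiber : ∑ x, ψ (g x) = ∑ c, ψ c * ((#{x | g x = c} : ℝ) - a : ℝ) := calc
    _ = ∑ c, ψ c * #{x | g x = c} := by
      rw [← sum_fiberwise univ g]
      refine sum_congr rfl fun c _ => ?_
      rw [sum_congr rfl fun x hx => by rw [(mem_filter.1 hx).2], sum_const, nsmul_eq_mul, mul_comm]
    _ = _ := by
      push_cast
      simp only [mul_sub, sum_sub_distrib, ← sum_mul, MulChar.sum_eq_zero_of_ne_one hψ, zero_mul,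
        sub_zero]
  rw [hfiber, ← sum_erase univ (a := 0) (by rw [MulChar.map_zero, zero_mul])]
  have hterm (c) (hc : c ∈ univ.erase (0 : k)) :
      ‖ψ c * ((#{x | g x = c} : ℝ) - a : ℝ)‖ ≤ B := by
    rw [norm_mul, Complex.norm_real, Real.norm_eq_abs]
    exact (mul_le_of_le_one_left (abs_nonneg _) (norm_mulChar_apply_le_one ψ c)).trans
      (h c (ne_of_mem_erase hc))
  refine (norm_sum_le_of_le _ hterm).trans_eq ?_
  rw [sum_const, card_erase_of_mem (mem_univ _), card_univ, nsmul_eq_mul]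

variable {K : Type*} [Field K] [Fintype K] [Algebra k K] {D H Q : ℕ} {F : k[X]}

lemma algebraMap_norm_eq_pow_of_card_eq_sq (hk : Fintype.card k = D + 1) (hD : 0 < D)
    (hQ : D * H + 1 = Q) (hK : Fintype.card K = Q ^ 2) (x : K) :
    algebraMap k K (Algebra.norm k x) = x ^ (H * (Q + 1)) := by
  rw [FiniteField.algebraMap_norm_eq_pow, Nat.card_eq_fintype_card, Nat.card_eq_fintype_card, hK,
    hk, Nat.add_sub_cancel]
  congr 1
  refine Nat.div_eq_of_eq_mul_right hD ?_
  rw [← hQ, Nat.sub_eq_iff_eq_add (Nat.one_le_pow _ _ (by omega))]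
  ring

-- Stepanov's count with `I = H + M + 2` and `L = H - M`, where `M = F.natDegree`.
lemma card_norm_aeval_eq_le [DecidableEq k] (hk : Fintype.card k = D + 1) (hD : 2 ≤ D)
    (hQ : D * H + 1 = Q) (hK : Fintype.card K = Q ^ 2) (hF : F.Monic) (hc : F.natDegree.Coprime D)
    (hH : F.natDegree + 2 + F.natDegree * (D * F.natDegree + 2 * D) < H) {c : k} (hc0 : c ≠ 0) :
    #{x : K | Algebra.norm k (aeval x F) = c} ≤ H * Q + (2 * F.natDegree + 3) * Q := by
  classical
  set M := F.natDegree
  have hdeg : (F.map (algebraMap k K)).natDegree = M := hF.natDegree_map _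
  obtain ⟨L, rfl⟩ : ∃ L, H = L + M := ⟨H - M, by omega⟩
  have hcount : L * Q + (L + M + M + 2) + M * (D * (L + M)) < D * (L + M + M + 2) * L := by
    obtain ⟨d, rfl⟩ : ∃ d, D = d + 2 := ⟨D - 2, by omega⟩
    rw [← hQ]
    nlinarith [Nat.zero_le (d * L), Nat.zero_le (d * M), Nat.zero_le (d * M * L)]
  have hstepanov := card_eval_pow_eq_le_of_stepanov (I := L + M + M + 2) (L := L) hK hQ (by omega)
    (hF.map (algebraMap k K)) (by rwa [hdeg]) (by rw [hdeg]; omega) (by rw [hdeg]; exact hcount)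
    ((map_ne_zero (algebraMap k K)).2 hc0)
  have hfiber (x : K) : Algebra.norm k (aeval x F) = c ↔
      (F.map (algebraMap k K)).eval x ^ ((L + M) * (Q + 1)) = algebraMap k K c := by
    rw [eval_map_algebraMap, ← algebraMap_norm_eq_pow_of_card_eq_sq hk (by omega) hQ hK,
      (algebraMap k K).injective.eq_iff]
  have hDH : M * (D * (L + M)) ≤ M * Q := Nat.mul_le_mul_left _ (by omega)
  have hL : L ≤ Q := by nlinarith
  simp only [hfiber]
  rw [hdeg] at hstepanov
  nlinarith

lemma le_card_norm_aeval_eq_add [DecidableEq k] (hk : Fintype.card k = D + 1) (hD : 2 ≤ D)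
    (hQ : D * H + 1 = Q) (hK : Fintype.card K = Q ^ 2) (hF : F.Monic) (hc : F.natDegree.Coprime D)
    (hH : F.natDegree + 2 + F.natDegree * (D * F.natDegree + 2 * D) < H) {c : k} (hc0 : c ≠ 0) :
    H * Q ≤ #{x : K | Algebra.norm k (aeval x F) = c} +
      (D * (2 * F.natDegree + 3) + F.natDegree) * Q := by
  set N : k → ℕ := fun c => #{x : K | Algebra.norm k (aeval x F) = c}
  have hmem : c ∈ univ.erase 0 := mem_erase.2 ⟨hc0, mem_univ c⟩
  have htotal : N 0 + (N c + ∑ b ∈ (univ.erase 0).erase c, N b) = Q ^ 2 := by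
    rw [add_sum_erase _ _ hmem, add_sum_erase _ _ (mem_univ 0), ← hK, ← card_univ]
    exact (card_eq_sum_card_fiberwise fun x _ => mem_univ _).symm
  have hothers : ∑ b ∈ (univ.erase 0).erase c, N b ≤
      (D - 1) * (H * Q + (2 * F.natDegree + 3) * Q) := by
    refine (sum_le_card_nsmul _ _ (H * Q + (2 * F.natDegree + 3) * Q) fun b hb =>
      card_norm_aeval_eq_le hk hD hQ hK hF hc hH (ne_of_mem_erase (mem_of_mem_erase hb))).trans ?_
    rw [card_erase_of_mem hmem, card_erase_of_mem (mem_univ _), card_univ, hk, smul_eq_mul,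
      Nat.add_sub_cancel]
  have hzero : N 0 ≤ F.natDegree := card_norm_aeval_eq_zero_le hF
  obtain ⟨d, rfl⟩ : ∃ d, D = d + 1 := ⟨D - 1, by omega⟩
  have hQsq : Q ^ 2 = (d + 1) * H * Q + Q := by rw [← hQ]; ring
  have hdeg : F.natDegree ≤ F.natDegree * Q := Nat.le_mul_of_pos_right _ (by omega)
  rw [Nat.add_sub_cancel] at hothers
  change H * Q ≤ N c + _
  nlinarith

lemma abs_card_norm_aeval_eq_sub_le [DecidableEq k] (hk : Fintype.card k = D + 1) (hD : 2 ≤ D)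
    (hQ : D * H + 1 = Q) (hK : Fintype.card K = Q ^ 2) (hF : F.Monic) (hc : F.natDegree.Coprime D)
    (hH : F.natDegree + 2 + F.natDegree * (D * F.natDegree + 2 * D) < H) {c : k} (hc0 : c ≠ 0) :
    |(#{x : K | Algebra.norm k (aeval x F) = c} : ℝ) - (H * Q : ℕ)| ≤
      ((D * (2 * F.natDegree + 3) + F.natDegree) * Q : ℕ) := by
  have hupper := card_norm_aeval_eq_le hk hD hQ hK hF hc hH hc0
  have hlower := le_card_norm_aeval_eq_add hk hD hQ hK hF hc hH hc0
  have hconst : (2 * F.natDegree + 3) * Q ≤ (D * (2 * F.natDegree + 3) + F.natDegree) * Q :=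
    Nat.mul_le_mul_right _ (by nlinarith)
  rw [abs_sub_le_iff, sub_le_iff_le_add, sub_le_iff_le_add]
  norm_cast
  omega

theorem norm_sum_mulChar_norm_aeval_le {n : ℕ} (hk : Fintype.card k = D + 1)
    (hK : Fintype.card K = Fintype.card k ^ (2 * n)) (hF : F.Monic) (hc : F.natDegree.Coprime D)
    (hn : F.natDegree + 2 + F.natDegree * (D * F.natDegree + 2 * D) < n) {ψ : MulChar k ℂ}
    (hψ : ψ ≠ 1) :
    ‖∑ x : K, ψ (Algebra.norm k (aeval x F))‖ ≤
      D * (D * (2 * F.natDegree + 3) + F.natDegree : ℕ) * (Fintype.card k : ℝ) ^ n := by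
  classical
  have hD : 2 ≤ D := by have := two_lt_card_of_mulChar_ne_one hψ; omega
  obtain ⟨H, hH⟩ : D ∣ (D + 1) ^ n - 1 := by simpa using Nat.sub_dvd_pow_sub_pow (D + 1) 1 n
  have hpow : 1 ≤ (D + 1) ^ n := Nat.one_le_pow _ _ (by omega)
  have hnH : n ≤ H := by
    have bernoulli : 1 + n * D ≤ (1 + D) ^ n := by
      exact_mod_cast one_add_mul_le_pow (show (-2 : ℤ) ≤ D by omega) n
    rw [add_comm 1 D] at bernoulli
    nlinarith [Nat.sub_add_cancel hpow]
  have hfiber (c : k) (hc0 : c ≠ 0) := abs_card_norm_aeval_eq_sub_le (K := K) (H := H)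
    (Q := (D + 1) ^ n) hk hD (by omega) (by rw [hK, hk, ← pow_mul, mul_comm]) hF hc (by omega) hc0
  refine (norm_sum_mulChar_le_of_card_fiber hψ _ hfiber).trans_eq ?_
  rw [hk]
  simp only [Nat.add_sub_cancel]
  push_cast
  ring

end NormCharacterSum

section PowerSums

open Polynomial Filter

lemma le_one_of_pow_bounded {a x B : ℝ} {N : ℕ} (ha : 0 < a) (h : ∀ n ≥ N, a * x ^ n ≤ B) :
    x ≤ 1 := by
  by_contra! hx
  have htop := (tendsto_pow_atTop_atTop_of_one_lt hx).const_mul_atTop ha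
  obtain ⟨n, hn, hNn⟩ := ((htop.eventually_gt_atTop B).and (eventually_ge_atTop N)).exists
  exact hn.not_ge (h n hNn)

-- The polynomial vanishing at the elements of `s` other than `b` isolates the contribution of `b`.
lemma norm_le_of_norm_sum_pow_le {s : Multiset ℂ} {q C : ℝ} {N : ℕ} (hq : 0 < q)
    (h : ∀ n ≥ N, ‖(s.map (· ^ n)).sum‖ ≤ C * q ^ n) {b : ℂ} (hb : b ∈ s) : ‖b‖ ≤ q := by
  classical
  set P : ℂ[X] := ∏ a ∈ s.toFinset.erase b, (X - Polynomial.C a)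
  have hPb : 0 < s.count b * ‖P.eval b‖ := by
    have hne : P.eval b ≠ 0 := by
      rw [eval_prod, prod_ne_zero_iff]
      intro a ha
      simpa [sub_eq_zero] using (ne_of_mem_erase ha).symm
    have := Multiset.count_pos.2 hb
    positivity
  have isolate (n : ℕ) : ∑ j ∈ range (P.natDegree + 1), P.coeff j * (s.map (· ^ (j + n))).sum =
      s.count b * P.eval b * b ^ n := calc
    _ = ∑ j ∈ range (P.natDegree + 1), (s.map fun a => P.coeff j * a ^ j * a ^ n).sum := by
      simp only [pow_add, mul_assoc, Multiset.sum_map_mul_left]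
    _ = (s.map fun a => ∑ j ∈ range (P.natDegree + 1), P.coeff j * a ^ j * a ^ n).sum :=
      Multiset.sum_map_sum_map _ _
    _ = (s.map fun a => P.eval a * a ^ n).sum := by simp only [eval_eq_sum_range, sum_mul]
    _ = ∑ a ∈ s.toFinset, s.count a • (P.eval a * a ^ n) := sum_multiset_map_count _ _
    _ = s.count b * P.eval b * b ^ n := by
      rw [sum_eq_single_of_mem b (Multiset.mem_toFinset.2 hb), nsmul_eq_mul, mul_assoc]
      intro a ha hab
      rw [eval_prod, prod_eq_zero (mem_erase.2 ⟨hab, ha⟩) (by simp), zero_mul, smul_zero]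
  have bounded (n : ℕ) (hn : n ≥ N) : s.count b * ‖P.eval b‖ * (‖b‖ / q) ^ n ≤
      ∑ j ∈ range (P.natDegree + 1), ‖P.coeff j‖ * (C * q ^ j) := by
    rw [div_pow, ← mul_div_assoc, div_le_iff₀ (by positivity), ← Complex.norm_natCast, ← norm_pow,
      ← norm_mul, ← norm_mul, ← isolate, sum_mul]
    refine norm_sum_le_of_le _ fun j _ => ?_
    rw [norm_mul, mul_assoc, mul_assoc, ← pow_add]
    exact mul_le_mul_of_nonneg_left (h _ (by omega)) (norm_nonneg _)
  exact (div_le_one hq).1 (le_one_of_pow_bounded hPb bounded)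

end PowerSums

section ReciprocalRoots

open PowerSeries

lemma derivative_prod_one_sub_C_mul_X {R : Type*} [CommRing R] (s : Multiset R) :
    d⁄dX R (s.map fun a => 1 - C a * X).prod =
      -((s.map fun a => 1 - C a * X).prod * PowerSeries.mk fun m => (s.map (· ^ (m + 1))).sum) := by
  induction s using Multiset.induction with
  | empty => ext; simp
  | cons a s ih =>
    have geometric : (1 - C a * X) * PowerSeries.mk (fun m => a ^ (m + 1)) = C a := by
      ext m
      rw [sub_mul, one_mul, mul_assoc, map_sub, coeff_C_mul, coeff_C, coeff_mk]
      cases m with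
      | zero => simp
      | succ m => simp [coeff_succ_X_mul, pow_succ']
    have hsum : (PowerSeries.mk fun m => ((a ::ₘ s).map (· ^ (m + 1))).sum) =
        PowerSeries.mk (fun m => a ^ (m + 1)) +
          PowerSeries.mk fun m => (s.map (· ^ (m + 1))).sum := by
      ext m; simp
    have hfactor : d⁄dX R (1 - C a * X) = -C a := by
      rw [map_sub, Derivation.map_one_eq_zero, Derivation.leibniz]
      simp
    rw [hsum, Multiset.map_cons, Multiset.prod_cons, Derivation.leibniz, ih, hfactor]
    simp only [smul_eq_mul]
    linear_combination (s.map fun a => 1 - C a * X).prod * geometric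

lemma eq_prod_one_sub_C_inv_mul_X {F : Type*} [Field F] {L : Polynomial F} (hL : L.Splits)
    (h0 : L.coeff 0 = 1) :
    L = (L.roots.map fun r => 1 - Polynomial.C r⁻¹ * Polynomial.X).prod := by
  have hfactor (r : F) (hr : r ∈ L.roots) : Polynomial.X - Polynomial.C r =
      Polynomial.C (-r) * (1 - Polynomial.C r⁻¹ * Polynomial.X) := by
    have hr0 : r ≠ 0 := by
      rintro rfl
      have := (Polynomial.mem_roots'.1 hr).2
      rw [Polynomial.IsRoot, ← Polynomial.coeff_zero_eq_eval_zero, h0] at this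
      exact one_ne_zero this
    rw [mul_sub, ← mul_assoc, ← Polynomial.C_mul, neg_mul, mul_inv_cancel₀ hr0]
    simp only [map_neg, map_one]
    ring
  have hprod := hL.eq_prod_roots
  rw [Multiset.map_congr rfl hfactor, Multiset.prod_map_mul, ← mul_assoc,
    Multiset.prod_hom' _ Polynomial.C, ← Polynomial.C_mul] at hprod
  have hconst := congrArg (Polynomial.eval 0) hprod
  rw [Polynomial.eval_mul, Polynomial.eval_C, Polynomial.eval_multiset_prod, Multiset.map_map,
    ← Polynomial.coeff_zero_eq_eval_zero, h0] at hconst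
  simp only [Function.comp_def, Polynomial.eval_sub, Polynomial.eval_one, Polynomial.eval_mul,
    Polynomial.eval_X, mul_zero, sub_zero, Multiset.map_const', Multiset.prod_replicate, one_pow,
    mul_one] at hconst
  rwa [← hconst, Polynomial.C_1, one_mul] at hprod

-- The coefficients of `T L' / L` are minus the power sums of the reciprocal roots of `L`.
lemma norm_coeff_one_le_of_logDeriv {L : Polynomial ℂ} (h0 : L.coeff 0 = 1) {S : ℂ⟦X⟧}
    (hS : X * d⁄dX ℂ (L : ℂ⟦X⟧) = (L : ℂ⟦X⟧) * S) {q C : ℝ} {N : ℕ} (hq : 0 < q)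
    (hbound : ∀ m ≥ N, ‖coeff (2 * m) S‖ ≤ C * q ^ m) :
    ‖L.coeff 1‖ ≤ L.natDegree * √q := by
  set α := L.roots.map (·⁻¹)
  have hL : (L : ℂ⟦X⟧) = (α.map fun a => 1 - PowerSeries.C a * X).prod := by
    conv_lhs => rw [eq_prod_one_sub_C_inv_mul_X (IsAlgClosed.splits L) h0]
    rw [← Polynomial.coeToPowerSeries.ringHom_apply, map_multiset_prod, Multiset.map_map,
      Multiset.map_map]
    simp [Function.comp_def]
  have hderiv : d⁄dX ℂ (L : ℂ⟦X⟧) =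
      -((L : ℂ⟦X⟧) * PowerSeries.mk fun m => (α.map (· ^ (m + 1))).sum) := by
    rw [hL, derivative_prod_one_sub_C_mul_X]
  have hLne : (L : ℂ⟦X⟧) ≠ 0 := by
    intro h
    simpa [h0] using congrArg (coeff 0) h
  have hcoeff (m : ℕ) : coeff (m + 1) S = -(α.map (· ^ (m + 1))).sum := by
    have hSα : S = -(X * PowerSeries.mk fun m => (α.map (· ^ (m + 1))).sum) := by
      apply mul_left_cancel₀ hLne
      rw [← hS, hderiv]
      ring
    rw [hSα, map_neg, coeff_succ_X_mul, coeff_mk]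
  have hα (a : ℂ) (ha : a ∈ α) : ‖a‖ ≤ √q := by
    refine Real.le_sqrt_of_sq_le ?_
    rw [← norm_pow]
    refine norm_le_of_norm_sum_pow_le (s := α.map (· ^ 2)) (N := N + 1) (C := C) hq ?_
      (Multiset.mem_map_of_mem _ ha)
    intro m hm
    obtain ⟨n, rfl⟩ : ∃ n, m = n + 1 := ⟨m - 1, by omega⟩
    have := hbound (n + 1) (by omega)
    rw [mul_add, mul_one, hcoeff (2 * n + 1), norm_neg] at this
    simpa only [Multiset.map_map, Function.comp_def, ← pow_mul, mul_add] using this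
  have hone : L.coeff 1 = -α.sum := by
    have := congrArg (coeff 0) hderiv
    simpa [coeff_derivative, h0] using this
  rw [hone, norm_neg]
  calc ‖α.sum‖ ≤ (α.map norm).sum := norm_multiset_sum_le _
    _ ≤ (α.map norm).card • √q := Multiset.sum_le_card_nsmul _ _ (by simpa using hα)
    _ ≤ L.natDegree * √q := by
      rw [Multiset.card_map, Multiset.card_map, nsmul_eq_mul]
      gcongr
      exact L.card_roots'

end ReciprocalRoots

section EulerProduct

open Polynomial UniqueFactorizationMonoid

variable {k : Type*} [Field k]

lemma finite_setOf_monic_natDegree_eq (k : Type*) [Field k] [Finite k] (N : ℕ) :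
    {h : k[X] | h.Monic ∧ h.natDegree = N}.Finite := by
  have : Finite (degreeLT k N) := Finite.of_equiv _ (degreeLTEquiv k N).toEquiv.symm
  exact Set.finite_coe_iff.1 (Finite.of_equiv _ (monicEquivDegreeLT (R := k) N).symm)

/-- The monic polynomials of degree `N` over a finite field. -/
noncomputable def monicsOfDegree (k : Type*) [Field k] [Finite k] (N : ℕ) : Finset k[X] :=
  (finite_setOf_monic_natDegree_eq k N).toFinset

lemma mem_monicsOfDegree [Finite k] {N : ℕ} {h : k[X]} :
    h ∈ monicsOfDegree k N ↔ h.Monic ∧ h.natDegree = N := by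
  simp [monicsOfDegree]

lemma finite_setOf_prime_power_natDegree_eq (k : Type*) [Field k] [Finite k] (j : ℕ) :
    {x : k[X] × ℕ | x.1.Monic ∧ Irreducible x.1 ∧ 0 < x.2 ∧ x.1.natDegree * x.2 = j}.Finite := by
  refine (((range (j + 1)).finite_toSet.biUnion fun d _ =>
    finite_setOf_monic_natDegree_eq k d).prod (range (j + 1)).finite_toSet).subset ?_
  rintro ⟨P, m⟩ ⟨hP, hirr, hm, rfl⟩
  have hdeg : P.natDegree ≤ P.natDegree * m := Nat.le_mul_of_pos_right _ hm
  have hexp : m ≤ P.natDegree * m := Nat.le_mul_of_pos_left _ hirr.natDegree_pos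
  exact ⟨Set.mem_biUnion (mem_coe.2 (mem_range_succ_iff.2 hdeg)) ⟨hP, rfl⟩,
    mem_coe.2 (mem_range_succ_iff.2 hexp)⟩

/-- The prime powers of degree `j` in `k[X]`, encoded as the pairs `(P, m)` with `P` monic
irreducible and `m > 0` such that `P ^ m` has degree `j`. -/
noncomputable def primePowersOfDegree (k : Type*) [Field k] [Finite k] (j : ℕ) :
    Finset (k[X] × ℕ) :=
  (finite_setOf_prime_power_natDegree_eq k j).toFinset

lemma mem_primePowersOfDegree [Finite k] {j : ℕ} {x : k[X] × ℕ} : x ∈ primePowersOfDegree k j ↔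
    x.1.Monic ∧ Irreducible x.1 ∧ 0 < x.2 ∧ x.1.natDegree * x.2 = j := by
  simp [primePowersOfDegree]

lemma pow_dvd_iff_le_count_normalizedFactors [DecidableEq k] {h P : k[X]} (hh : h ≠ 0)
    (hP : P.Monic) (hirr : Irreducible P) {m : ℕ} :
    P ^ m ∣ h ↔ m ≤ (normalizedFactors h).count P := by
  rw [pow_dvd_iff_le_emultiplicity, emultiplicity_eq_count_normalizedFactors hirr hh,
    hP.normalize_eq_self, Nat.cast_le]

lemma natDegree_eq_sum_count_normalizedFactors [DecidableEq k] {h : k[X]} (hh : h.Monic) :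
    h.natDegree =
      ∑ P ∈ (normalizedFactors h).toFinset, (normalizedFactors h).count P * P.natDegree := by
  have hprod : (normalizedFactors h).prod = h := by
    simpa [hh.leadingCoeff] using leadingCoeff_mul_prod_normalizedFactors h
  conv_lhs => rw [← hprod]
  rw [natDegree_multiset_prod_of_monic _ fun f hf =>
      ((Polynomial.mem_normalizedFactors_iff hh.ne_zero).1 hf).2.1,
    sum_multiset_map_count]
  simp only [smul_eq_mul]

open Classical in
lemma natDegree_eq_sum_primePowersOfDegree [Finite k] {h : k[X]} (hh : h.Monic) :
    h.natDegree = ∑ j ∈ range (h.natDegree + 1),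
      ∑ x ∈ primePowersOfDegree k j with x.1 ^ x.2 ∣ h, x.1.natDegree := by
  set s := (normalizedFactors h).toFinset.sigma fun P =>
    Icc 1 ((normalizedFactors h).count P)
  have hs {P : k[X]} {m : ℕ} :
      (⟨P, m⟩ : Σ _ : k[X], ℕ) ∈ s ↔ P.Monic ∧ Irreducible P ∧ 0 < m ∧ P ^ m ∣ h := by
    rw [mem_sigma, Multiset.mem_toFinset, Polynomial.mem_normalizedFactors_iff hh.ne_zero,
      mem_Icc]
    constructor
    · rintro ⟨⟨hirr, hP, -⟩, hm, hle⟩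
      exact ⟨hP, hirr, hm, (pow_dvd_iff_le_count_normalizedFactors hh.ne_zero hP hirr).2 hle⟩
    · rintro ⟨hP, hirr, hm, hdvd⟩
      exact ⟨⟨hirr, hP, (dvd_pow_self P hm.ne').trans hdvd⟩, hm,
        (pow_dvd_iff_le_count_normalizedFactors hh.ne_zero hP hirr).1 hdvd⟩
  have hmaps (x) (hx : x ∈ s) : x.1.natDegree * x.2 ∈ range (h.natDegree + 1) := by
    have := natDegree_le_of_dvd (hs.1 hx).2.2.2 hh.ne_zero
    rw [natDegree_pow] at this
    rw [mem_range]
    linarith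
  calc h.natDegree = ∑ x ∈ s, x.1.natDegree := by
        rw [sum_sigma]
        conv_lhs => rw [natDegree_eq_sum_count_normalizedFactors hh]
        simp
    _ = ∑ j ∈ range (h.natDegree + 1), ∑ x ∈ s with x.1.natDegree * x.2 = j, x.1.natDegree :=
        (sum_fiberwise_of_maps_to hmaps _).symm
    _ = _ := sum_congr rfl fun j _ => by
        refine sum_bij' (fun x _ => (x.1, x.2)) (fun x _ => ⟨x.1, x.2⟩) ?_ ?_
          (fun _ _ => rfl) (fun _ _ => rfl) (fun _ _ => rfl)
        · rintro ⟨P, m⟩ hx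
          obtain ⟨hx, hj⟩ := mem_filter.1 hx
          obtain ⟨hP, hirr, hm, hdvd⟩ := hs.1 hx
          exact mem_filter.2 ⟨mem_primePowersOfDegree.2 ⟨hP, hirr, hm, hj⟩, hdvd⟩
        · rintro ⟨P, m⟩ hx
          obtain ⟨hx, hdvd⟩ := mem_filter.1 hx
          obtain ⟨hP, hirr, hm, hj⟩ := mem_primePowersOfDegree.1 hx
          exact mem_filter.2 ⟨hs.2 ⟨hP, hirr, hm, hdvd⟩, hj⟩

variable [Finite k] {R : Type*} [CommRing R]

open Classical in
lemma sum_monicsOfDegree_filter_dvd (Ψ : k[X] →* R) {g : k[X]} (hg : g.Monic) (i : ℕ) :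
    ∑ h ∈ monicsOfDegree k (i + g.natDegree) with g ∣ h, Ψ h =
      (∑ h ∈ monicsOfDegree k i, Ψ h) * Ψ g := by
  rw [sum_mul]
  symm
  refine sum_bij (fun h _ => h * g) ?_ (fun _ _ _ _ => mul_right_cancel₀ hg.ne_zero) ?_
    fun h _ => (map_mul Ψ h g).symm
  · intro h hh
    obtain ⟨hmonic, hdeg⟩ := mem_monicsOfDegree.1 hh
    exact mem_filter.2 ⟨mem_monicsOfDegree.2 ⟨hmonic.mul hg, by rw [hmonic.natDegree_mul hg, hdeg]⟩,
      dvd_mul_left g h⟩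
  · intro f hf
    obtain ⟨hf, h, rfl⟩ := mem_filter.1 hf
    obtain ⟨hmonic, hdeg⟩ := mem_monicsOfDegree.1 hf
    have hh : h.Monic := hg.of_mul_monic_left hmonic
    rw [hg.natDegree_mul hh] at hdeg
    exact ⟨h, mem_monicsOfDegree.2 ⟨hh, by omega⟩, mul_comm h g⟩

/-- The generating series `∑ Ψ(h) T ^ deg h` over all monic `h`, i.e. the `L`-function of a
completely multiplicative function `Ψ` on `k[X]`. -/
noncomputable def polynomialLSeries (Ψ : k[X] →* R) : PowerSeries R :=
  PowerSeries.mk fun N => ∑ h ∈ monicsOfDegree k N, Ψ h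

/-- The series `∑ (deg P) Ψ(P) ^ m T ^ deg (P ^ m)` over all prime powers `P ^ m`, i.e. the
`L`-function of `Ψ` twisted by the von Mangoldt function of `k[X]`. -/
noncomputable def polynomialVonMangoldtSeries (Ψ : k[X] →* R) : PowerSeries R :=
  PowerSeries.mk fun j => ∑ x ∈ primePowersOfDegree k j, (x.1.natDegree : R) * Ψ x.1 ^ x.2

lemma coeff_X_mul_derivative (f : PowerSeries R) (N : ℕ) :
    PowerSeries.coeff N (PowerSeries.X * PowerSeries.derivative R f) =
      N * PowerSeries.coeff N f := by
  cases N with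
  | zero => simp
  | succ N =>
    rw [PowerSeries.coeff_succ_X_mul, PowerSeries.coeff_derivative, mul_comm, Nat.cast_succ]

open Classical in
theorem X_mul_derivative_polynomialLSeries (Ψ : k[X] →* R) :
    PowerSeries.X * PowerSeries.derivative R (polynomialLSeries Ψ) =
      polynomialLSeries Ψ * polynomialVonMangoldtSeries Ψ := by
  ext N
  rw [coeff_X_mul_derivative, mul_comm (polynomialLSeries Ψ), PowerSeries.coeff_mul,
    Nat.sum_antidiagonal_eq_sum_range_succ fun j i =>
      PowerSeries.coeff j (polynomialVonMangoldtSeries Ψ) *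
        PowerSeries.coeff i (polynomialLSeries Ψ)]
  simp only [polynomialLSeries, polynomialVonMangoldtSeries, PowerSeries.coeff_mk]
  calc (N : R) * ∑ h ∈ monicsOfDegree k N, Ψ h
      = ∑ h ∈ monicsOfDegree k N, ∑ j ∈ range (N + 1), ∑ x ∈ primePowersOfDegree k j,
          if x.1 ^ x.2 ∣ h then (x.1.natDegree : R) * Ψ h else 0 := by
        rw [mul_sum]
        refine sum_congr rfl fun h hh => ?_
        obtain ⟨hmonic, rfl⟩ := mem_monicsOfDegree.1 hh
        conv_lhs => rw [natDegree_eq_sum_primePowersOfDegree hmonic]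
        simp only [Nat.cast_sum, sum_mul, sum_filter, Nat.cast_ite, Nat.cast_zero, ite_mul,
          zero_mul]
    _ = ∑ j ∈ range (N + 1), ∑ x ∈ primePowersOfDegree k j,
          (x.1.natDegree : R) * ∑ h ∈ monicsOfDegree k N with x.1 ^ x.2 ∣ h, Ψ h := by
        rw [sum_comm]
        refine sum_congr rfl fun j _ => ?_
        rw [sum_comm]
        simp only [mul_sum, sum_filter, mul_ite, mul_zero]
    _ = _ := by
        refine sum_congr rfl fun j hj => ?_
        rw [sum_mul]
        refine sum_congr rfl fun x hx => ?_
        obtain ⟨hP, -, -, hdeg⟩ := mem_primePowersOfDegree.1 hx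
        have hN : N = N - j + (x.1 ^ x.2).natDegree := by
          have := mem_range.1 hj
          rw [natDegree_pow, mul_comm, hdeg]
          omega
        conv_lhs => rw [hN]
        rw [sum_monicsOfDegree_filter_dvd Ψ (hP.pow _), map_pow]
        ring

end EulerProduct

section MinpolyFibers

open Polynomial

variable {k K : Type*} [Field k] [Field K] [Algebra k K]

lemma norm_sub_algebraMap_of_even_finrank [FiniteDimensional k K]
    (he : Even (Module.finrank k K)) (x : K) (a : k) :
    Algebra.norm k (x - algebraMap k K a) =
      (minpoly k x).eval a ^ (Module.finrank k K / (minpoly k x).natDegree) := by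
  set y := x - algebraMap k K a
  have hint : IsIntegral k y := Algebra.IsIntegral.isIntegral y
  have hmin : minpoly k y = (minpoly k x).comp (X + C a) := minpoly.sub_algebraMap x a
  have hdeg : (minpoly k y).natDegree = (minpoly k x).natDegree := by
    rw [hmin, natDegree_comp, natDegree_X_add_C, mul_one]
  have hcoeff : (minpoly k y).coeff 0 = (minpoly k x).eval a := by
    rw [hmin, coeff_zero_eq_eval_zero, eval_comp]
    simp
  have htower : (minpoly k y).natDegree * Module.finrank (IntermediateField.adjoin k {y}) K =
      Module.finrank k K := by
    rw [← IntermediateField.adjoin.finrank hint]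
    exact Module.finrank_mul_finrank _ _ _
  have hpos : 0 < (minpoly k y).natDegree := minpoly.natDegree_pos hint
  rw [Algebra.norm_eq_norm_adjoin, ← IntermediateField.adjoin.powerBasis_gen hint,
    Algebra.PowerBasis.norm_gen_eq_coeff_zero_minpoly, IntermediateField.adjoin.powerBasis_gen hint,
    IntermediateField.minpoly_gen, IntermediateField.adjoin.powerBasis_dim, hcoeff, mul_pow,
    ← pow_mul, htower, he.neg_one_pow, one_mul, ← hdeg, ← htower, Nat.mul_div_cancel_left _ hpos]

lemma norm_prod_sub_algebraMap_of_even_finrank [FiniteDimensional k K]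
    (he : Even (Module.finrank k K)) (x : K) (s : Multiset k) :
    Algebra.norm k (s.map fun a => x - algebraMap k K a).prod =
      (s.map fun a => (minpoly k x).eval a).prod ^
        (Module.finrank k K / (minpoly k x).natDegree) := by
  rw [map_multiset_prod, Multiset.map_map, ← Multiset.prod_map_pow]
  simp only [Function.comp_apply, norm_sub_algebraMap_of_even_finrank he]

lemma splits_map_of_natDegree_dvd_finrank [Finite k] [Finite K] {P : k[X]} (hirr : Irreducible P)
    (hd : P.natDegree ∣ Module.finrank k K) : (P.map (algebraMap k K)).Splits := by
  cases nonempty_fintype K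
  have hcard : Fintype.card K = Nat.card k ^ Module.finrank k K := by
    rw [← Nat.card_eq_fintype_card]
    exact Module.natCard_eq_pow_finrank
  have hdvd : P ∣ X ^ Fintype.card K - X := by
    rw [hcard]
    exact hirr.natDegree_dvd_iff_dvd_X_pow_card_pow_sub_X.1 hd
  have hne : (X ^ Fintype.card K - X : k[X]) ≠ 0 :=
    FiniteField.X_pow_card_sub_X_ne_zero _ Fintype.one_lt_card
  exact (FiniteField.isSplittingField_sub K k).splits'.of_dvd
    (Polynomial.map_ne_zero hne) (Polynomial.map_dvd _ hdvd)

variable [Finite k] [Fintype K]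

lemma card_minpoly_eq [DecidableEq k[X]] {P : k[X]} (hP : P.Monic) (hirr : Irreducible P)
    (hd : P.natDegree ∣ Module.finrank k K) :
    #{x : K | minpoly k x = P} = P.natDegree := by
  classical
  have hnodup : (P.aroots K).Nodup :=
    nodup_roots (PerfectField.separable_of_irreducible hirr).map
  have hroots : ({x : K | minpoly k x = P} : Finset K) = (P.aroots K).toFinset := by
    ext x
    rw [mem_filter_univ, Multiset.mem_toFinset, mem_aroots]
    constructor
    · rintro rfl
      exact ⟨hP.ne_zero, minpoly.aeval _ _⟩
    · exact fun h => (minpoly.eq_of_irreducible_of_monic hirr h.2 hP).symm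
  rw [hroots, Multiset.toFinset_card_of_nodup hnodup,
    ← (splits_map_of_natDegree_dvd_finrank hirr hd).natDegree_eq_card_roots, natDegree_map]

lemma sum_minpoly_pow_eq_coeff {R : Type*} [CommRing R] (Ψ : k[X] →* R) :
    ∑ x : K, Ψ (minpoly k x) ^ (Module.finrank k K / (minpoly k x).natDegree) =
      PowerSeries.coeff (Module.finrank k K) (polynomialVonMangoldtSeries Ψ) := by
  classical
  have hint (x : K) : IsIntegral k x := Algebra.IsIntegral.isIntegral x
  rw [polynomialVonMangoldtSeries, PowerSeries.coeff_mk]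
  rw [← sum_fiberwise_of_maps_to (s := univ) (t := primePowersOfDegree k (Module.finrank k K))
    (g := fun x : K => (minpoly k x, Module.finrank k K / (minpoly k x).natDegree))]
  · refine sum_congr rfl fun ⟨P, m⟩ hx => ?_
    obtain ⟨hP, hirr, hm, hdeg⟩ := mem_primePowersOfDegree.1 hx
    dsimp only at hP hirr hm hdeg ⊢
    have hfiber : (univ.filter fun x : K =>
          (minpoly k x, Module.finrank k K / (minpoly k x).natDegree) = (P, m)) =
        univ.filter fun x : K => minpoly k x = P := by
      refine filter_congr fun x _ => ⟨fun h => congrArg Prod.fst h, ?_⟩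
      rintro rfl
      rw [← hdeg, Nat.mul_div_cancel_left _ hirr.natDegree_pos]
    calc _ = ∑ x : K with minpoly k x = P, Ψ P ^ m := by
          refine sum_congr hfiber fun x hx => ?_
          rw [(mem_filter.1 hx).2, ← hdeg, Nat.mul_div_cancel_left _ hirr.natDegree_pos]
      _ = P.natDegree * Ψ P ^ m := by
          rw [sum_const, card_minpoly_eq hP hirr (Dvd.intro _ hdeg), nsmul_eq_mul]
  · intro x _
    have hdvd := minpoly.degree_dvd (hint x)
    have hpos := minpoly.natDegree_pos (hint x)
    exact mem_primePowersOfDegree.2 ⟨minpoly.monic (hint x), minpoly.irreducible (hint x),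
      Nat.div_pos (Nat.le_of_dvd Module.finrank_pos hdvd) hpos, Nat.mul_div_cancel' hdvd⟩

end MinpolyFibers

section WeilBound

open Polynomial

variable {k R : Type*} [Field k]

/-- The completely multiplicative function `h ↦ ∏ ψ(h(a))` on `k[X]`, where `a` runs over the
multiset `s`. Up to sign it sends `h` to `ψ` of the resultant of `h` and `∏ (X - a)`. -/
noncomputable def mulCharEvalProd [CommMonoidWithZero R] (ψ : MulChar k R) (s : Multiset k) :
    k[X] →* R where
  toFun h := ψ (s.map fun a => h.eval a).prod
  map_one' := by simp
  map_mul' h g := by simp [Multiset.prod_map_mul]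

lemma mulCharEvalProd_apply [CommMonoidWithZero R] (ψ : MulChar k R) (s : Multiset k) (h : k[X]) :
    mulCharEvalProd ψ s h = ψ (s.map fun a => h.eval a).prod :=
  rfl

lemma sum_mulChar_norm_aeval_eq_coeff {K : Type*} [Finite k] [Field K] [Fintype K] [Algebra k K]
    [CommRing R] (he : Even (Module.finrank k K)) (ψ : MulChar k R) (s : Multiset k) :
    ∑ x : K, ψ (Algebra.norm k (aeval x (s.map fun a => X - C a).prod)) =
      PowerSeries.coeff (Module.finrank k K)
        (polynomialVonMangoldtSeries (mulCharEvalProd ψ s)) := by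
  rw [← sum_minpoly_pow_eq_coeff]
  refine sum_congr rfl fun x _ => ?_
  rw [map_multiset_prod, Multiset.map_map]
  simp only [Function.comp_apply, map_sub, aeval_X, aeval_C]
  rw [norm_prod_sub_algebraMap_of_even_finrank he, map_pow, mulCharEvalProd_apply]

lemma coeff_zero_polynomialLSeries [Finite k] [CommRing R] (Ψ : k[X] →* R) :
    PowerSeries.coeff 0 (polynomialLSeries Ψ) = 1 := by
  have h : monicsOfDegree k 0 = {1} := by
    ext h
    rw [mem_monicsOfDegree, mem_singleton]
    exact ⟨fun h => h.1.natDegree_eq_zero.1 h.2, by rintro rfl; simp⟩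
  simp [polynomialLSeries, h]

lemma coeff_one_polynomialLSeries [Fintype k] [CommRing R] (Ψ : k[X] →* R) :
    PowerSeries.coeff 1 (polynomialLSeries Ψ) = ∑ x : k, Ψ (X + C x) := by
  rw [polynomialLSeries, PowerSeries.coeff_mk]
  symm
  refine sum_bij (fun x _ => X + C x)
    (fun x _ => mem_monicsOfDegree.2 ⟨monic_X_add_C x, natDegree_X_add_C x⟩)
    (fun x _ y _ h => C_injective (add_left_cancel h)) (fun h hh => ?_) fun _ _ => rfl
  obtain ⟨hmonic, hdeg⟩ := mem_monicsOfDegree.1 hh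
  exact ⟨h.coeff 0, mem_univ _, (hmonic.eq_X_add_C hdeg).symm⟩

lemma add_C_mul_sub_mem_monicsOfDegree [Finite k] {N : ℕ} {g h : k[X]}
    (hg : g ∈ monicsOfDegree k N) (hh : h ∈ monicsOfDegree k N) (c : k) :
    g + C c * (h - g) ∈ monicsOfDegree k N := by
  rw [mem_monicsOfDegree] at hg hh ⊢
  have hlt : (C c * (h - g)).degree < g.degree := by
    have hdeg : h.degree = g.degree := by
      rw [degree_eq_natDegree hh.1.ne_zero, degree_eq_natDegree hg.1.ne_zero, hh.2, hg.2]
    rw [← smul_eq_C_mul]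
    refine (degree_smul_le _ _).trans_lt ?_
    rw [← hdeg]
    exact degree_sub_lt_left hdeg hh.1.ne_zero (by rw [hh.1.leadingCoeff, hg.1.leadingCoeff])
  exact ⟨hg.1.add_of_left hlt,
    (natDegree_eq_of_degree_eq (degree_add_eq_left_of_degree_lt hlt)).trans hg.2⟩

lemma sum_monicsOfDegree_affine [Finite k] [AddCommMonoid R] {N : ℕ} {g : k[X]}
    (hg : g ∈ monicsOfDegree k N) {c : k} (hc : c ≠ 0) (f : k[X] → R) :
    ∑ h ∈ monicsOfDegree k N, f (g + C c * (h - g)) = ∑ h ∈ monicsOfDegree k N, f h := by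
  have hinv {a b : k} (hab : a * b = 1) (h : k[X]) : g + C a * (g + C b * (h - g) - g) = h := by
    rw [add_sub_cancel_left, ← mul_assoc, ← C_mul, hab, C_1, one_mul, add_sub_cancel]
  exact sum_bij' (fun h _ => g + C c * (h - g)) (fun h _ => g + C c⁻¹ * (h - g))
    (fun h hh => add_C_mul_sub_mem_monicsOfDegree hg hh _)
    (fun h hh => add_C_mul_sub_mem_monicsOfDegree hg hh _)
    (fun h _ => hinv (inv_mul_cancel₀ hc) h) (fun h _ => hinv (mul_inv_cancel₀ hc) h)
    fun _ _ => rfl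

lemma exists_mulChar_pow_ne_one [Fintype k] [CommMonoidWithZero R] {ψ : MulChar k R} (hψ : ψ ≠ 1)
    {M : ℕ} (hM : M.Coprime (Fintype.card k - 1)) : ∃ c : kˣ, ψ c ^ M ≠ 1 := by
  contrapose! hψ
  rw [MulChar.eq_one_iff]
  intro a
  have hcard : ψ (a : k) ^ (Fintype.card k - 1) = 1 := by
    rw [← map_pow, FiniteField.pow_card_sub_one_eq_one _ a.ne_zero, map_one]
  exact orderOf_eq_one_iff.1 (Nat.eq_one_of_dvd_coprimes hM
    (orderOf_dvd_of_pow_eq_one (hψ a)) (orderOf_dvd_of_pow_eq_one hcard))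

lemma exists_mem_monicsOfDegree_eval_eq_zero [Finite k] {N : ℕ} {t : Finset k} (hN : #t ≤ N) :
    ∃ g ∈ monicsOfDegree k N, ∀ a ∈ t, g.eval a = 0 := by
  have hprod : (∏ a ∈ t, (X - C a)).Monic := monic_prod_X_sub_C _ _
  refine ⟨X ^ (N - #t) * ∏ a ∈ t, (X - C a),
    mem_monicsOfDegree.2 ⟨(monic_X_pow _).mul hprod, ?_⟩, fun a ha => ?_⟩
  · rw [(monic_X_pow _).natDegree_mul hprod, natDegree_X_pow, natDegree_finsetProd_X_sub_C_eq_card]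
    omega
  · rw [eval_mul, eval_prod, prod_eq_zero ha (by simp), mul_zero]

-- Scaling `h` by `c` at all the points of `s` multiplies the sum by `ψ c ^ card s`.
lemma coeff_polynomialLSeries_mulCharEvalProd_eq_zero [Fintype k] [DecidableEq k] [CommRing R]
    [IsDomain R] {ψ : MulChar k R} (hψ : ψ ≠ 1) {s : Multiset k}
    (hs : s.card.Coprime (Fintype.card k - 1)) {N : ℕ} (hN : #s.toFinset ≤ N) :
    PowerSeries.coeff N (polynomialLSeries (mulCharEvalProd ψ s)) = 0 := by
  obtain ⟨c, hc⟩ := exists_mulChar_pow_ne_one hψ hs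
  obtain ⟨g, hg, hroots⟩ := exists_mem_monicsOfDegree_eval_eq_zero hN
  have hscale (h : k[X]) : mulCharEvalProd ψ s (g + C (c : k) * (h - g)) =
      ψ c ^ s.card * mulCharEvalProd ψ s h := by
    have heval : (s.map fun a => (g + C (c : k) * (h - g)).eval a) =
        s.map fun a => (c : k) * h.eval a := by
      refine Multiset.map_congr rfl fun a ha => ?_
      simp [hroots a (Multiset.mem_toFinset.2 ha)]
    rw [mulCharEvalProd_apply, mulCharEvalProd_apply, heval, Multiset.prod_map_mul,
      Multiset.map_const', Multiset.prod_replicate, map_mul, map_pow]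
  rw [polynomialLSeries, PowerSeries.coeff_mk]
  have hself := sum_monicsOfDegree_affine hg c.ne_zero (mulCharEvalProd ψ s)
  simp only [hscale, ← mul_sum] at hself
  by_contra hne
  exact hc ((mul_eq_right₀ hne).1 hself)

lemma norm_coeff_polynomialVonMangoldtSeries_le [Fintype k] {D n : ℕ}
    (hk : Fintype.card k = D + 1) {ψ : MulChar k ℂ} (hψ : ψ ≠ 1) {s : Multiset k}
    (hs : s.card.Coprime D)
    (hn : s.card + 2 + s.card * (D * s.card + 2 * D) < n) :
    ‖PowerSeries.coeff (2 * n) (polynomialVonMangoldtSeries (mulCharEvalProd ψ s))‖ ≤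
      D * (D * (2 * s.card + 3) + s.card : ℕ) * (Fintype.card k : ℝ) ^ n := by
  have hF : (s.map fun a => X - C a).prod.Monic :=
    monic_multiset_prod_of_monic _ _ fun a _ => monic_X_sub_C a
  rw [← natDegree_multiset_prod_X_sub_C_eq_card s] at hs hn ⊢
  obtain ⟨p, hp⟩ := CharP.exists k
  have : Fact p.Prime := ⟨CharP.char_is_prime k p⟩
  have : NeZero (2 * n) := ⟨by omega⟩
  let K := FiniteField.Extension k p (2 * n)
  let _ : Fintype K := Fintype.ofFinite K
  have hrank : Module.finrank k K = 2 * n := FiniteField.finrank_extension k p (2 * n)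
  have hcard : Fintype.card K = Fintype.card k ^ (2 * n) := by
    rw [← Nat.card_eq_fintype_card, FiniteField.natCard_extension, Nat.card_eq_fintype_card]
  rw [← hrank, ← sum_mulChar_norm_aeval_eq_coeff (by simp [hrank])]
  exact norm_sum_mulChar_norm_aeval_le hk hcard hF hs hn hψ

lemma coe_trunc_polynomialLSeries_mulCharEvalProd [Fintype k] [DecidableEq k] [CommRing R]
    [IsDomain R] {ψ : MulChar k R} (hψ : ψ ≠ 1) {s : Multiset k}
    (hs : s.card.Coprime (Fintype.card k - 1)) :
    ((polynomialLSeries (mulCharEvalProd ψ s)).trunc (#s.toFinset + 1) : PowerSeries R) =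
      polynomialLSeries (mulCharEvalProd ψ s) := by
  ext N
  rw [coeff_coe, PowerSeries.coeff_trunc]
  split_ifs with hN
  · rfl
  · exact (coeff_polynomialLSeries_mulCharEvalProd_eq_zero hψ hs (by omega)).symm

theorem norm_sum_mulChar_prod_add_le [Fintype k] [DecidableEq k] {ψ : MulChar k ℂ} (hψ : ψ ≠ 1)
    {s : Multiset k} (hs : s.card.Coprime (Fintype.card k - 1)) :
    ‖∑ x : k, ψ (s.map fun a => x + a).prod‖ ≤ #s.toFinset * √(Fintype.card k) := by
  set Ψ := mulCharEvalProd ψ s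
  set L : ℂ[X] := (polynomialLSeries Ψ).trunc (#s.toFinset + 1)
  have hL : (L : PowerSeries ℂ) = polynomialLSeries Ψ :=
    coe_trunc_polynomialLSeries_mulCharEvalProd hψ hs
  have hcoeff (N : ℕ) : L.coeff N = PowerSeries.coeff N (polynomialLSeries Ψ) := by
    rw [← hL, coeff_coe]
  have hbound := norm_coeff_one_le_of_logDeriv (L := L) (S := polynomialVonMangoldtSeries Ψ)
    (by rw [hcoeff, coeff_zero_polynomialLSeries])
    (by rw [hL, X_mul_derivative_polynomialLSeries])
    (by exact_mod_cast Fintype.card_pos) fun n hn =>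
      norm_coeff_polynomialVonMangoldtSeries_le
        (Nat.sub_add_cancel Fintype.card_pos).symm hψ hs (Nat.lt_of_succ_le hn)
  rw [hcoeff, coeff_one_polynomialLSeries] at hbound
  simp only [Ψ, mulCharEvalProd_apply, eval_add, eval_X, eval_C, add_comm] at hbound ⊢
  refine hbound.trans ?_
  gcongr
  exact Nat.lt_succ_iff.1 (PowerSeries.natDegree_trunc_lt _ _)

end WeilBound

section Moments

open Fintype (card piFinset)

variable {k ι : Type*} [Field k]

lemma mulChar_inv_add {R : Type*} [CommMonoidWithZero R] (ψ : MulChar k R) {z d : k} (hz : z ≠ 0)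
    (hd : d ≠ 0) : ψ (z⁻¹ + d) = ψ z⁻¹ * (ψ d * ψ (z + d⁻¹)) := by
  rw [← map_mul, ← map_mul]
  congr 1
  field_simp
  ring

variable [Fintype k]

lemma mulChar_pow_eq_one_of_dvd {R : Type*} [CommMonoidWithZero R] (ψ : MulChar k R) {z : k}
    (hz : z ≠ 0) {m : ℕ} (hm : card k - 1 ∣ m) : ψ z ^ m = 1 := by
  obtain ⟨n, rfl⟩ := hm
  rw [pow_mul, ← map_pow, FiniteField.pow_card_sub_one_eq_one z hz, map_one, one_pow]

lemma norm_sum_prod_mulChar_pow_le {ψ : MulChar k ℂ} (hψ : ψ ≠ 1) {I : Finset ι} {m : ι → ℕ}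
    (hm : (∑ i ∈ I, m i).Coprime (card k - 1)) (c : ι → k) :
    ‖∑ x : k, ∏ i ∈ I, ψ (x + c i) ^ m i‖ ≤ #I * √(card k) := by
  classical
  set s : Multiset k := ∑ i ∈ I, m i • {c i}
  have hcard : s.card = ∑ i ∈ I, m i := by simp [s]
  have hsupp : #s.toFinset ≤ #I := by
    refine (card_le_card fun a ha => ?_).trans (card_image_le (f := c))
    obtain ⟨i, hi, ha⟩ := Multiset.mem_sum.1 (Multiset.mem_toFinset.1 ha)
    rw [Multiset.mem_singleton.1 (Multiset.mem_of_mem_nsmul ha)]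
    exact mem_image_of_mem c hi
  have hprod (x : k) : ψ (s.map fun a => x + a).prod = ∏ i ∈ I, ψ (x + c i) ^ m i := by
    simp only [s, ← Multiset.coe_mapAddMonoidHom, map_sum, map_nsmul]
    simp [Multiset.prod_sum, Multiset.prod_nsmul]
  have hweil := norm_sum_mulChar_prod_add_le hψ (hcard ▸ hm)
  simp only [hprod] at hweil
  exact hweil.trans (by gcongr)

-- The substitution `x = z⁻¹` moves the point `0` to infinity.
lemma sum_prod_mulChar_pow_eq (ψ : MulChar k ℂ) {I : Finset ι} {m : ι → ℕ} {m₀ : ℕ}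
    (hm₀ : m₀ ≠ 0) (hm : card k - 1 ∣ m₀ + ∑ i ∈ I, m i) {d : ι → k} (hd : ∀ i ∈ I, d i ≠ 0) :
    ∑ x : k, ψ x ^ m₀ * ∏ i ∈ I, ψ (x + d i) ^ m i =
      (∏ i ∈ I, ψ (d i) ^ m i) *
        (∑ z : k, ∏ i ∈ I, ψ (z + (d i)⁻¹) ^ m i - ∏ i ∈ I, ψ (d i)⁻¹ ^ m i) := by
  classical
  rw [← Equiv.sum_comp (Equiv.inv k), ← add_sum_erase univ _ (mem_univ (0 : k)),
    ← add_sum_erase univ (fun z : k => ∏ i ∈ I, ψ (z + (d i)⁻¹) ^ m i) (mem_univ (0 : k))]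
  simp only [Equiv.inv_apply, inv_zero, MulChar.map_zero, zero_pow hm₀, zero_mul, zero_add,
    add_sub_cancel_left]
  rw [mul_sum]
  refine sum_congr rfl fun z hz => ?_
  have hz : z ≠ 0 := ne_of_mem_erase hz
  have hone := mulChar_pow_eq_one_of_dvd ψ (inv_ne_zero hz) hm
  rw [prod_congr rfl fun i hi => by rw [mulChar_inv_add ψ hz (hd i hi), mul_pow, mul_pow],
    prod_mul_distrib, prod_mul_distrib, prod_pow_eq_pow_sum, ← mul_assoc, ← pow_add, hone, one_mul]

lemma norm_sum_prod_mulChar_pow_le_of_forall_ne [Fintype ι] {ψ : MulChar k ℂ} (hψ : ψ ≠ 1)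
    {m : ι → ℕ} (hm : card k - 1 ∣ ∑ i, m i) {i₀ : ι} (hm₀ : (m i₀).Coprime (card k - 1))
    {c : ι → k} (hc : ∀ i ≠ i₀, c i ≠ c i₀) :
    ‖∑ x : k, ∏ i, ψ (x + c i) ^ m i‖ ≤ card ι * √(card k) := by
  classical
  set I := univ.erase i₀
  have hcardI : (card ι : ℝ) = #I + 1 := by
    exact_mod_cast (card_erase_add_one (mem_univ i₀)).symm
  have htwo := two_lt_card_of_mulChar_ne_one hψ
  rw [← add_sum_erase univ m (mem_univ i₀)] at hm
  have hmI : (∑ i ∈ I, m i).Coprime (card k - 1) :=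
    Nat.eq_one_of_dvd_coprimes hm₀
      ((Nat.dvd_add_left (Nat.gcd_dvd_left _ _)).1 ((Nat.gcd_dvd_right _ _).trans hm))
      (Nat.gcd_dvd_right _ _)
  have hle {e : ι → k} : ‖∏ i ∈ I, ψ (e i) ^ m i‖ ≤ 1 := by
    rw [norm_prod]
    refine prod_le_one (fun _ _ => norm_nonneg _) fun i _ => ?_
    rw [norm_pow]
    exact pow_le_one₀ (norm_nonneg _) (norm_mulChar_apply_le_one ψ _)
  calc ‖∑ x : k, ∏ i, ψ (x + c i) ^ m i‖
      = ‖∑ x : k, ψ x ^ m i₀ * ∏ i ∈ I, ψ (x + (c i - c i₀)) ^ m i‖ := by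
        rw [← (Equiv.subRight (c i₀)).sum_comp]
        simp only [← mul_prod_erase univ _ (mem_univ i₀), Equiv.subRight_apply, sub_add_eq_add_sub,
          add_sub_assoc, sub_self, add_zero, I]
    _ ≤ 1 * (‖∑ z : k, ∏ i ∈ I, ψ (z + (c i - c i₀)⁻¹) ^ m i‖ + 1) := by
        rw [sum_prod_mulChar_pow_eq ψ (fun h => by simp [h] at hm₀; omega) hm
          fun i hi => sub_ne_zero.2 (hc i (ne_of_mem_erase hi)), norm_mul]
        gcongr
        · exact hle
        · exact (norm_sub_le _ _).trans (by gcongr; exact hle)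
    _ ≤ 1 * (#I * √(card k) + √(card k)) := by
        gcongr
        · exact norm_sum_prod_mulChar_pow_le hψ hmI _
        · rw [Real.one_le_sqrt]
          exact_mod_cast Fintype.card_pos
    _ = card ι * √(card k) := by
        rw [hcardI]
        ring

end Moments

section CharacterMoments

open Fintype (card piFinset)
open ComplexConjugate

lemma norm_sum_mul_conj_pow_two_mul {α : Type*} (T : Finset α) (f g : α → ℂ) (n : ℕ) :
    (‖∑ t ∈ T, f t * conj (g t)‖ ^ (2 * n) : ℂ) =
      ∑ c ∈ piFinset fun _ : Fin n ⊕ Fin n => T,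
        ((∏ i, f (c (.inl i))) * ∏ i, conj (f (c (.inr i)))) *
          conj ((∏ i, g (c (.inl i))) * ∏ i, conj (g (c (.inr i)))) := by
  set Z := ∑ t ∈ T, f t * conj (g t)
  calc (‖Z‖ ^ (2 * n) : ℂ) = Z ^ n * conj Z ^ n := by
        rw [← mul_pow, Complex.mul_conj', pow_mul]
    _ = ∏ i : Fin n ⊕ Fin n, ∑ t ∈ T,
          Sum.elim (fun _ => f t * conj (g t)) (fun _ => conj (f t) * g t) i := by
        simp [Fintype.prod_sum_type, Z]
    _ = _ := by
        rw [prod_univ_sum]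
        refine sum_congr rfl fun c _ => ?_
        simp only [Fintype.prod_sum_type, Sum.elim_inl, Sum.elim_inr, prod_mul_distrib, map_mul,
          map_prod, Complex.conj_conj]
        ring

lemma sum_sum_norm_sum_mul_conj_pow {α β : Type*} (S : Finset α) (T : Finset β) (f : α → β → ℂ)
    (n : ℕ) :
    ∑ x ∈ S, ∑ y ∈ S, ‖∑ t ∈ T, f x t * conj (f y t)‖ ^ (2 * n) =
      ∑ c ∈ piFinset fun _ : Fin n ⊕ Fin n => T,
        ‖∑ x ∈ S, (∏ i, f x (c (.inl i))) * ∏ i, conj (f x (c (.inr i)))‖ ^ 2 := by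
  apply Complex.ofReal_injective
  push_cast
  simp only [norm_sum_mul_conj_pow_two_mul, ← Complex.mul_conj']
  rw [sum_congr rfl fun x _ => sum_comm, sum_comm]
  simp only [map_sum, sum_mul_sum]

lemma card_image_le_of_forall_exists_ne {ι α : Type*} [Fintype ι] [DecidableEq α] {c : ι → α}
    {n : ℕ} (hι : card ι = 2 * n) (hc : ∀ i, ∃ j, j ≠ i ∧ c j = c i) : #(univ.image c) ≤ n := by
  classical
  have hfiber : ∀ b ∈ univ.image c, 2 ≤ #{i | c i = b} := by
    intro b hb
    obtain ⟨i, _, rfl⟩ := mem_image.1 hb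
    obtain ⟨j, hj, hji⟩ := hc i
    exact one_lt_card.2 ⟨i, by simp, j, by simp [hji], hj.symm⟩
  have hsum := card_nsmul_le_sum _ _ _ hfiber
  rw [← card_eq_sum_card_image, card_univ, hι, smul_eq_mul] at hsum
  omega

lemma card_piFinset_card_image_le {ι α : Type*} [Fintype ι] [DecidableEq ι] [DecidableEq α]
    [Nonempty ι] (T : Finset α) (n : ℕ) :
    #{c ∈ piFinset fun _ : ι => T | #(univ.image c) ≤ n} ≤ #T ^ n * n ^ card ι := by
  have hsub : {c ∈ piFinset fun _ : ι => T | #(univ.image c) ≤ n} ⊆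
      ((piFinset fun _ : Fin n => T) ×ˢ (univ : Finset (ι → Fin n))).image fun x => x.1 ∘ x.2 := by
    intro c hc
    obtain ⟨hcT, hcard⟩ := mem_filter.1 hc
    have : Nonempty (univ.image c) :=
      ⟨⟨c (Classical.arbitrary ι), mem_image_of_mem _ (mem_univ _)⟩⟩
    obtain ⟨e⟩ : Nonempty ((univ.image c) ↪ Fin n) :=
      Function.Embedding.nonempty_of_card_le (by simpa using hcard)
    refine mem_image.2 ⟨(fun a => (Function.invFun e a).1,
      fun i => e ⟨c i, mem_image_of_mem _ (mem_univ _)⟩), ?_, ?_⟩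
    · refine mem_product.2 ⟨Fintype.mem_piFinset.2 fun a => ?_, mem_univ _⟩
      obtain ⟨i, _, hi⟩ := mem_image.1 (Function.invFun e a).2
      have := Fintype.mem_piFinset.1 hcT i
      rwa [hi] at this
    · funext i
      simp only [Function.comp_apply, Function.leftInverse_invFun e.injective _]
  refine (card_le_card hsub).trans (card_image_le.trans_eq ?_)
  rw [card_product, Fintype.card_piFinset_const, card_univ, Fintype.card_fun, Fintype.card_fin]

variable {k : Type*} [Field k] [Fintype k]

lemma conj_mulChar_apply_eq_pow {ψ : MulChar k ℂ} (hk : 2 < card k) (x : k) :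
    conj (ψ x) = ψ x ^ (card k - 2) := by
  rcases eq_or_ne x 0 with rfl | hx
  · rw [MulChar.map_zero, map_zero, zero_pow (by omega)]
  · have hpow : ψ x ^ (card k - 2) * ψ x = 1 := by
      rw [← pow_succ, show card k - 2 + 1 = card k - 1 by omega]
      exact mulChar_pow_eq_one_of_dvd ψ hx dvd_rfl
    rw [starRingEnd_apply, ← MulChar.star_apply, MulChar.star_eq_inv, MulChar.inv_apply_eq_inv']
    exact (eq_inv_of_mul_eq_one_left hpow).symm

variable {χ : MulChar k ℂ} {n : ℕ}

lemma norm_sum_prod_mul_prod_conj_mulChar_le (hχ : χ ≠ 1) {c : Fin n ⊕ Fin n → k}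
    {i₀ : Fin n ⊕ Fin n} (hc : ∀ i ≠ i₀, c i ≠ c i₀) :
    ‖∑ x : k, (∏ i, χ (x + c (.inl i))) * ∏ i, conj (χ (x + c (.inr i)))‖ ≤
      2 * n * √(card k) := by
  have hk := two_lt_card_of_mulChar_ne_one hχ
  set m : Fin n ⊕ Fin n → ℕ := Sum.elim (fun _ => 1) fun _ => card k - 2
  have hm : card k - 1 ∣ ∑ i, m i := by
    refine Dvd.intro n ?_
    simp only [m, Fintype.sum_sum_type, Sum.elim_inl, Sum.elim_inr, sum_const, card_univ,
      Fintype.card_fin, smul_eq_mul, ← mul_add]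
    rw [mul_comm]
    congr 1
    omega
  have hm₀ : (m i₀).Coprime (card k - 1) := by
    rcases i₀ with i | i
    · exact Nat.coprime_one_left _
    · rw [show card k - 1 = card k - 2 + 1 by omega]
      exact Nat.coprime_self_add_right.2 (Nat.coprime_one_right _)
  have hbound := norm_sum_prod_mulChar_pow_le_of_forall_ne hχ hm hm₀ hc
  simpa [m, Fintype.prod_sum_type, conj_mulChar_apply_eq_pow hk, two_mul] using hbound

theorem sum_sum_norm_sum_mulChar_pow_le (hχ : χ ≠ 1) (T : Finset k) (hn : 0 < n) :
    ∑ x : k, ∑ y : k, ‖∑ t ∈ T, χ (x + t) * conj (χ (y + t))‖ ^ (2 * n) ≤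
      (#T : ℝ) ^ n * n ^ (2 * n) * card k ^ 2 + (2 * n) ^ 2 * card k * (#T : ℝ) ^ (2 * n) := by
  classical
  have : Nonempty (Fin n) := ⟨⟨0, hn⟩⟩
  set H : (Fin n ⊕ Fin n → k) → ℂ := fun c =>
    ∑ x : k, (∏ i, χ (x + c (.inl i))) * ∏ i, conj (χ (x + c (.inr i)))
  have htrivial (c) : ‖H c‖ ≤ card k := by
    rw [← nsmul_one, ← card_univ]
    refine (norm_sum_le _ _).trans (sum_le_card_nsmul _ _ _ fun x _ => ?_)
    rw [norm_mul, norm_prod, norm_prod]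
    refine mul_le_one₀ ?_ (by positivity) ?_ <;>
      refine prod_le_one (fun _ _ => norm_nonneg _) fun i _ => ?_
    · exact norm_mulChar_apply_le_one χ _
    · exact (RCLike.norm_conj _).trans_le (norm_mulChar_apply_le_one χ _)
  have hgeneric (c) (hc : ¬#(univ.image c) ≤ n) : ‖H c‖ ≤ 2 * n * √(card k) := by
    obtain ⟨i₀, hi₀⟩ : ∃ i₀, ∀ i ≠ i₀, c i ≠ c i₀ := by
      by_contra! hcon
      exact hc (card_image_le_of_forall_exists_ne (by simp [two_mul]) hcon)
    exact norm_sum_prod_mul_prod_conj_mulChar_le hχ hi₀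
  rw [sum_sum_norm_sum_mul_conj_pow univ T fun x t => χ (x + t),
    ← sum_filter_add_sum_filter_not _ fun c => #(univ.image c) ≤ n]
  refine add_le_add ?_ ?_
  · have hcard := card_piFinset_card_image_le (ι := Fin n ⊕ Fin n) T n
    rw [Fintype.card_sum, Fintype.card_fin, ← two_mul] at hcard
    calc _ ≤ ∑ c ∈ piFinset (fun _ : Fin n ⊕ Fin n => T) with #(univ.image c) ≤ n,
            (card k : ℝ) ^ 2 := sum_le_sum fun c _ => by gcongr; exact htrivial c
      _ ≤ _ := by
        rw [sum_const, nsmul_eq_mul]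
        gcongr
        exact_mod_cast hcard
  · calc _ ≤ ∑ c ∈ piFinset fun _ : Fin n ⊕ Fin n => T, (2 * n * √(card k)) ^ 2 :=
          (sum_le_sum fun c hc => by gcongr; exact hgeneric c (mem_filter.1 hc).2).trans
            (sum_le_sum_of_subset_of_nonneg (filter_subset _ _) fun _ _ _ => by positivity)
      _ = _ := by
        rw [sum_const, Fintype.card_piFinset, prod_const, card_univ, Fintype.card_sum,
          Fintype.card_fin, ← two_mul, nsmul_eq_mul, mul_pow, Real.sq_sqrt (Nat.cast_nonneg _)]
        push_cast
        ring

end CharacterMoments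

section DivisorBound

lemma natCast_add_one_le_two_pow (e : ℕ) : (e + 1 : ℝ) ≤ 2 ^ e := by
  exact_mod_cast (Nat.lt_two_pow_self : e < 2 ^ e)

lemma two_le_rpow_of_ceil_two_rpow_inv_le {ε : ℝ} (hε : 0 < ε) {q : ℕ}
    (hq : ⌈(2 : ℝ) ^ ε⁻¹⌉₊ ≤ q) : (2 : ℝ) ≤ (q : ℝ) ^ ε :=
  (Real.rpow_inv_le_iff_of_pos zero_le_two (Nat.cast_nonneg q) hε).1 (Nat.ceil_le.1 hq)

lemma natCast_add_one_le_mul_rpow_pow {ε x : ℝ} (hε : 0 < ε) (hx : 2 ≤ x) (e : ℕ) :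
    (e + 1 : ℝ) ≤ (1 + (ε * Real.log 2)⁻¹) * (x ^ ε) ^ e := by
  set a := ε * Real.log 2
  have ha : 0 < a := mul_pos hε (Real.log_pos one_lt_two)
  have hexp : 1 + a * e ≤ (x ^ ε) ^ e := calc
    1 + a * e ≤ 1 + e * (x ^ ε - 1) := by
      have h2 : a + 1 ≤ 2 ^ ε := by
        rw [Real.rpow_def_of_pos zero_lt_two, mul_comm (Real.log 2)]
        exact Real.add_one_le_exp a
      have hmono : (2 : ℝ) ^ ε ≤ x ^ ε := Real.rpow_le_rpow zero_le_two hx hε.le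
      nlinarith [(Nat.cast_nonneg e : (0 : ℝ) ≤ e)]
    _ ≤ (x ^ ε) ^ e := by
      have hbern := one_add_mul_le_pow (a := x ^ ε - 1)
        (by linarith [Real.rpow_nonneg (zero_le_two.trans hx) ε]) e
      simpa using hbern
  calc (e + 1 : ℝ) ≤ e + 1 + (a * e + a⁻¹) := le_add_of_nonneg_right (by positivity)
    _ = (1 + a⁻¹) * (1 + a * e) := by field_simp; ring
    _ ≤ _ := by gcongr

theorem exists_forall_card_divisors_le_mul_rpow {ε : ℝ} (hε : 0 < ε) :
    ∃ C : ℝ, 1 ≤ C ∧ ∀ n : ℕ, n ≠ 0 → (#n.divisors : ℝ) ≤ C * (n : ℝ) ^ ε := by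
  set K : ℝ := 1 + (ε * Real.log 2)⁻¹
  have hK : 1 ≤ K := le_add_of_nonneg_right (by have := Real.log_pos one_lt_two; positivity)
  set B : ℕ := ⌈(2 : ℝ) ^ ε⁻¹⌉₊
  refine ⟨K ^ B, one_le_pow₀ hK, fun n hn => ?_⟩
  have hlocal : ∀ q ∈ n.primeFactors, (n.factorization q + 1 : ℝ) ≤
      (if q < B then K else 1) * ((q : ℝ) ^ ε) ^ n.factorization q := by
    intro q hq
    split_ifs with hqB
    · exact natCast_add_one_le_mul_rpow_pow hε
        (by exact_mod_cast (Nat.prime_of_mem_primeFactors hq).two_le) _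
    · rw [one_mul]
      refine (natCast_add_one_le_two_pow _).trans ?_
      gcongr
      exact two_le_rpow_of_ceil_two_rpow_inv_le hε (not_lt.1 hqB)
  have hn_rpow : ∏ q ∈ n.primeFactors, ((q : ℝ) ^ ε) ^ n.factorization q = (n : ℝ) ^ ε := by
    conv_rhs => rw [← Nat.prod_factorization_pow_eq_self hn]
    rw [Finsupp.prod, Nat.cast_prod, ← Real.finsetProd_rpow _ _ fun _ _ => by positivity]
    refine prod_congr rfl fun q _ => ?_
    rw [Nat.cast_pow, Real.rpow_pow_comm (Nat.cast_nonneg q)]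
  have hconst : ∏ q ∈ n.primeFactors, (if q < B then K else 1) ≤ K ^ B := by
    rw [prod_ite, prod_const, prod_const_one, mul_one]
    refine pow_le_pow_right₀ hK ((card_le_card fun q hq => ?_).trans_eq (card_range B))
    exact mem_range.2 (mem_filter.1 hq).2
  rw [Nat.card_divisors hn]
  push_cast
  refine (prod_le_prod (fun _ _ => by positivity) hlocal).trans ?_
  rw [prod_mul_distrib, hn_rpow]
  gcongr

end DivisorBound

section CountingLemmas

lemma card_le_one_add_div_of_forall_le_abs_sub {Q : Finset ℝ} {α β : ℝ} (hα : 0 < α) (hβ : 0 ≤ β)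
    (hgap : ∀ x ∈ Q, ∀ y ∈ Q, x ≠ y → α ≤ |x - y|) (hdiam : ∀ x ∈ Q, ∀ y ∈ Q, |x - y| ≤ β) :
    (#Q : ℝ) ≤ 1 + β / α := by
  rcases Q.eq_empty_or_nonempty with rfl | hne
  · rw [card_empty, Nat.cast_zero]
    positivity
  obtain ⟨m, hm, hmin⟩ : ∃ m ∈ Q, ∀ y ∈ Q, m ≤ y := exists_min_image Q id hne
  have hmaps : ∀ x ∈ Q, ⌊(x - m) / α⌋₊ ∈ range (⌊β / α⌋₊ + 1) := by
    intro x hx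
    rw [mem_range, Nat.lt_succ_iff]
    apply Nat.floor_le_floor
    gcongr
    exact (le_abs_self _).trans (hdiam x hx m hm)
  have hlt : ∀ x ∈ Q, ∀ y ∈ Q, y < x → ⌊(y - m) / α⌋₊ < ⌊(x - m) / α⌋₊ := by
    intro x hx y hy hyx
    have hα_le := hgap x hx y hy hyx.ne'
    rw [abs_of_pos (sub_pos.2 hyx)] at hα_le
    rw [Nat.lt_iff_add_one_le, ← Nat.floor_add_one (div_nonneg (sub_nonneg.2 (hmin y hy)) hα.le)]
    apply Nat.floor_le_floor
    rw [div_add_one hα.ne']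
    gcongr
    linarith
  have hinj : Set.InjOn (fun x => ⌊(x - m) / α⌋₊) Q := by
    refine StrictMonoOn.injOn fun y hy x hx hyx => hlt x hx y hy hyx
  have hcard := card_le_card_of_injOn _ hmaps hinj
  rw [card_range] at hcard
  calc (#Q : ℝ) ≤ ⌊β / α⌋₊ + 1 := by exact_mod_cast hcard
    _ ≤ 1 + β / α := by rw [add_comm]; gcongr; exact Nat.floor_le (by positivity)

lemma dvd_gcd_gcd_mul {g a b c d n : ℤ} (ha : g ∣ a * n) (hb : g ∣ b * n) (hc : g ∣ c * n)
    (hd : g ∣ d * n) : g ∣ (Int.gcd (Int.gcd a b) (Int.gcd c d) : ℤ) * n := by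
  have hgcd {x y : ℤ} (hx : g ∣ x * n) (hy : g ∣ y * n) : g ∣ (Int.gcd x y : ℤ) * n := by
    have h := Int.dvd_coe_gcd hx hy
    rwa [Int.gcd_mul_right, ← Int.natAbs_natCast (Int.gcd x y), ← Int.natAbs_mul,
      Int.dvd_natAbs] at h
  exact hgcd (hgcd ha hb) (hgcd hc hd)

lemma exists_forall_dvd_mem_and_card_le {n : ℤ} (hn : n ≠ 0) :
    ∃ G : Finset ℤ, (∀ g, g ∣ n → g ∈ G) ∧ #G ≤ 2 * #n.natAbs.divisors := by
  refine ⟨n.natAbs.divisors.image (fun d : ℕ => (d : ℤ)) ∪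
      n.natAbs.divisors.image (fun d : ℕ => -(d : ℤ)),
    fun g hg => ?_, ?_⟩
  · have hmem : g.natAbs ∈ n.natAbs.divisors := by
      simpa [Int.natAbs_dvd_natAbs] using ⟨hg, hn⟩
    rcases Int.natAbs_eq g with h | h
    · exact mem_union_left _ (mem_image.2 ⟨_, hmem, h.symm⟩)
    · exact mem_union_right _ (mem_image.2 ⟨_, hmem, h.symm⟩)
  · rw [two_mul]
    exact (card_union_le _ _).trans (add_le_add card_image_le card_image_le)

end CountingLemmas

section FareySet

variable {R : ℝ} {M : ℕ} {q x y : ℚ}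

lemma mem_fareySet : q ∈ fareySet R ↔ 0 ≤ q.num ∧ q.num ≤ q.den ∧ q.den ≤ ⌊R⌋₊ := by
  simp only [fareySet, mem_image, mem_filter, mem_product, mem_Icc, Prod.exists]
  constructor
  · rintro ⟨r, s, ⟨⟨_, hs, hsR⟩, hrs, hgcd⟩, rfl⟩
    have hnum := Rat.num_div_eq_of_coprime (a := (r : ℤ)) (b := s) (by omega) hgcd
    have hden := Rat.den_div_eq_of_coprime (a := (r : ℤ)) (b := s) (by omega) hgcd
    simp only [Int.cast_natCast] at hnum hden
    rw [hnum]
    omega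
  · rintro ⟨hnum, hle, hden⟩
    refine ⟨q.num.natAbs, q.den, ⟨⟨by omega, q.den_pos, hden⟩, by omega, q.reduced⟩, ?_⟩
    conv_rhs => rw [← Rat.num_div_den q]
    rw [Nat.cast_natAbs, abs_of_nonneg hnum]

lemma mem_fareySet_natCast : q ∈ fareySet M ↔ 0 ≤ q.num ∧ q.num ≤ q.den ∧ q.den ≤ M := by
  rw [mem_fareySet, Nat.floor_natCast]

/-- The numerator of `x - y` over the common denominator `x.den * y.den`. -/
def crossDiff (x y : ℚ) : ℤ := x.num * y.den - y.num * x.den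

lemma ratCast_sub_eq_crossDiff_div (x y : ℚ) :
    (x - y : ℝ) = crossDiff x y / (x.den * y.den) := by
  rw [Rat.cast_def x, Rat.cast_def y, crossDiff]
  have hx : (x.den : ℝ) ≠ 0 := Nat.cast_ne_zero.2 x.den_nz
  have hy : (y.den : ℝ) ≠ 0 := Nat.cast_ne_zero.2 y.den_nz
  push_cast
  field_simp

lemma crossDiff_eq_zero : crossDiff x y = 0 ↔ x = y := by
  rw [crossDiff, sub_eq_zero, Rat.eq_iff_mul_eq_mul]

lemma abs_crossDiff_le (hx : x ∈ fareySet M) (hy : y ∈ fareySet M) :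
    |(crossDiff x y : ℝ)| ≤ M ^ 2 := by
  obtain ⟨hx₀, hx₁, hxM⟩ := mem_fareySet_natCast.1 hx
  obtain ⟨hy₀, hy₁, hyM⟩ := mem_fareySet_natCast.1 hy
  have : |crossDiff x y| ≤ (M : ℤ) ^ 2 := by
    rw [crossDiff, abs_le]
    constructor <;> nlinarith
  exact_mod_cast this

end FareySet

section MoebiusPairs

/-- The pair `q` satisfies `q.2 = -(A + B * q.1) / (C + E * q.1)`, and `g` is the factor that has
to be cancelled to bring the right-hand side to lowest terms. -/
def IsMoebiusPair (A B C E g : ℤ) (q : ℚ × ℚ) : Prop :=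
  A * q.1.den + B * q.1.num = -g * q.2.num ∧ C * q.1.den + E * q.1.num = g * q.2.den

variable {A B C E g : ℤ} {q r : ℚ × ℚ}

lemma exists_isMoebiusPair
    (h : (A * q.1.den + B * q.1.num) * q.2.den + (C * q.1.den + E * q.1.num) * q.2.num = 0) :
    ∃ g, IsMoebiusPair A B C E g q := by
  have hdvd : (q.2.den : ℤ) ∣ C * q.1.den + E * q.1.num :=
    q.2.isCoprime_num_den.symm.dvd_of_dvd_mul_right
      ⟨-(A * q.1.den + B * q.1.num), by linear_combination h⟩
  obtain ⟨g, hg⟩ := hdvd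
  refine ⟨g, ?_, by rw [hg, mul_comm]⟩
  apply mul_right_cancel₀ (Nat.cast_ne_zero.2 q.2.den_nz : (q.2.den : ℤ) ≠ 0)
  linear_combination h - q.2.num * hg

lemma IsMoebiusPair.dvd_det (hq : IsMoebiusPair A B C E g q) : g ∣ A * E - B * C := by
  obtain ⟨hnum, hden⟩ := hq
  obtain ⟨a, b, hab⟩ := q.1.isCoprime_num_den
  refine ⟨b * (-(q.2.num * E) - B * q.2.den) + a * (q.2.num * C + A * q.2.den), ?_⟩
  linear_combination -(A * E - B * C) * hab + (b * E - a * C) * hnum + (a * A - b * B) * hden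

lemma IsMoebiusPair.snd_eq_snd (hg : g ≠ 0) (hq : IsMoebiusPair A B C E g q)
    (hr : IsMoebiusPair A B C E g r) (h : q.1 = r.1) : q.2 = r.2 := by
  rw [IsMoebiusPair, h] at hq
  refine Rat.ext (mul_left_cancel₀ (neg_ne_zero.2 hg) (hq.1.symm.trans hr.1)) ?_
  exact_mod_cast mul_left_cancel₀ hg (hq.2.symm.trans hr.2)

lemma IsMoebiusPair.det_mul_crossDiff (hq : IsMoebiusPair A B C E g q)
    (hr : IsMoebiusPair A B C E g r) :
    (A * E - B * C) * crossDiff q.1 r.1 = g ^ 2 * crossDiff q.2 r.2 := by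
  have h : (A * r.1.den + B * r.1.num) * (C * q.1.den + E * q.1.num) -
      (A * q.1.den + B * q.1.num) * (C * r.1.den + E * r.1.num) =
        g ^ 2 * crossDiff q.2 r.2 := by
    rw [hq.1, hq.2, hr.1, hr.2, crossDiff]
    ring
  rw [← h, crossDiff]
  ring

lemma IsMoebiusPair.dvd_gcd_mul_crossDiff (hq : IsMoebiusPair A B C E g q)
    (hr : IsMoebiusPair A B C E g r) :
    g ∣ (Int.gcd (Int.gcd A B) (Int.gcd C E) : ℤ) * crossDiff q.1 r.1 := by
  obtain ⟨hq₁, hq₂⟩ := hq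
  obtain ⟨hr₁, hr₂⟩ := hr
  rw [crossDiff]
  refine dvd_gcd_gcd_mul ⟨q.2.num * r.1.num - r.2.num * q.1.num, ?_⟩
    ⟨-q.2.num * r.1.den + r.2.num * q.1.den, ?_⟩ ⟨-q.2.den * r.1.num + r.2.den * q.1.num, ?_⟩
    ⟨q.2.den * r.1.den - r.2.den * q.1.den, ?_⟩
  · linear_combination -r.1.num * hq₁ + q.1.num * hr₁
  · linear_combination r.1.den * hq₁ - q.1.den * hr₁
  · linear_combination -r.1.num * hq₂ + q.1.num * hr₂
  · linear_combination r.1.den * hq₂ - q.1.den * hr₂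

lemma gcd_gcd_pos_of_det_ne_zero (hdet : A * E - B * C ≠ 0) :
    0 < Int.gcd (Int.gcd A B) (Int.gcd C E) := by
  rw [Nat.pos_iff_ne_zero]
  intro h
  simp only [Int.gcd_eq_zero_iff, Int.natCast_eq_zero] at h
  simp [h] at hdet

lemma abs_div_gcd_le_abs_crossDiff (hdet : A * E - B * C ≠ 0) (hq : IsMoebiusPair A B C E g q)
    (hr : IsMoebiusPair A B C E g r) (hne : q.1 ≠ r.1) :
    |(g : ℝ)| / Int.gcd (Int.gcd A B) (Int.gcd C E) ≤ |(crossDiff q.1 r.1 : ℝ)| := by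
  have hgcd := hq.dvd_gcd_mul_crossDiff hr
  have hc := gcd_gcd_pos_of_det_ne_zero hdet
  set c := Int.gcd (Int.gcd A B) (Int.gcd C E)
  have hmul : (c : ℤ) * crossDiff q.1 r.1 ≠ 0 :=
    mul_ne_zero (Nat.cast_ne_zero.2 hc.ne') (crossDiff_eq_zero.not.2 hne)
  have hle : |g| ≤ |(c : ℤ) * crossDiff q.1 r.1| :=
    Int.le_of_dvd (abs_pos.2 hmul) (by rwa [abs_dvd, dvd_abs])
  rw [abs_mul, Nat.abs_cast] at hle
  rw [div_le_iff₀' (Nat.cast_pos.2 hc)]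
  exact_mod_cast hle

lemma abs_crossDiff_le_of_isMoebiusPair {M : ℕ} (hdet : A * E - B * C ≠ 0)
    (hq : IsMoebiusPair A B C E g q) (hr : IsMoebiusPair A B C E g r)
    (hq₁ : q.1 ∈ fareySet M) (hr₁ : r.1 ∈ fareySet M) (hq₂ : q.2 ∈ fareySet M)
    (hr₂ : r.2 ∈ fareySet M) :
    |(crossDiff q.1 r.1 : ℝ)| ≤ M ^ 2 * |(g : ℝ)| / √|(A * E - B * C : ℤ)| := by
  set D : ℝ := |((A * E - B * C : ℤ) : ℝ)| with hD
  have hD₀ : 0 < √D := Real.sqrt_pos.2 (abs_pos.2 (Int.cast_ne_zero.2 hdet))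
  have hkey : D * |(crossDiff q.1 r.1 : ℝ)| = |(g : ℝ)| ^ 2 * |(crossDiff q.2 r.2 : ℝ)| := by
    rw [hD, ← abs_mul, ← abs_pow, ← abs_mul]
    exact_mod_cast congrArg (fun n : ℤ => |(n : ℝ)|) (hq.det_mul_crossDiff hr)
  have hM₁ := abs_crossDiff_le hq₁ hr₁
  have hM₂ := abs_crossDiff_le hq₂ hr₂
  rw [le_div_iff₀ hD₀]
  rcases le_total √D |(g : ℝ)| with hle | hle
  · gcongr
  · refine le_of_mul_le_mul_left ?_ hD₀
    calc √D * (|(crossDiff q.1 r.1 : ℝ)| * √D) = D * |(crossDiff q.1 r.1 : ℝ)| := by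
          linear_combination |(crossDiff q.1 r.1 : ℝ)| * Real.mul_self_sqrt (abs_nonneg _ : 0 ≤ D)
      _ = |(g : ℝ)| * |(g : ℝ)| * |(crossDiff q.2 r.2 : ℝ)| := by rw [hkey, pow_two]
      _ ≤ √D * |(g : ℝ)| * M ^ 2 := by gcongr
      _ = √D * (M ^ 2 * |(g : ℝ)|) := by ring

lemma natCast_den_pos (x : ℚ) : (0 : ℝ) < x.den := Nat.cast_pos.2 x.den_pos

lemma div_gcd_div_sq_le_abs_sub {M : ℕ} (hdet : A * E - B * C ≠ 0)
    (hq : IsMoebiusPair A B C E g q) (hr : IsMoebiusPair A B C E g r)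
    (hq₁ : q.1 ∈ fareySet M) (hr₁ : r.1 ∈ fareySet M) (hne : q.1 ≠ r.1) :
    |(g : ℝ)| / Int.gcd (Int.gcd A B) (Int.gcd C E) / M ^ 2 ≤ |(q.1 - r.1 : ℝ)| := by
  have hden := mul_pos (natCast_den_pos q.1) (natCast_den_pos r.1)
  rw [ratCast_sub_eq_crossDiff_div, abs_div, abs_of_pos hden]
  refine div_le_div₀ (abs_nonneg _) (abs_div_gcd_le_abs_crossDiff hdet hq hr hne) hden ?_
  rw [pow_two]
  gcongr
  exacts [(mem_fareySet_natCast.1 hq₁).2.2, (mem_fareySet_natCast.1 hr₁).2.2]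

lemma abs_sub_le_of_isMoebiusPair {M : ℕ} {β : ℝ} (hdet : A * E - B * C ≠ 0)
    (hq : IsMoebiusPair A B C E g q) (hr : IsMoebiusPair A B C E g r)
    (hq₁ : q.1 ∈ fareySet M) (hr₁ : r.1 ∈ fareySet M) (hq₂ : q.2 ∈ fareySet M)
    (hr₂ : r.2 ∈ fareySet M) (hqβ : (M : ℝ) ≤ β * q.1.den) (hrβ : (M : ℝ) ≤ β * r.1.den) :
    |(q.1 - r.1 : ℝ)| ≤ |(g : ℝ)| * β ^ 2 / √|(A * E - B * C : ℤ)| := by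
  have hden := mul_pos (natCast_den_pos q.1) (natCast_den_pos r.1)
  rw [ratCast_sub_eq_crossDiff_div, abs_div, abs_of_pos hden, div_le_iff₀ hden]
  refine (abs_crossDiff_le_of_isMoebiusPair hdet hq hr hq₁ hr₁ hq₂ hr₂).trans ?_
  rw [div_mul_eq_mul_div]
  gcongr ?_ / _
  calc (M : ℝ) ^ 2 * |(g : ℝ)| ≤ β * q.1.den * (β * r.1.den) * |(g : ℝ)| := by
        rw [pow_two]
        gcongr
        exact M.cast_nonneg.trans hqβ
    _ = |(g : ℝ)| * β ^ 2 * (q.1.den * r.1.den) := by ring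

end MoebiusPairs

section CountingMoebiusPairs

variable {A B C E : ℤ} {M : ℕ} {β : ℝ}

-- The first coordinates are spaced by at least `|g| / (c M²)` and lie within `|g| β² / √|det|`.
theorem card_le_of_forall_isMoebiusPair {g : ℤ} {P : Finset (ℚ × ℚ)} (hdet : A * E - B * C ≠ 0)
    (hP : ∀ q ∈ P, IsMoebiusPair A B C E g q) (hP₁ : ∀ q ∈ P, q.1 ∈ fareySet M)
    (hP₂ : ∀ q ∈ P, q.2 ∈ fareySet M) (hβ : ∀ q ∈ P, (M : ℝ) ≤ β * q.1.den) :
    (#P : ℝ) ≤ 1 + Int.gcd (Int.gcd A B) (Int.gcd C E) * β ^ 2 * M ^ 2 /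
      √|(A * E - B * C : ℤ)| := by
  rcases P.eq_empty_or_nonempty with rfl | ⟨q₀, hq₀⟩
  · rw [card_empty, Nat.cast_zero]
    positivity
  have hg : g ≠ 0 := by
    rintro rfl
    exact hdet (zero_dvd_iff.1 (hP q₀ hq₀).dvd_det)
  have : 0 < |(g : ℝ)| := abs_pos.2 (Int.cast_ne_zero.2 hg)
  have hM : (0 : ℝ) < M :=
    Nat.cast_pos.2 (q₀.1.den_pos.trans_le (mem_fareySet_natCast.1 (hP₁ q₀ hq₀)).2.2)
  have hinj : Set.InjOn (fun q : ℚ × ℚ => (q.1 : ℝ)) P := fun q hq r hr h =>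
    Prod.ext (Rat.cast_injective h) ((hP q hq).snd_eq_snd hg (hP r hr) (Rat.cast_injective h))
  have hc := gcd_gcd_pos_of_det_ne_zero hdet
  set c := Int.gcd (Int.gcd A B) (Int.gcd C E)
  rw [← card_image_of_injOn hinj]
  refine (card_le_one_add_div_of_forall_le_abs_sub (α := |(g : ℝ)| / c / M ^ 2)
    (β := |(g : ℝ)| * β ^ 2 / √|(A * E - B * C : ℤ)|) (by positivity) (by positivity)
    ?_ ?_).trans_eq (by field_simp)
  · simp only [forall_mem_image]
    exact fun q hq r hr hqr => div_gcd_div_sq_le_abs_sub hdet (hP q hq) (hP r hr) (hP₁ q hq)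
      (hP₁ r hr) fun h => hqr (by rw [h])
  · simp only [forall_mem_image]
    exact fun q hq r hr => abs_sub_le_of_isMoebiusPair hdet (hP q hq) (hP r hr) (hP₁ q hq)
      (hP₁ r hr) (hP₂ q hq) (hP₂ r hr) (hβ q hq) (hβ r hr)

theorem card_filter_moebius_eq_le {F : Finset ℚ} (hdet : A * E - B * C ≠ 0)
    (hF : F ⊆ fareySet M) (hβ : ∀ q ∈ F, (M : ℝ) ≤ β * q.den) :
    (#{q ∈ F ×ˢ F | (A * q.1.den + B * q.1.num) * q.2.den +
        (C * q.1.den + E * q.1.num) * q.2.num = 0} : ℝ) ≤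
      2 * #(A * E - B * C).natAbs.divisors *
        (1 + Int.gcd (Int.gcd A B) (Int.gcd C E) * β ^ 2 * M ^ 2 / √|(A * E - B * C : ℤ)|) := by
  classical
  set P := {q ∈ F ×ˢ F | (A * q.1.den + B * q.1.num) * q.2.den +
    (C * q.1.den + E * q.1.num) * q.2.num = 0}
  have hPF : ∀ q ∈ P, q.1 ∈ F ∧ q.2 ∈ F := fun q hq => mem_product.1 (mem_filter.1 hq).1
  obtain ⟨G, hG, hcard⟩ := exists_forall_dvd_mem_and_card_le hdet
  have hfactor : ∀ q ∈ P, ∃ g, IsMoebiusPair A B C E g q := fun q hq =>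
    exists_isMoebiusPair (mem_filter.1 hq).2
  choose! f hf using hfactor
  rw [card_eq_sum_card_fiberwise fun q hq => hG _ (hf q hq).dvd_det, Nat.cast_sum]
  have hfiber : ∀ g ∈ G, (#{q ∈ P | f q = g} : ℝ) ≤
      1 + Int.gcd (Int.gcd A B) (Int.gcd C E) * β ^ 2 * M ^ 2 / √|(A * E - B * C : ℤ)| := by
    intro g _
    refine card_le_of_forall_isMoebiusPair (g := g) hdet ?_ ?_ ?_ ?_ <;> intro q hq <;>
      obtain ⟨hqP, rfl⟩ := mem_filter.1 hq
    exacts [hf q hqP, hF (hPF q hqP).1, hF (hPF q hqP).2, hβ q.1 (hPF q hqP).1]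
  refine (sum_le_card_nsmul _ _ _ hfiber).trans ?_
  rw [nsmul_eq_mul]
  gcongr
  exact_mod_cast hcard

end CountingMoebiusPairs

section DivisorSums

lemma card_le_gcd_of_forall_mul_modEq {S : Finset ℤ} {a m e : ℤ} (hm : 0 < m)
    (hS : S ⊆ Ico a (a + m)) (hmod : ∀ y ∈ S, ∀ y' ∈ S, e * y ≡ e * y' [ZMOD m]) :
    #S ≤ Int.gcd m e := by
  rcases S.eq_empty_or_nonempty with rfl | ⟨v, hv⟩
  · exact Nat.zero_le _
  have hgcd : (0 : ℤ) < Int.gcd m e := Nat.cast_pos.2 (Int.gcd_pos_of_ne_zero_left _ hm.ne')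
  obtain ⟨r, hr⟩ : (Int.gcd m e : ℤ) ∣ m := Int.gcd_dvd_left _ _
  have hr₀ : 0 < r := pos_of_mul_pos_right (hr ▸ hm) hgcd.le
  have hsub : S ⊆ {y ∈ Ico a (a + m) | y ≡ v [ZMOD r]} := fun y hy => mem_filter.2
    ⟨hS hy, by simpa [Int.ediv_eq_of_eq_mul_right hgcd.ne' hr] using
      (hmod y hy v hv).cancel_left_div_gcd hm⟩
  have hcard := Int.Ico_filter_modEq_card a (a + m) hr₀ v
  have hceil : ((a + m : ℤ) - v : ℚ) / r = (a - v) / r + (Int.gcd m e : ℤ) := by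
    have : (r : ℚ) ≠ 0 := Int.cast_ne_zero.2 hr₀.ne'
    conv_lhs => rw [hr]
    push_cast
    field_simp
    ring
  rw [hceil, Int.ceil_add_intCast, add_sub_cancel_left, max_eq_left hgcd.le] at hcard
  exact (card_le_card hsub).trans_eq (Nat.cast_injective hcard)

lemma sum_div_le_mul_one_add_log {ι : Type*} {Y : Finset ι} {D : ι → ℕ} {N g : ℕ}
    (hD : ∀ y ∈ Y, D y ∈ Icc 1 N) (hfiber : ∀ n, #{y ∈ Y | D y = n} ≤ g) (d : ℕ) :
    ∑ y ∈ Y with d ∣ D y, (d : ℝ) / D y ≤ g * (1 + Real.log N) := by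
  have hmaps : ∀ y ∈ {y ∈ Y | d ∣ D y}, D y / d ∈ Icc 1 N := by
    intro y hy
    obtain ⟨hy, hdvd⟩ := mem_filter.1 hy
    obtain ⟨h1, hN⟩ := mem_Icc.1 (hD y hy)
    exact mem_Icc.2 ⟨Nat.div_pos (Nat.le_of_dvd h1 hdvd) (Nat.pos_of_dvd_of_pos hdvd h1),
      (Nat.div_le_self _ _).trans hN⟩
  have hterm : ∀ m ∈ Icc 1 N,
      ∑ y ∈ Y with d ∣ D y ∧ D y / d = m, (d : ℝ) / D y ≤ g * (m : ℝ)⁻¹ := by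
    intro m hm
    have hsub : {y ∈ Y | d ∣ D y ∧ D y / d = m} ⊆ {y ∈ Y | D y = d * m} := by
      intro y hy
      obtain ⟨hyY, hdvd, rfl⟩ := mem_filter.1 hy
      exact mem_filter.2 ⟨hyY, (Nat.mul_div_cancel' hdvd).symm⟩
    refine (sum_le_card_nsmul _ _ (m : ℝ)⁻¹ fun y hy => ?_).trans ?_
    · rw [(mem_filter.1 (hsub hy)).2, Nat.cast_mul, div_mul_eq_div_div, div_eq_mul_inv _ (m : ℝ)]
      exact mul_le_of_le_one_left (by positivity) (div_self_le_one _)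
    · rw [nsmul_eq_mul]
      gcongr
      exact_mod_cast (card_le_card hsub).trans (hfiber _)
  have hharmonic : ∑ m ∈ Icc 1 N, (m : ℝ)⁻¹ ≤ 1 + Real.log N := by
    have h := harmonic_le_one_add_log N
    rw [harmonic_eq_sum_Icc] at h
    push_cast at h
    exact h
  rw [← sum_fiberwise_of_maps_to hmaps]
  simp only [filter_filter]
  refine (sum_le_sum hterm).trans ?_
  rw [← mul_sum]
  gcongr

lemma sum_Icc_gcd_le (R : ℕ) {n : ℕ} (hn : n ≠ 0) :
    ∑ z ∈ Icc 1 R, Nat.gcd z n ≤ R * #n.divisors := calc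
  _ ≤ ∑ z ∈ Icc 1 R, ∑ e ∈ n.divisors with e ∣ z, e := sum_le_sum fun z _ =>
    single_le_sum (f := fun e => e) (fun _ _ => Nat.zero_le _)
      (mem_filter.2 ⟨Nat.mem_divisors.2 ⟨Nat.gcd_dvd_right z n, hn⟩, Nat.gcd_dvd_left z n⟩)
  _ = ∑ e ∈ n.divisors, #{z ∈ Icc 1 R | e ∣ z} * e := by
    simp only [sum_filter]
    rw [sum_comm]
    simp only [← sum_filter, sum_const, smul_eq_mul]
  _ ≤ ∑ _ ∈ n.divisors, R := sum_le_sum fun e _ =>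
    (Nat.mul_le_mul_right e (Nat.Ioc_filter_dvd_card_eq_div R e).le).trans
      (Nat.div_mul_le_self R e)
  _ = R * #n.divisors := by rw [sum_const, smul_eq_mul, mul_comm]

lemma sum_Icc_product_gcd_le (R V : ℕ) {τ : ℝ}
    (hτ : ∀ n : ℕ, n ≠ 0 → n ≤ V → (#n.divisors : ℝ) ≤ τ) :
    ∑ x ∈ Icc (1 : ℤ) R ×ˢ Icc (1 : ℤ) V, (Int.gcd x.1 x.2 : ℝ) ≤ R * V * τ := by
  have hcast (n : ℕ) : Icc (1 : ℤ) n = (Icc 1 n).image Nat.cast := by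
    simpa using (coe_injective <| by push_cast; exact Nat.image_cast_int_Icc 1 n :
      (Icc 1 n).image ((↑) : ℕ → ℤ) = Icc ((1 : ℕ) : ℤ) n).symm
  rw [sum_product_right, hcast R, hcast V, sum_image Nat.cast_injective.injOn]
  simp only [sum_image Nat.cast_injective.injOn, Int.gcd_natCast_natCast]
  calc ∑ w ∈ Icc 1 V, ∑ z ∈ Icc 1 R, (Nat.gcd z w : ℝ) ≤ ∑ _ ∈ Icc 1 V, R * τ := by
        refine sum_le_sum fun w hw => ?_
        obtain ⟨hw₁, hwV⟩ := mem_Icc.1 hw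
        calc ∑ z ∈ Icc 1 R, (Nat.gcd z w : ℝ) ≤ R * #w.divisors := by
              exact_mod_cast sum_Icc_gcd_le R (by omega)
          _ ≤ R * τ := by gcongr; exact hτ w (by omega) hwV
    _ = R * V * τ := by
        rw [sum_const, Nat.card_Icc, Nat.add_sub_cancel, nsmul_eq_mul]
        ring

end DivisorSums

section Frames

/-- The determinant of the matrix with columns `x` and `y`. -/
def crossProd (x y : ℤ × ℤ) : ℤ := x.1 * y.2 - x.2 * y.1

lemma neg_crossProd (x y : ℤ × ℤ) : -crossProd x y = crossProd y x := by
  unfold crossProd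
  ring

lemma dvd_crossProd_of_isCoprime {c : ℤ} {x y w w' : ℤ × ℤ} (hcop : IsCoprime w.2 w'.2)
    (hxw : c ∣ crossProd x w) (hyw : c ∣ crossProd y w) (hxw' : c ∣ crossProd x w')
    (hyw' : c ∣ crossProd y w') : c ∣ crossProd x y := by
  obtain ⟨a, b, hab⟩ := hcop
  have h : crossProd x y = a * (y.2 * crossProd x w - x.2 * crossProd y w) +
      b * (y.2 * crossProd x w' - x.2 * crossProd y w') := by
    unfold crossProd
    linear_combination -(x.1 * y.2 - x.2 * y.1) * hab
  rw [h]
  exact dvd_add (dvd_mul_of_dvd_right (dvd_sub (hxw.mul_left _) (hyw.mul_left _)) _)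
    (dvd_mul_of_dvd_right (dvd_sub (hxw'.mul_left _) (hyw'.mul_left _)) _)

lemma card_le_gcd_of_crossProd_eq {P : Finset (ℤ × ℤ)} {x : ℤ × ℤ} {a n : ℤ} (hx : 0 < x.2)
    (hP : ∀ y ∈ P, y.2 ∈ Ico a (a + x.2)) (hdet : ∀ y ∈ P, crossProd x y = n) :
    #P ≤ Int.gcd x.1 x.2 := by
  have hinj : Set.InjOn Prod.snd (P : Set (ℤ × ℤ)) := by
    refine fun y hy y' hy' h => Prod.ext (mul_left_cancel₀ hx.ne' ?_) h
    have h' := (hdet y hy).trans (hdet y' hy').symm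
    unfold crossProd at h'
    linear_combination x.1 * h - h'
  rw [← card_image_of_injOn hinj, Int.gcd_comm]
  refine card_le_gcd_of_forall_mul_modEq (a := a) hx (image_subset_iff.2 hP) ?_
  have hmod : ∀ y ∈ P, x.1 * y.2 ≡ n [ZMOD x.2] := fun y hy =>
    (Int.modEq_iff_add_fac.2 ⟨-y.1, by rw [← hdet y hy]; unfold crossProd; ring⟩)
  simp only [forall_mem_image]
  exact fun y hy y' hy' => (hmod y hy).trans (hmod y' hy').symm

/-- A pair of columns `(z₁, u)`, `(z₂, v)` in `ℤ²`, standing for the Möbius transformation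
`ρ ↦ (z₁ + z₂ρ) / (u + vρ)`. -/
abbrev Frame : Type := (ℤ × ℤ) × (ℤ × ℤ)

namespace Frame

/-- The columns of a frame, indexed by `Bool` so that statements can treat both at once. -/
def col (X : Frame) (i : Bool) : ℤ × ℤ := bif i then X.2 else X.1

/-- The numerator of the Möbius transformation of a frame at a rational number. -/
def num (X : Frame) (q : ℚ) : ℤ := X.1.1 * q.den + X.2.1 * q.num

/-- The denominator of the Möbius transformation of a frame at a rational number. -/
def den (X : Frame) (q : ℚ) : ℤ := X.1.2 * q.den + X.2.2 * q.num

/-- The absolute value of the determinant of a frame. -/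
def absDet (X : Frame) : ℕ := (crossProd X.1 X.2).natAbs

/-- The greatest common divisor of the determinants pairing a column of `X` with one of `Y`. -/
def crossGcd (X Y : Frame) : ℕ :=
  Int.gcd (Int.gcd (crossProd X.1 Y.1) (crossProd X.2 Y.1))
    (Int.gcd (crossProd X.1 Y.2) (crossProd X.2 Y.2))

lemma crossGcd_dvd_crossProd (X Y : Frame) (i j : Bool) :
    (crossGcd X Y : ℤ) ∣ crossProd (X.col i) (Y.col j) := by
  cases j
  · refine (Int.gcd_dvd_left _ _).trans ?_
    cases i
    exacts [Int.gcd_dvd_left _ _, Int.gcd_dvd_right _ _]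
  · refine (Int.gcd_dvd_right _ _).trans ?_
    cases i
    exacts [Int.gcd_dvd_left _ _, Int.gcd_dvd_right _ _]

lemma crossGcd_dvd_absDet_left {X Y : Frame} (hY : IsCoprime Y.1.2 Y.2.2) :
    crossGcd X Y ∣ X.absDet :=
  Int.natCast_dvd.1 <| dvd_crossProd_of_isCoprime hY (crossGcd_dvd_crossProd X Y false false)
    (crossGcd_dvd_crossProd X Y true false) (crossGcd_dvd_crossProd X Y false true)
    (crossGcd_dvd_crossProd X Y true true)

lemma crossGcd_dvd_absDet_right {X Y : Frame} (hX : IsCoprime X.1.2 X.2.2) :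
    crossGcd X Y ∣ Y.absDet := by
  have h (i j : Bool) : (crossGcd X Y : ℤ) ∣ crossProd (Y.col j) (X.col i) :=
    neg_crossProd (X.col i) (Y.col j) ▸ (crossGcd_dvd_crossProd X Y i j).neg_right
  exact Int.natCast_dvd.1 <| dvd_crossProd_of_isCoprime hX (h false false) (h false true)
    (h true false) (h true true)

lemma crossProd_mul_sub_crossProd_mul (X Y : Frame) :
    crossProd X.1 Y.1 * crossProd X.2 Y.2 - crossProd X.2 Y.1 * crossProd X.1 Y.2 =
      crossProd X.1 X.2 * crossProd Y.1 Y.2 := by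
  unfold crossProd
  ring

lemma exists_crossProd_col_ne_zero {X Y : Frame} (hX : X.absDet ≠ 0) (hY : Y.absDet ≠ 0) :
    ∃ i j, crossProd (X.col i) (Y.col j) ≠ 0 := by
  by_contra! h
  have hdet := crossProd_mul_sub_crossProd_mul X Y
  rw [show crossProd X.1 Y.1 = 0 from h false false,
    show crossProd X.2 Y.1 = 0 from h true false, zero_mul, zero_mul, sub_zero] at hdet
  exact mul_ne_zero (Int.natAbs_ne_zero.1 hX) (Int.natAbs_ne_zero.1 hY) hdet.symm

end Frame

/-- The integer box containing the columns of the frames in `frames V R`. -/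
noncomputable def columnBox (V R : ℕ) : Finset (ℤ × ℤ) := Icc 1 (R : ℤ) ×ˢ Icc 1 (4 * V : ℤ)

/-- The frames `(z₁, u)`, `(z₂, v)` used to dilate and translate Farey fractions: the entries
`z₁`, `z₂` are at most `R`, the denominators `u`, `v` have size about `V`, are coprime, and `v` runs
over at most one period modulo `u`. -/
noncomputable def frames (V R : ℕ) : Finset Frame :=
  {X ∈ columnBox V R ×ˢ columnBox V R |
    (V < X.1.2 ∧ X.1.2 ≤ 2 * V ∧ 2 * V ≤ X.2.2 ∧ X.2.2 < 2 * V + X.1.2) ∧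
    IsCoprime X.1.2 X.2.2 ∧ 0 < crossProd X.2 X.1}

variable {V R : ℕ} {X Y : Frame}

lemma card_frames_le (V R : ℕ) : #(frames V R) ≤ 16 * V ^ 2 * R ^ 2 := by
  refine (card_filter_le _ _).trans_eq ?_
  simp only [columnBox, card_product, Int.card_Icc, add_sub_cancel_right, Int.toNat_natCast]
  rw [show (4 * V : ℤ).toNat = 4 * V by omega]
  ring

lemma col_mem_columnBox (hX : X ∈ frames V R) (i : Bool) : X.col i ∈ columnBox V R := by
  have h := mem_product.1 (mem_filter.1 hX).1
  cases i
  exacts [h.1, h.2]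

lemma Frame.isCoprime_of_mem_frames (hX : X ∈ frames V R) : IsCoprime X.1.2 X.2.2 :=
  (mem_filter.1 hX).2.2.1

lemma Frame.crossProd_eq_neg_absDet (hX : X ∈ frames V R) : crossProd X.1 X.2 = -X.absDet := by
  have h : crossProd X.1 X.2 < 0 := by
    rw [← neg_pos, neg_crossProd]
    exact (mem_filter.1 hX).2.2.2
  unfold Frame.absDet
  omega

lemma Frame.absDet_mem_Icc (hX : X ∈ frames V R) : X.absDet ∈ Icc 1 (2 * V * R) := by
  have hdet := Frame.crossProd_eq_neg_absDet hX
  obtain ⟨hbox, ⟨-, hu, -, -⟩, -, hpos⟩ := mem_filter.1 hX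
  simp only [columnBox, mem_product, mem_Icc] at hbox
  obtain ⟨⟨⟨hz, -⟩, hu₀, -⟩, ⟨hz', hzR⟩, hv₀, -⟩ := hbox
  rw [← neg_crossProd] at hpos
  refine mem_Icc.2 ⟨by omega, ?_⟩
  zify
  calc (X.absDet : ℤ) = X.1.2 * X.2.1 - X.1.1 * X.2.2 := by unfold crossProd at hdet; linarith
    _ ≤ X.1.2 * X.2.1 := sub_le_self _ (by positivity)
    _ ≤ 2 * V * R := by gcongr

lemma natAbs_crossProd_le {x y : ℤ × ℤ} (hx : x ∈ columnBox V R) (hy : y ∈ columnBox V R) :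
    (crossProd x y).natAbs ≤ 4 * V * R := by
  simp only [columnBox, mem_product, mem_Icc] at hx hy
  obtain ⟨⟨hx₁, hxR⟩, hx₂, hxV⟩ := hx
  obtain ⟨⟨hy₁, hyR⟩, hy₂, hyV⟩ := hy
  have h₁ : x.1 * y.2 ≤ R * (4 * V) := by gcongr
  have h₂ : x.2 * y.1 ≤ 4 * V * R := by gcongr
  have h₃ : 0 < x.1 * y.2 := by positivity
  have h₄ : 0 < x.2 * y.1 := by positivity
  zify
  rw [crossProd, abs_le]
  constructor <;> linarith

lemma card_frames_filter_col_le (i : Bool) (x : ℤ × ℤ) (n : ℕ) :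
    #{X ∈ {X ∈ frames V R | X.col i = x} | X.absDet = n} ≤ Int.gcd x.1 x.2 := by
  set P := {X ∈ {X ∈ frames V R | X.col i = x} | X.absDet = n} with hP
  have hmem : ∀ X ∈ P, X ∈ frames V R ∧ X.col i = x ∧ X.absDet = n := by
    intro X hX
    rwa [hP, mem_filter, mem_filter, and_assoc] at hX
  rcases P.eq_empty_or_nonempty with hP₀ | ⟨X₀, hX₀⟩
  · simp [hP₀]
  have hinj : Set.InjOn (fun X : Frame => X.col !i) P := by
    intro X hX Y hY h
    have h' := (hmem X hX).2.1.trans (hmem Y hY).2.1.symm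
    cases i
    exacts [Prod.ext h' h, Prod.ext h h']
  have hx : 0 < x.2 := by
    have h := col_mem_columnBox (hmem X₀ hX₀).1 i
    rw [(hmem X₀ hX₀).2.1] at h
    exact (mem_Icc.1 (mem_product.1 h).2).1
  rw [← card_image_of_injOn hinj]
  refine card_le_gcd_of_crossProd_eq (a := bif i then V + 1 else 2 * V)
    (n := bif i then n else -n) hx ?_ ?_ <;> simp only [forall_mem_image] <;> intro X hX
  all_goals
    obtain ⟨hXmem, rfl, rfl⟩ := hmem X hX
    have hdet := Frame.crossProd_eq_neg_absDet hXmem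
    obtain ⟨hu, hu', hv, hv'⟩ := (mem_filter.1 hXmem).2.1
    cases i
  · exact mem_Ico.2 ⟨hv, hv'⟩
  · simp only [Frame.col, mem_Ico, cond_true, Bool.not_true, cond_false]
    omega
  · exact hdet
  · rw [← neg_crossProd]
    simpa [Frame.col, neg_eq_iff_eq_neg] using hdet

end Frames

section CrossGcdSum

lemma sum_sum_sum_mul_le_mul_sum_sq {ι κ δ : Type*} [DecidableEq κ] {X : Finset ι} {B : Finset κ}
    {π π' : ι → κ} {S : κ → κ → Finset δ} {f : δ → ι → ℝ} {K : κ → ℝ} {τ : ℝ}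
    (hπ : ∀ a ∈ X, π a ∈ B) (hπ' : ∀ a ∈ X, π' a ∈ B) (hf : ∀ d a, 0 ≤ f d a) (hK₀ : ∀ x, 0 ≤ K x)
    (hK : ∀ x d, ∑ a ∈ X with π a = x, f d a ≤ K x)
    (hK' : ∀ x d, ∑ a ∈ X with π' a = x, f d a ≤ K x)
    (hS : ∀ x ∈ B, ∀ y ∈ B, (#(S x y) : ℝ) ≤ τ) :
    ∑ a ∈ X, ∑ b ∈ X, ∑ d ∈ S (π a) (π' b), f d a * f d b ≤ τ * (∑ x ∈ B, K x) ^ 2 := by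
  have hfiber : ∑ a ∈ X, ∑ b ∈ X, ∑ d ∈ S (π a) (π' b), f d a * f d b =
      ∑ x ∈ B, ∑ y ∈ B, ∑ d ∈ S x y, (∑ a ∈ X with π a = x, f d a) *
        ∑ b ∈ X with π' b = y, f d b := by
    rw [← sum_fiberwise_of_maps_to hπ]
    refine sum_congr rfl fun x _ => ?_
    simp_rw [← sum_fiberwise_of_maps_to hπ']
    rw [sum_comm]
    refine sum_congr rfl fun y _ => ?_
    simp_rw [sum_mul_sum]
    rw [sum_comm (s := S x y)]
    refine sum_congr rfl fun a ha => ?_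
    rw [sum_comm (s := S x y)]
    refine sum_congr rfl fun b hb => ?_
    rw [(mem_filter.1 ha).2, (mem_filter.1 hb).2]
  rw [hfiber, pow_two, sum_mul_sum, mul_sum]
  simp_rw [mul_sum B]
  refine sum_le_sum fun x hx => sum_le_sum fun y hy => ?_
  calc _ ≤ ∑ _ ∈ S x y, K x * K y := sum_le_sum fun d _ =>
        mul_le_mul (hK x d) (hK' y d) (sum_nonneg fun _ _ => hf _ _) (hK₀ x)
    _ ≤ τ * (K x * K y) := by
        rw [sum_const, nsmul_eq_mul]
        exact mul_le_mul_of_nonneg_right (hS x hx y hy) (mul_nonneg (hK₀ x) (hK₀ y))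

variable {V R N : ℕ} {X Y : Frame} {τ : ℝ}

lemma crossGcd_sq_div_le_sum (hX : X ∈ frames V R) (hY : Y ∈ frames V R) :
    (X.crossGcd Y : ℝ) ^ 2 / (X.absDet * Y.absDet) ≤
      ∑ i, ∑ j, ∑ d ∈ (crossProd (X.col i) (Y.col j)).natAbs.divisors,
        (if d ∣ X.absDet then (d : ℝ) / X.absDet else 0) *
          (if d ∣ Y.absDet then (d : ℝ) / Y.absDet else 0) := by
  set f : Frame → ℕ → ℝ := fun X d => if d ∣ X.absDet then (d : ℝ) / X.absDet else 0 with hf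
  have hf₀ (X d) : 0 ≤ f X d := by simp only [hf]; positivity
  obtain ⟨i, j, hij⟩ := Frame.exists_crossProd_col_ne_zero
    (Nat.one_le_iff_ne_zero.1 (mem_Icc.1 (Frame.absDet_mem_Icc hX)).1)
    (Nat.one_le_iff_ne_zero.1 (mem_Icc.1 (Frame.absDet_mem_Icc hY)).1)
  have hmem : X.crossGcd Y ∈ (crossProd (X.col i) (Y.col j)).natAbs.divisors :=
    Nat.mem_divisors.2 ⟨Int.natCast_dvd.1 (X.crossGcd_dvd_crossProd Y i j),
      Int.natAbs_ne_zero.2 hij⟩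
  have hsum (i j : Bool) :
      0 ≤ ∑ d ∈ (crossProd (X.col i) (Y.col j)).natAbs.divisors, f X d * f Y d :=
    sum_nonneg fun d _ => mul_nonneg (hf₀ X d) (hf₀ Y d)
  calc (X.crossGcd Y : ℝ) ^ 2 / (X.absDet * Y.absDet)
      = f X (X.crossGcd Y) * f Y (X.crossGcd Y) := by
        simp only [hf, if_pos (Frame.crossGcd_dvd_absDet_left (Frame.isCoprime_of_mem_frames hY)),
          if_pos (Frame.crossGcd_dvd_absDet_right (Frame.isCoprime_of_mem_frames hX))]
        rw [div_mul_div_comm, pow_two]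
    _ ≤ ∑ d ∈ (crossProd (X.col i) (Y.col j)).natAbs.divisors, f X d * f Y d :=
        single_le_sum (f := fun d => f X d * f Y d)
          (fun d _ => mul_nonneg (hf₀ X d) (hf₀ Y d)) hmem
    _ ≤ ∑ j, ∑ d ∈ (crossProd (X.col i) (Y.col j)).natAbs.divisors, f X d * f Y d :=
        single_le_sum (fun j _ => hsum i j) (mem_univ j)
    _ ≤ _ := single_le_sum (f := fun i => ∑ j, ∑ d ∈ _, f X d * f Y d)
        (fun i _ => sum_nonneg fun j _ => hsum i j) (mem_univ i)

lemma sum_columnBox_gcd_mul_le (hτ : ∀ n ≤ 4 * V, (#n.divisors : ℝ) ≤ τ)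
    (hlog : 1 + Real.log N ≤ τ) :
    ∑ x ∈ columnBox V R, Int.gcd x.1 x.2 * (1 + Real.log N) ≤ 4 * V * R * τ ^ 2 := by
  have hτ₀ : 0 ≤ τ := (by positivity : 0 ≤ 1 + Real.log N).trans hlog
  have h := sum_Icc_product_gcd_le R (4 * V) fun n _ => hτ n
  push_cast at h
  rw [← sum_mul]
  calc _ ≤ R * (4 * V) * τ * τ := mul_le_mul h hlog (by positivity) (by positivity)
    _ = 4 * V * R * τ ^ 2 := by ring

theorem sum_sum_crossGcd_sq_div_le (hN : 4 * V * R ≤ N) (hR : 0 < R)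
    (hτ : ∀ n ≤ N, (#n.divisors : ℝ) ≤ τ) (hlog : 1 + Real.log N ≤ τ) :
    ∑ X ∈ frames V R, ∑ Y ∈ frames V R, (X.crossGcd Y : ℝ) ^ 2 / (X.absDet * Y.absDet) ≤
      4 * τ * (4 * V * R * τ ^ 2) ^ 2 := by
  have hτ₀ : 0 ≤ τ := (by positivity : 0 ≤ 1 + Real.log N).trans hlog
  set K : ℤ × ℤ → ℝ := fun x => Int.gcd x.1 x.2 * (1 + Real.log N) with hK
  set f : ℕ → Frame → ℝ := fun d X => if d ∣ X.absDet then (d : ℝ) / X.absDet else 0 with hf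
  have hD : ∀ X ∈ frames V R, X.absDet ∈ Icc 1 N := fun X hX =>
    Icc_subset_Icc_right (by linarith) (Frame.absDet_mem_Icc hX)
  have hfiber (i x d) : ∑ X ∈ frames V R with X.col i = x, f d X ≤ K x := by
    rw [hf, ← sum_filter]
    exact sum_div_le_mul_one_add_log (fun X hX => hD X (mem_filter.1 hX).1)
      (card_frames_filter_col_le i x) d
  have hpair (i j) : ∑ X ∈ frames V R, ∑ Y ∈ frames V R,
      ∑ d ∈ (crossProd (X.col i) (Y.col j)).natAbs.divisors, f d X * f d Y ≤
        τ * (4 * V * R * τ ^ 2) ^ 2 := by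
    refine (sum_sum_sum_mul_le_mul_sum_sq (fun X hX => col_mem_columnBox hX i)
      (fun X hX => col_mem_columnBox hX j) (fun d X => by simp only [hf]; positivity)
      (fun x => by simp only [hK]; positivity) (hfiber i) (hfiber j)
      (S := fun x y => (crossProd x y).natAbs.divisors)
      fun x hx y hy => hτ _ ((natAbs_crossProd_le hx hy).trans hN)).trans ?_
    gcongr
    exact sum_columnBox_gcd_mul_le (fun n hn => hτ n (by nlinarith)) hlog
  calc _ ≤ ∑ X ∈ frames V R, ∑ Y ∈ frames V R, ∑ i, ∑ j,
        ∑ d ∈ (crossProd (X.col i) (Y.col j)).natAbs.divisors, f d X * f d Y :=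
        sum_le_sum fun X hX => sum_le_sum fun Y hY => crossGcd_sq_div_le_sum hX hY
    _ = ∑ i, ∑ j, ∑ X ∈ frames V R, ∑ Y ∈ frames V R,
        ∑ d ∈ (crossProd (X.col i) (Y.col j)).natAbs.divisors, f d X * f d Y := by
        simp only [sum_comm (s := frames V R) (t := (univ : Finset Bool))]
    _ ≤ ∑ _ : Bool, ∑ _ : Bool, τ * (4 * V * R * τ ^ 2) ^ 2 :=
        sum_le_sum fun i _ => sum_le_sum fun j _ => hpair i j
    _ = 4 * τ * (4 * V * R * τ ^ 2) ^ 2 := by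
        simp only [sum_const, card_univ, Fintype.card_bool, nsmul_eq_mul]
        push_cast
        ring

end CrossGcdSum

section FrameCollisions

variable {V R M N : ℕ} {X Y : Frame} {F : Finset ℚ} {β τ : ℝ}

lemma sq_card_filter_num_mul_den_eq_le (hN : 4 * V ^ 2 * R ^ 2 ≤ N)
    (hτ : ∀ n ≤ N, (#n.divisors : ℝ) ≤ τ) (hF : F ⊆ fareySet M) (hβ : ∀ q ∈ F, (M : ℝ) ≤ β * q.den)
    (hX : X ∈ frames V R) (hY : Y ∈ frames V R) :
    (#{q ∈ F ×ˢ F | X.num q.1 * Y.den q.2 = Y.num q.2 * X.den q.1} : ℝ) ^ 2 ≤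
      8 * τ ^ 2 +
        8 * τ ^ 2 * β ^ 4 * M ^ 4 * ((X.crossGcd Y : ℝ) ^ 2 / (X.absDet * Y.absDet)) := by
  obtain ⟨hX₀, hXle⟩ := mem_Icc.1 (Frame.absDet_mem_Icc hX)
  obtain ⟨hY₀, hYle⟩ := mem_Icc.1 (Frame.absDet_mem_Icc hY)
  have hdet : crossProd X.1 Y.1 * crossProd X.2 Y.2 - crossProd X.2 Y.1 * crossProd X.1 Y.2 =
      (X.absDet * Y.absDet : ℕ) := by
    rw [Frame.crossProd_mul_sub_crossProd_mul, Frame.crossProd_eq_neg_absDet hX,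
      Frame.crossProd_eq_neg_absDet hY, neg_mul_neg, Nat.cast_mul]
  have hcount := card_filter_moebius_eq_le
    (by rw [hdet]; exact_mod_cast (Nat.mul_pos hX₀ hY₀).ne') hF hβ
  have hfilter : {q ∈ F ×ˢ F | X.num q.1 * Y.den q.2 = Y.num q.2 * X.den q.1} =
      {q ∈ F ×ˢ F | (crossProd X.1 Y.1 * q.1.den + crossProd X.2 Y.1 * q.1.num) * q.2.den +
        (crossProd X.1 Y.2 * q.1.den + crossProd X.2 Y.2 * q.1.num) * q.2.num = 0} := by
    refine filter_congr fun q _ => ?_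
    rw [← sub_eq_zero]
    unfold Frame.num Frame.den crossProd
    ring_nf
  rw [hdet, Int.natAbs_natCast, Int.cast_natCast, Nat.abs_cast, ← hfilter] at hcount
  have hdiv : (#(X.absDet * Y.absDet).divisors : ℝ) ≤ τ :=
    hτ _ <| calc X.absDet * Y.absDet ≤ 2 * V * R * (2 * V * R) := Nat.mul_le_mul hXle hYle
      _ = 4 * V ^ 2 * R ^ 2 := by ring
      _ ≤ N := hN
  have hτ₀ : 0 ≤ τ := (Nat.cast_nonneg _).trans hdiv
  set s := √((X.absDet * Y.absDet : ℕ) : ℝ) with hs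
  have hs₂ : s ^ 2 = X.absDet * Y.absDet := by
    rw [hs, Real.sq_sqrt (Nat.cast_nonneg _), Nat.cast_mul]
  calc _ ≤ (2 * τ * (1 + X.crossGcd Y * β ^ 2 * M ^ 2 / s)) ^ 2 := by
        refine pow_le_pow_left₀ (Nat.cast_nonneg _) (hcount.trans ?_) 2
        gcongr ?_ * ?_
        · gcongr
        · rfl
    _ = 4 * τ ^ 2 * (1 + X.crossGcd Y * β ^ 2 * M ^ 2 / s) ^ 2 := by ring
    _ ≤ 4 * τ ^ 2 * (2 * (1 ^ 2 + (X.crossGcd Y * β ^ 2 * M ^ 2 / s) ^ 2)) := by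
        gcongr
        exact add_sq_le
    _ = _ := by
        rw [← hs₂]
        ring

theorem sum_sum_sq_card_filter_num_mul_den_eq_le (hN : 1156 * M ^ 3 * V ≤ N) (hV : 0 < V)
    (hVM : V ≤ M) (hτ : ∀ n ≤ N, (#n.divisors : ℝ) ≤ τ) (hlog : 1 + Real.log N ≤ τ)
    (hF : F ⊆ fareySet M) (hβ₁ : 1 ≤ β) (hβ : ∀ q ∈ F, (M : ℝ) ≤ β * q.den) :
    ∑ X ∈ frames V (17 * M), ∑ Y ∈ frames V (17 * M),
      (#{q ∈ F ×ˢ F | X.num q.1 * Y.den q.2 = Y.num q.2 * X.den q.1} : ℝ) ^ 2 ≤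
      2 * 10 ^ 8 * τ ^ 7 * β ^ 4 * V ^ 2 * M ^ 6 := by
  have hM : 0 < M := hV.trans_le hVM
  have hτ₁ : 1 ≤ τ := (le_add_of_nonneg_right (Real.log_natCast_nonneg N)).trans hlog
  have hN' : 4 * V ^ 2 * (17 * M) ^ 2 ≤ N := hN.trans' <| calc
    4 * V ^ 2 * (17 * M) ^ 2 = 1156 * M ^ 2 * V * V := by ring
    _ ≤ 1156 * M ^ 2 * V * M := by gcongr
    _ = 1156 * M ^ 3 * V := by ring
  have hgcd := sum_sum_crossGcd_sq_div_le (V := V) (R := 17 * M)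
    (hN'.trans' (by nlinarith [Nat.mul_pos hV hM])) (by omega) hτ hlog
  have hcard : (#(frames V (17 * M)) : ℝ) ≤ 16 * V ^ 2 * (17 * M) ^ 2 :=
    mod_cast card_frames_le V (17 * M)
  push_cast at hgcd
  calc _ ≤ ∑ X ∈ frames V (17 * M), ∑ Y ∈ frames V (17 * M), (8 * τ ^ 2 +
        8 * τ ^ 2 * β ^ 4 * M ^ 4 * ((X.crossGcd Y : ℝ) ^ 2 / (X.absDet * Y.absDet))) :=
        sum_le_sum fun X hX => sum_le_sum fun Y hY =>
          sq_card_filter_num_mul_den_eq_le hN' hτ hF hβ hX hY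
    _ = 8 * τ ^ 2 * (#(frames V (17 * M)) : ℝ) ^ 2 + 8 * τ ^ 2 * β ^ 4 * M ^ 4 *
        ∑ X ∈ frames V (17 * M), ∑ Y ∈ frames V (17 * M),
          (X.crossGcd Y : ℝ) ^ 2 / (X.absDet * Y.absDet) := by
        simp only [sum_add_distrib, mul_sum, sum_const, nsmul_eq_mul]
        ring
    _ ≤ 8 * τ ^ 2 * (16 * V ^ 2 * (17 * M) ^ 2) ^ 2 + 8 * τ ^ 2 * β ^ 4 * M ^ 4 *
        (4 * τ * (4 * V * (17 * M) * τ ^ 2) ^ 2) := by gcongr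
    _ = 171051008 * (τ ^ 2 * 1) * (V ^ 2 * V ^ 2 * M ^ 4) +
        147968 * τ ^ 7 * β ^ 4 * V ^ 2 * M ^ 6 := by ring
    _ ≤ 171051008 * (τ ^ 7 * β ^ 4) * (V ^ 2 * M ^ 2 * M ^ 4) +
        147968 * τ ^ 7 * β ^ 4 * V ^ 2 * M ^ 6 := by
        gcongr
        · norm_num
        · exact one_le_pow₀ hβ₁
    _ = 171198976 * τ ^ 7 * β ^ 4 * V ^ 2 * M ^ 6 := by ring
    _ ≤ 2 * 10 ^ 8 * τ ^ 7 * β ^ 4 * V ^ 2 * M ^ 6 := by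
        gcongr
        norm_num

end FrameCollisions

section Hoelder

lemma sum_comp_pow_two_mul_le {ι α : Type*} [Fintype α] [DecidableEq α] (I : Finset ι) (φ : ι → α)
    {g : α → ℝ} (hg : ∀ a, 0 ≤ g a) {n : ℕ} (hn : n ≠ 0) :
    (∑ i ∈ I, g (φ i)) ^ (2 * n) ≤
      (#I : ℝ) ^ (2 * (n - 1)) * (∑ i ∈ I, (#{j ∈ I | φ j = φ i} : ℝ)) * ∑ a, g a ^ (2 * n) := by
  obtain ⟨n, rfl⟩ := Nat.exists_eq_succ_of_ne_zero hn
  have hmaps : ∀ i ∈ I, φ i ∈ univ := fun _ _ => mem_univ _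
  have hfiber : ∑ i ∈ I, g (φ i) ^ (n + 1) = ∑ a, (#{j ∈ I | φ j = a} : ℝ) * g a ^ (n + 1) := by
    rw [← sum_fiberwise_of_maps_to hmaps]
    refine sum_congr rfl fun a _ => ?_
    rw [← nsmul_eq_mul, ← sum_const]
    exact sum_congr rfl fun i hi => by rw [(mem_filter.1 hi).2]
  have henergy : ∑ i ∈ I, (#{j ∈ I | φ j = φ i} : ℝ) = ∑ a, (#{j ∈ I | φ j = a} : ℝ) ^ 2 := by
    rw [← sum_fiberwise_of_maps_to hmaps]
    refine sum_congr rfl fun a _ => ?_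
    rw [pow_two, ← nsmul_eq_mul, ← sum_const]
    exact sum_congr rfl fun i hi => by rw [(mem_filter.1 hi).2]
  have hsum : 0 ≤ ∑ i ∈ I, g (φ i) := sum_nonneg fun _ _ => hg _
  calc (∑ i ∈ I, g (φ i)) ^ (2 * (n + 1)) = ((∑ i ∈ I, g (φ i)) ^ (n + 1)) ^ 2 := by
        rw [← pow_mul, mul_comm]
    _ ≤ ((#I : ℝ) ^ n * ∑ i ∈ I, g (φ i) ^ (n + 1)) ^ 2 := by
        gcongr
        have h := pow_sum_div_card_le_sum_pow (s := I) (f := fun i => g (φ i)) (fun i _ => hg _) n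
        rcases I.eq_empty_or_nonempty with rfl | hI
        · simp
        · rwa [div_le_iff₀' (by positivity)] at h
    _ = (#I : ℝ) ^ (2 * n) * (∑ a, (#{j ∈ I | φ j = a} : ℝ) * g a ^ (n + 1)) ^ 2 := by
        rw [hfiber, mul_pow, ← pow_mul, mul_comm n]
    _ ≤ (#I : ℝ) ^ (2 * n) *
        ((∑ a, (#{j ∈ I | φ j = a} : ℝ) ^ 2) * ∑ a, (g a ^ (n + 1)) ^ 2) := by
        gcongr
        exact sum_mul_sq_le_sq_mul_sq _ _ _
    _ = _ := by
        simp only [henergy, ← pow_mul, mul_comm (n + 1) 2, ← mul_assoc, Nat.succ_eq_add_one,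
          Nat.add_sub_cancel]

lemma sum_card_filter_prodMk_eq {A B α : Type*} [DecidableEq α] (I : Finset A) (F : Finset B)
    (f : A → B → α) :
    ∑ i ∈ I ×ˢ (F ×ˢ F), (#{j ∈ I ×ˢ (F ×ˢ F) |
      (f j.1 j.2.1, f j.1 j.2.2) = (f i.1 i.2.1, f i.1 i.2.2)} : ℝ) =
    ∑ x ∈ I, ∑ y ∈ I, (#{q ∈ F ×ˢ F | f x q.1 = f y q.2} : ℝ) ^ 2 := by
  have hcollision (x y : A) : (#{q ∈ F ×ˢ F | f x q.1 = f y q.2} : ℝ) =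
      ∑ a ∈ F, (#{b ∈ F | f x a = f y b} : ℝ) := by
    simp only [card_filter, sum_product, Nat.cast_sum]
  have hpair (x : A) (q : B × B) :
      (#{j ∈ I ×ˢ (F ×ˢ F) | (f j.1 j.2.1, f j.1 j.2.2) = (f x q.1, f x q.2)} : ℝ) =
        ∑ y ∈ I, (#{b ∈ F | f x q.1 = f y b} : ℝ) * #{b ∈ F | f x q.2 = f y b} := by
    rw [card_filter, sum_product, Nat.cast_sum]
    refine sum_congr rfl fun y _ => ?_
    rw [← card_filter, ← Nat.cast_mul, ← card_product, ← filter_product]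
    simp only [Prod.mk.injEq, eq_comm]
  simp_rw [sum_product (s := I), hpair, hcollision, pow_two, sum_mul_sum, sum_product]
  refine sum_congr rfl fun x _ => ?_
  simp_rw [sum_comm (t := I)]

end Hoelder

section FrameMoebius

variable {V R M : ℕ} {X Y : Frame} {q q' : ℚ}

lemma Frame.num_mem_Icc (hX : X ∈ frames V R) (hq : q ∈ fareySet M) :
    X.num q ∈ Icc 1 (2 * R * M : ℤ) := by
  have hbox := (mem_filter.1 hX).1
  simp only [columnBox, mem_product, mem_Icc] at hbox
  obtain ⟨⟨⟨hz₁, hz₁R⟩, -⟩, ⟨hz₂, hz₂R⟩, -⟩ := hbox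
  obtain ⟨hnum, hle, hden⟩ := mem_fareySet_natCast.1 hq
  have : 0 < (q.den : ℤ) := Int.natCast_pos.2 q.den_pos
  have h₁ : X.1.1 * q.den ≤ R * M := by gcongr
  have h₂ : X.2.1 * q.num ≤ R * M := by gcongr; omega
  have h₃ : 0 < X.1.1 * q.den := by positivity
  have h₄ : 0 ≤ X.2.1 * q.num := by positivity
  rw [mem_Icc, Frame.num]
  constructor <;> linarith

lemma Frame.den_mem_Icc (hX : X ∈ frames V R) (hq : q ∈ fareySet M) :
    X.den q ∈ Icc 1 (6 * V * M : ℤ) := by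
  obtain ⟨hbox, ⟨hu, huV, hv, -⟩, -⟩ := mem_filter.1 hX
  simp only [columnBox, mem_product, mem_Icc] at hbox
  obtain ⟨-, -, -, hvV⟩ := hbox
  obtain ⟨hnum, hle, hden⟩ := mem_fareySet_natCast.1 hq
  have : 0 < (q.den : ℤ) := Int.natCast_pos.2 q.den_pos
  have hu₀ : 0 < X.1.2 := by omega
  have hv₀ : 0 ≤ X.2.2 := by omega
  have h₁ : X.1.2 * q.den ≤ 2 * V * M := by gcongr
  have h₂ : X.2.2 * q.num ≤ 4 * V * M := by gcongr; omega
  have h₃ : 0 < X.1.2 * q.den := by positivity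
  have h₄ : 0 ≤ X.2.2 * q.num := by positivity
  rw [mem_Icc, Frame.den]
  constructor <;> linarith

/-- The value in the field `k` of the Möbius transformation of a frame at a rational number. -/
def Frame.moebius (k : Type*) [Field k] (X : Frame) (q : ℚ) : k := X.num q / X.den q

variable {p : ℕ} [Fact p.Prime]

lemma Frame.intCast_den_ne_zero (hp : 6 * V * M < p) (hX : X ∈ frames V R) (hq : q ∈ fareySet M) :
    (X.den q : ZMod p) ≠ 0 := by
  obtain ⟨hpos, hle⟩ := mem_Icc.1 (Frame.den_mem_Icc hX hq)
  rw [Ne, ZMod.intCast_zmod_eq_zero_iff_dvd]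
  intro h
  exact absurd (Int.le_of_dvd hpos h) (by zify at hp; omega)

lemma Frame.num_mul_den_eq_of_moebius_eq (hp : 12 * R * V * M ^ 2 < p) (hX : X ∈ frames V R)
    (hY : Y ∈ frames V R) (hq : q ∈ fareySet M) (hq' : q' ∈ fareySet M)
    (h : X.moebius (ZMod p) q = Y.moebius (ZMod p) q') :
    X.num q * Y.den q' = Y.num q' * X.den q := by
  obtain ⟨hnumX, hnumXle⟩ := mem_Icc.1 (Frame.num_mem_Icc hX hq)
  obtain ⟨hnumY, hnumYle⟩ := mem_Icc.1 (Frame.num_mem_Icc hY hq')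
  obtain ⟨hdenX, hdenXle⟩ := mem_Icc.1 (Frame.den_mem_Icc hX hq)
  obtain ⟨hdenY, hdenYle⟩ := mem_Icc.1 (Frame.den_mem_Icc hY hq')
  have : 1 ≤ 2 * (R * M) := by zify; linarith
  have hp' : 6 * V * M < p := hp.trans_le' (by nlinarith [Nat.zero_le (V * M)])
  have hcast : ((X.num q * Y.den q' : ℤ) : ZMod p) = (Y.num q' * X.den q : ℤ) := by
    push_cast
    exact (div_eq_div_iff (Frame.intCast_den_ne_zero hp' hX hq)
      (Frame.intCast_den_ne_zero hp' hY hq')).1 h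
  rw [ZMod.intCast_eq_intCast_iff_dvd_sub] at hcast
  have hX₀ : 0 < X.num q * Y.den q' := by positivity
  have hY₀ : 0 < Y.num q' * X.den q := by positivity
  have hXle : X.num q * Y.den q' ≤ 2 * R * M * (6 * V * M) := by gcongr
  have hYle : Y.num q' * X.den q ≤ 2 * R * M * (6 * V * M) := by gcongr
  zify at hp
  have hlt : |Y.num q' * X.den q - X.num q * Y.den q'| < p := by
    rw [abs_lt]
    constructor <;> linarith
  exact (sub_eq_zero.1 (Int.eq_zero_of_abs_lt_dvd hcast hlt)).symm

end FrameMoebius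

section MomentBound

open ComplexConjugate

variable {p V M : ℕ} [Fact p.Prime] {F : Finset ℚ} {β τ : ℝ}

theorem sum_norm_sum_mulChar_moebius_pow_le {χ : MulChar (ZMod p) ℂ} (hχ : χ ≠ 1)
    (T : Finset (ZMod p)) {n : ℕ} (hn : 0 < n) (hp : 1156 * M ^ 3 * V < p) (hV : 0 < V)
    (hVM : V ≤ M) (hτ : ∀ n ≤ p, (#n.divisors : ℝ) ≤ τ) (hlog : 1 + Real.log p ≤ τ)
    (hF : F ⊆ fareySet M) (hβ₁ : 1 ≤ β) (hβ : ∀ q ∈ F, (M : ℝ) ≤ β * q.den) :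
    (∑ X ∈ frames V (17 * M), ∑ a ∈ F, ∑ b ∈ F,
      ‖∑ t ∈ T, χ (-X.moebius (ZMod p) a + t) * conj (χ (-X.moebius (ZMod p) b + t))‖) ^ (2 * n) ≤
    (16 * V ^ 2 * (17 * M) ^ 2 * (#F : ℝ) ^ 2) ^ (2 * (n - 1)) *
      (2 * 10 ^ 8 * τ ^ 7 * β ^ 4 * V ^ 2 * M ^ 6) *
      ((#T : ℝ) ^ n * n ^ (2 * n) * p ^ 2 + (2 * n) ^ 2 * p * (#T : ℝ) ^ (2 * n)) := by
  have hp' : 12 * (17 * M) * V * M ^ 2 < p := hp.trans_le' (by nlinarith [Nat.zero_le (M ^ 3 * V)])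
  have hcollisions : ∑ X ∈ frames V (17 * M), ∑ Y ∈ frames V (17 * M),
      (#{q ∈ F ×ˢ F | -X.moebius (ZMod p) q.1 = -Y.moebius (ZMod p) q.2} : ℝ) ^ 2 ≤
        2 * 10 ^ 8 * τ ^ 7 * β ^ 4 * V ^ 2 * M ^ 6 := by
    refine le_trans ?_ (sum_sum_sq_card_filter_num_mul_den_eq_le hp.le hV hVM hτ hlog hF hβ₁ hβ)
    refine sum_le_sum fun X hX => sum_le_sum fun Y hY => ?_
    gcongr 2
    refine card_le_card fun q hq => ?_
    obtain ⟨hqF, hmoebius⟩ := mem_filter.1 hq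
    exact mem_filter.2 ⟨hqF, Frame.num_mul_den_eq_of_moebius_eq hp' hX hY (hF (mem_product.1 hqF).1)
      (hF (mem_product.1 hqF).2) (neg_injective hmoebius)⟩
  have hcard : (#(frames V (17 * M) ×ˢ (F ×ˢ F)) : ℝ) ≤
      16 * V ^ 2 * (17 * M) ^ 2 * (#F : ℝ) ^ 2 := by
    have hframes : (#(frames V (17 * M)) : ℝ) ≤ 16 * V ^ 2 * (17 * M) ^ 2 :=
      mod_cast card_frames_le V (17 * M)
    rw [card_product, card_product, Nat.cast_mul, Nat.cast_mul, ← pow_two]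
    gcongr
  have hhoelder := sum_comp_pow_two_mul_le (frames V (17 * M) ×ˢ (F ×ˢ F))
    (fun i => (-i.1.moebius (ZMod p) i.2.1, -i.1.moebius (ZMod p) i.2.2))
    (g := fun x => ‖∑ t ∈ T, χ (x.1 + t) * conj (χ (x.2 + t))‖) (fun _ => norm_nonneg _) hn.ne'
  rw [sum_card_filter_prodMk_eq _ _ fun X a => -Frame.moebius (ZMod p) X a, sum_product,
    Fintype.sum_prod_type] at hhoelder
  simp_rw [sum_product (s := F)] at hhoelder
  have hmoment := sum_sum_norm_sum_mulChar_pow_le hχ T hn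
  rw [ZMod.card] at hmoment
  have hτ₀ : 0 ≤ τ := (by positivity : 0 ≤ 1 + Real.log p).trans hlog
  exact hhoelder.trans (by gcongr)

end MomentBound

section Translations

open ComplexConjugate

lemma sum_norm_sq_sum_mul_le {ι α : Type*} (T : Finset α) (F : Finset ι) {e : ι → ℂ}
    (he : ∀ a ∈ F, ‖e a‖ ≤ 1) (f : ι → α → ℂ) :
    ∑ t ∈ T, ‖∑ a ∈ F, e a * f a t‖ ^ 2 ≤
      ∑ a ∈ F, ∑ b ∈ F, ‖∑ t ∈ T, f a t * conj (f b t)‖ := by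
  have hexpand : ((∑ t ∈ T, ‖∑ a ∈ F, e a * f a t‖ ^ 2 : ℝ) : ℂ) =
      ∑ a ∈ F, ∑ b ∈ F, e a * conj (e b) * ∑ t ∈ T, f a t * conj (f b t) := by
    push_cast
    simp_rw [← Complex.mul_conj', map_sum, sum_mul_sum, mul_sum]
    rw [sum_comm]
    refine sum_congr rfl fun a _ => ?_
    rw [sum_comm]
    refine sum_congr rfl fun b _ => sum_congr rfl fun t _ => ?_
    rw [map_mul]
    ring
  rw [← Real.norm_of_nonneg (sum_nonneg fun t _ => sq_nonneg ‖∑ a ∈ F, e a * f a t‖),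
    ← Complex.norm_real, hexpand]
  refine (norm_sum_le _ _).trans (sum_le_sum fun a ha => ?_)
  refine (norm_sum_le _ _).trans (sum_le_sum fun b hb => ?_)
  rw [norm_mul, norm_mul, RCLike.norm_conj]
  exact mul_le_of_le_one_left (norm_nonneg _) (mul_le_one₀ (he a ha) (norm_nonneg _) (he b hb))

lemma le_card_divisors_mul_totient (n : ℕ) : n ≤ #n.divisors * n.totient := by
  conv_lhs => rw [← Nat.sum_totient n]
  rw [← smul_eq_mul, ← sum_const]
  refine sum_le_sum fun d hd => ?_
  obtain ⟨hdvd, hn⟩ := Nat.mem_divisors.1 hd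
  exact Nat.le_of_dvd (Nat.totient_pos.2 (Nat.pos_of_ne_zero hn)) (Nat.totient_dvd_of_dvd hdvd)

/-- The pairs of denominators `(u, v)` of the frames in `frames V R`. -/
def coprimePairs (V : ℕ) : Finset (ℕ × ℕ) :=
  {w ∈ Ioc V (2 * V) ×ˢ Ico (2 * V) (4 * V) | w.2 < 2 * V + w.1 ∧ w.1.Coprime w.2}

lemma card_coprimePairs (V : ℕ) : #(coprimePairs V) = ∑ u ∈ Ioc V (2 * V), u.totient := by
  rw [coprimePairs, card_filter, sum_product]
  refine sum_congr rfl fun u hu => ?_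
  rw [mem_Ioc] at hu
  rw [← card_filter, ← Nat.filter_coprime_Ico_eq_totient u (2 * V)]
  congr 1
  ext v
  simp only [mem_filter, mem_Ico]
  omega

lemma sq_le_mul_card_coprimePairs {V : ℕ} {τ : ℝ}
    (hτ : ∀ n ≤ 2 * V, (#n.divisors : ℝ) ≤ τ) : (V : ℝ) ^ 2 ≤ τ * #(coprimePairs V) := by
  calc (V : ℝ) ^ 2 = ∑ _ ∈ Ioc V (2 * V), (V : ℝ) := by
        rw [sum_const, Nat.card_Ioc, two_mul, Nat.add_sub_cancel, nsmul_eq_mul, pow_two]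
    _ ≤ ∑ u ∈ Ioc V (2 * V), τ * u.totient := sum_le_sum fun u hu => ?_
    _ = τ * #(coprimePairs V) := by rw [card_coprimePairs, ← mul_sum, Nat.cast_sum]
  obtain ⟨hu, hu'⟩ := mem_Ioc.1 hu
  calc (V : ℝ) ≤ u := by exact_mod_cast hu.le
    _ ≤ #u.divisors * u.totient := by exact_mod_cast le_card_divisors_mul_totient u
    _ ≤ τ * u.totient := by gcongr; exact hτ u hu'

/-- The frame with denominators `w` and determinant `-(w.1 * r.den + w.2 * r.num)` whose Möbius
transformation takes the value `t` at `r`. -/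
def translateFrame (t : ℕ) (w : ℕ × ℕ) (r : ℚ) : Frame :=
  ((t * w.1 - r.num, w.1), (t * w.2 + r.den, w.2))

lemma mul_den_sub_num_translateFrame (t : ℕ) (w : ℕ × ℕ) (r a : ℚ) :
    t * (translateFrame t w r).den a - (translateFrame t w r).num a = crossDiff r a := by
  simp only [Frame.den, Frame.num, translateFrame, crossDiff]
  ring

lemma translateFrame_injective (t : ℕ) :
    Function.Injective fun i : (ℕ × ℕ) × ℚ => translateFrame t i.1 i.2 := by
  rintro ⟨⟨u, v⟩, r⟩ ⟨⟨u', v'⟩, r'⟩ h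
  simp only [translateFrame, Prod.mk.injEq, Nat.cast_inj] at h
  obtain ⟨⟨hnum, rfl⟩, hden, rfl⟩ := h
  rw [Rat.ext (sub_right_injective hnum) (by exact_mod_cast add_left_cancel hden)]

variable {V M t : ℕ} {F : Finset ℚ}

lemma translateFrame_mem_frames {w : ℕ × ℕ} {r : ℚ} (hMt : M < t * V) (htM : t * V ≤ 4 * M)
    (hw : w ∈ coprimePairs V) (hr : r ∈ fareySet M) :
    translateFrame t w r ∈ frames V (17 * M) := by
  simp only [coprimePairs, mem_filter, mem_product, mem_Ioc, mem_Ico] at hw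
  obtain ⟨⟨⟨hu, huV⟩, hv, hvV⟩, hvu, hcop⟩ := hw
  obtain ⟨hnum, hle, hden⟩ := mem_fareySet_natCast.1 hr
  have hden₀ : 0 < r.den := r.den_pos
  have htu : M < t * w.1 := hMt.trans_le (Nat.mul_le_mul_left t hu.le)
  have htu' : t * w.1 ≤ 8 * M := (Nat.mul_le_mul_left t huV).trans (by linarith)
  have htv : t * w.2 ≤ 16 * M := (Nat.mul_le_mul_left t hvV.le).trans (by linarith)
  have hcross : 0 < (w.1 * r.den + w.2 * r.num : ℤ) := by
    have : (0 : ℤ) < w.1 * r.den := by norm_cast; exact Nat.mul_pos (by omega) hden₀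
    positivity
  zify at hden hden₀ htu htu' htv
  have htv₀ : (0 : ℤ) ≤ t * w.2 := by positivity
  rw [frames, mem_filter]
  refine ⟨?_, by simp only [translateFrame]; omega, Nat.isCoprime_iff_coprime.2 hcop, ?_⟩
  · simp only [columnBox, translateFrame, mem_product, mem_Icc]
    push_cast
    refine ⟨⟨⟨?_, ?_⟩, ?_, ?_⟩, ⟨?_, ?_⟩, ?_, ?_⟩ <;> omega
  · refine hcross.trans_eq ?_
    simp only [crossProd, translateFrame]
    ring

lemma card_coprimePairs_mul_sum_crossDiff_le (hMt : M < t * V) (htM : t * V ≤ 4 * M)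
    (hF : F ⊆ fareySet M) {φ : (ℚ → ℤ) → ℝ} (hφ : ∀ f, 0 ≤ φ f) :
    #(coprimePairs V) * ∑ r ∈ F, φ (crossDiff r) ≤
      ∑ X ∈ frames V (17 * M), φ fun a => t * X.den a - X.num a := by
  calc #(coprimePairs V) * ∑ r ∈ F, φ (crossDiff r)
      = ∑ i ∈ coprimePairs V ×ˢ F, φ fun a =>
          t * (translateFrame t i.1 i.2).den a - (translateFrame t i.1 i.2).num a := by
        simp only [mul_den_sub_num_translateFrame, sum_product, sum_const, nsmul_eq_mul]
    _ = ∑ X ∈ (coprimePairs V ×ˢ F).image fun i => translateFrame t i.1 i.2,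
          φ fun a => t * X.den a - X.num a := by rw [sum_image (translateFrame_injective t).injOn]
    _ ≤ _ := by
        refine sum_le_sum_of_subset_of_nonneg (image_subset_iff.2 fun i hi => ?_) fun _ _ _ => hφ _
        obtain ⟨hw, hr⟩ := mem_product.1 hi
        exact translateFrame_mem_frames hMt htM hw (hF hr)

lemma sum_norm_sq_sum_mulChar_mul_den_sub_num_le {k : Type*} [Field k] [Finite k]
    (χ : MulChar k ℂ) (T : Finset k) {X : Frame} (hX : ∀ a ∈ F, (X.den a : k) ≠ 0) {e : ℚ → ℂ}
    (he : ∀ a ∈ F, ‖e a‖ ≤ 1) :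
    ∑ t ∈ T, ‖∑ a ∈ F, e a * χ (t * X.den a - X.num a)‖ ^ 2 ≤
      ∑ a ∈ F, ∑ b ∈ F, ‖∑ t ∈ T, χ (-X.moebius k a + t) * conj (χ (-X.moebius k b + t))‖ := by
  have hfactor (t : k) : ∑ a ∈ F, e a * χ (t * X.den a - X.num a) =
      ∑ a ∈ F, e a * χ (X.den a) * χ (-X.moebius k a + t) := by
    refine sum_congr rfl fun a ha => ?_
    have : (X.den a : k) ≠ 0 := hX a ha
    rw [mul_assoc, ← map_mul, Frame.moebius]
    congr 2
    field_simp
    ring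
  simp_rw [hfactor]
  refine sum_norm_sq_sum_mul_le T F (fun a ha => ?_) fun a t => χ (-X.moebius k a + t)
  rw [norm_mul]
  exact mul_le_one₀ (he a ha) (norm_nonneg _) (norm_mulChar_apply_le_one χ _)

theorem card_mul_card_mul_sum_norm_sq_le {p : ℕ} [Fact p.Prime] (χ : MulChar (ZMod p) ℂ)
    {T : Finset (ZMod p)} (hT : ∀ t ∈ T, M < t.val * V ∧ t.val * V ≤ 4 * M) (hp : 6 * V * M < p)
    {F' : Finset ℚ} (hF : F ⊆ fareySet M) (hF' : F' ⊆ fareySet M) {e : ℚ → ℂ}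
    (he : ∀ a ∈ F', ‖e a‖ ≤ 1) :
    #T * (#(coprimePairs V) * ∑ r ∈ F, ‖∑ a ∈ F', e a * χ (crossDiff r a)‖ ^ 2) ≤
      ∑ X ∈ frames V (17 * M), ∑ a ∈ F', ∑ b ∈ F',
        ‖∑ t ∈ T, χ (-X.moebius (ZMod p) a + t) * conj (χ (-X.moebius (ZMod p) b + t))‖ := by
  rw [← nsmul_eq_mul, ← sum_const]
  calc _ ≤ ∑ t ∈ T, ∑ X ∈ frames V (17 * M),
        ‖∑ a ∈ F', e a * χ (t * X.den a - X.num a)‖ ^ 2 := sum_le_sum fun t ht => ?_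
    _ = ∑ X ∈ frames V (17 * M), ∑ t ∈ T,
          ‖∑ a ∈ F', e a * χ (t * X.den a - X.num a)‖ ^ 2 := sum_comm
    _ ≤ _ := sum_le_sum fun X hX => sum_norm_sq_sum_mulChar_mul_den_sub_num_le χ T
        (fun a ha => Frame.intCast_den_ne_zero hp hX (hF' ha)) he
  have hshift := card_coprimePairs_mul_sum_crossDiff_le (hT t ht).1 (hT t ht).2 hF
    (φ := fun f => ‖∑ a ∈ F', e a * χ (f a)‖ ^ 2) fun _ => by positivity
  simpa using hshift

end Translations

section LargeSieve

open ComplexConjugate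

variable {k : Type*} [Field k] [Fintype k] {χ : MulChar k ℂ}

lemma norm_sum_mulChar_sub_mul_conj_le_one (hχ : χ ≠ 1) {a b : k} (hab : a ≠ b) :
    ‖∑ x, χ (x - a) * conj (χ (x - b))‖ ≤ 1 := by
  have hba : b - a ≠ 0 := sub_ne_zero.2 hab.symm
  have hjacobi : ∑ x, χ (x - a) * conj (χ (x - b)) = χ⁻¹ (-1) * jacobiSum χ χ⁻¹ := by
    rw [jacobiSum, mul_sum]
    refine (Fintype.sum_equiv ((Equiv.mulLeft₀ (b - a) hba).trans (Equiv.addRight a)) _ _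
      fun y => ?_).symm
    have hx : (Equiv.mulLeft₀ (b - a) hba).trans (Equiv.addRight a) y = (b - a) * y + a := rfl
    have hinv : χ (b - a) * χ⁻¹ (b - a) = 1 := by
      rw [MulChar.inv_apply', ← map_mul, mul_inv_cancel₀ hba, map_one]
    rw [starRingEnd_apply, MulChar.star_apply', hx, add_sub_cancel_right,
      show (b - a) * y + a - b = (b - a) * -1 * (1 - y) by ring, map_mul, map_mul, map_mul]
    linear_combination -χ y * χ⁻¹ (-1) * χ⁻¹ (1 - y) * hinv
  rw [hjacobi, jacobiSum_nontrivial_inv hχ, norm_mul, norm_neg]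
  exact mul_le_one₀ (norm_mulChar_apply_le_one _ _) (norm_nonneg _) (norm_mulChar_apply_le_one _ _)

variable {ι κ : Type*} {F : Finset ι} {G : Finset κ} {x : ι → k} {y : κ → k}

lemma sum_norm_sq_sum_mulChar_sub_le (hχ : χ ≠ 1) (hy : Set.InjOn y G) {e : κ → ℂ}
    (he : ∀ b ∈ G, ‖e b‖ ≤ 1) :
    ∑ z, ‖∑ b ∈ G, e b * χ (z - y b)‖ ^ 2 ≤ Fintype.card k * #G + (#G : ℝ) ^ 2 := by
  classical
  calc ∑ z, ‖∑ b ∈ G, e b * χ (z - y b)‖ ^ 2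
      ≤ ∑ b ∈ G, ∑ c ∈ G, ‖∑ z, χ (z - y b) * conj (χ (z - y c))‖ :=
        sum_norm_sq_sum_mul_le univ G he fun b z => χ (z - y b)
    _ ≤ ∑ b ∈ G, ∑ c ∈ G, ((if b = c then (Fintype.card k : ℝ) else 0) + 1) :=
        sum_le_sum fun b hb => sum_le_sum fun c hc => ?_
    _ = Fintype.card k * #G + (#G : ℝ) ^ 2 := by
        simp only [sum_add_distrib, sum_ite_eq, sum_ite_mem, inter_self, sum_const,
          nsmul_eq_mul, mul_one]
        ring
  split_ifs with hbc
  · refine (norm_sum_le_of_le univ fun z _ => (norm_mul_le_of_le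
      (norm_mulChar_apply_le_one χ _) ((RCLike.norm_conj _).le.trans
        (norm_mulChar_apply_le_one χ _)))).trans ?_
    simp
  · rw [zero_add]
    exact norm_sum_mulChar_sub_mul_conj_le_one hχ (hy.ne hb hc hbc)

theorem norm_sum_sum_mulChar_sub_sq_le (hχ : χ ≠ 1) (hx : Set.InjOn x F) (hy : Set.InjOn y G)
    {d : ι → ℂ} {e : κ → ℂ} (hd : ∀ a ∈ F, ‖d a‖ ≤ 1) (he : ∀ b ∈ G, ‖e b‖ ≤ 1) :
    ‖∑ a ∈ F, ∑ b ∈ G, d a * e b * χ (x a - y b)‖ ^ 2 ≤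
      #F * (Fintype.card k * #G + (#G : ℝ) ^ 2) := by
  classical
  have hpull : ‖∑ a ∈ F, ∑ b ∈ G, d a * e b * χ (x a - y b)‖ ≤
      ∑ a ∈ F, ‖∑ b ∈ G, e b * χ (x a - y b)‖ := by
    refine norm_sum_le_of_le F fun a ha => ?_
    simp_rw [mul_assoc]
    rw [← mul_sum, norm_mul]
    exact mul_le_of_le_one_left (norm_nonneg _) (hd a ha)
  calc ‖∑ a ∈ F, ∑ b ∈ G, d a * e b * χ (x a - y b)‖ ^ 2
      ≤ (∑ a ∈ F, ‖∑ b ∈ G, e b * χ (x a - y b)‖) ^ 2 := by gcongr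
    _ ≤ #F * ∑ a ∈ F, ‖∑ b ∈ G, e b * χ (x a - y b)‖ ^ 2 := sq_sum_le_card_mul_sum_sq
    _ = #F * ∑ z ∈ F.image x, ‖∑ b ∈ G, e b * χ (z - y b)‖ ^ 2 := by rw [sum_image hx]
    _ ≤ #F * ∑ z, ‖∑ b ∈ G, e b * χ (z - y b)‖ ^ 2 := by
        gcongr
        exact subset_univ _
    _ ≤ _ := by
        gcongr
        exact sum_norm_sq_sum_mulChar_sub_le hχ hy he

end LargeSieve

section FareyEmbedding

variable {p M : ℕ} {x y : ℚ}

lemma fareySet_floor (R : ℝ) : fareySet ⌊R⌋₊ = fareySet R := by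
  rw [fareySet, fareySet, Nat.floor_natCast]

lemma card_fareySet_le {R : ℝ} (hR : 0 ≤ R) : (#(fareySet R) : ℝ) ≤ 2 * R ^ 2 := by
  have hcard : #(fareySet R) ≤ 2 * ⌊R⌋₊ ^ 2 := by
    refine (card_image_le.trans (card_filter_le _ _)).trans ?_
    rw [card_product, Nat.card_Icc, Nat.card_Icc, Nat.sub_zero, Nat.add_sub_cancel]
    nlinarith [Nat.le_self_pow two_ne_zero ⌊R⌋₊]
  calc (#(fareySet R) : ℝ) ≤ 2 * (⌊R⌋₊ : ℝ) ^ 2 := by exact_mod_cast hcard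
    _ ≤ 2 * R ^ 2 := by gcongr; exact Nat.floor_le hR

lemma norm_sum_sum_mulChar_le_card_mul_card {A ι κ : Type*} [CommRing A] [Finite A]
    (χ : MulChar A ℂ) {F : Finset ι} {G : Finset κ} {d : ι → ℂ} {e : κ → ℂ}
    (hd : ∀ a ∈ F, ‖d a‖ ≤ 1) (he : ∀ b ∈ G, ‖e b‖ ≤ 1) (z : ι → κ → A) :
    ‖∑ a ∈ F, ∑ b ∈ G, d a * e b * χ (z a b)‖ ≤ #F * #G := by
  refine (norm_sum_le_of_le F fun a ha => norm_sum_le_of_le G fun b hb => ?_).trans_eq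
    (?_ : ∑ _ ∈ F, ∑ _ ∈ G, (1 : ℝ) = _)
  · rw [norm_mul, norm_mul]
    exact mul_le_one₀ (mul_le_one₀ (hd a ha) (norm_nonneg _) (he b hb)) (norm_nonneg _)
      (norm_mulChar_apply_le_one χ _)
  · simp

variable [Fact p.Prime]

lemma natCast_den_ne_zero (hx : x ∈ fareySet M) (hM : M < p) : (x.den : ZMod p) ≠ 0 := by
  rw [Ne, ZMod.natCast_eq_zero_iff]
  exact Nat.not_dvd_of_pos_of_lt x.den_pos ((mem_fareySet_natCast.1 hx).2.2.trans_lt hM)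

lemma fareyEmb_sub_fareyEmb (hM : M < p) (hx : x ∈ fareySet M) (hy : y ∈ fareySet M) :
    fareyEmb p x - fareyEmb p y = (x.den : ZMod p)⁻¹ * (y.den : ZMod p)⁻¹ * crossDiff x y := by
  have : (x.den : ZMod p) ≠ 0 := natCast_den_ne_zero hx hM
  have : (y.den : ZMod p) ≠ 0 := natCast_den_ne_zero hy hM
  simp only [fareyEmb, crossDiff]
  push_cast
  field_simp

lemma injOn_fareyEmb (hM : M ^ 2 < p) : Set.InjOn (fareyEmb p) (fareySet M) := by
  intro x hx y hy hxy
  have hMp : M < p := (Nat.le_self_pow two_ne_zero M).trans_lt hM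
  have hzero : (crossDiff x y : ZMod p) = 0 := by
    have h := fareyEmb_sub_fareyEmb hMp hx hy
    rw [hxy, sub_self, zero_eq_mul] at h
    exact h.resolve_left (mul_ne_zero (inv_ne_zero (natCast_den_ne_zero hx hMp))
      (inv_ne_zero (natCast_den_ne_zero hy hMp)))
  refine crossDiff_eq_zero.1
    (Int.eq_zero_of_abs_lt_dvd ((ZMod.intCast_zmod_eq_zero_iff_dvd _ _).1 hzero) ?_)
  exact_mod_cast (abs_crossDiff_le hx hy).trans_lt (by exact_mod_cast hM : (M : ℝ) ^ 2 < p)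

theorem norm_sum_sum_mulChar_fareyEmb_sub_le_sqrt {χ : MulChar (ZMod p) ℂ} (hχ : χ ≠ 1)
    (hM : M ^ 2 < p) {ξ ζ : ℚ → ℂ} (hξ : ∀ x, ‖ξ x‖ ≤ 1) (hζ : ∀ x, ‖ζ x‖ ≤ 1) :
    ‖∑ x ∈ fareySet M, ∑ y ∈ fareySet M, ξ x * ζ y * χ (fareyEmb p x - fareyEmb p y)‖ ≤
      4 * √p * M ^ 2 := by
  have hcard := card_fareySet_le M.cast_nonneg
  have hMp : (M : ℝ) ^ 2 ≤ p := by exact_mod_cast hM.le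
  have hsq := norm_sum_sum_mulChar_sub_sq_le hχ (injOn_fareyEmb hM) (injOn_fareyEmb hM)
    (fun x _ => hξ x) fun x _ => hζ x
  rw [ZMod.card] at hsq
  refine le_of_sq_le_sq (hsq.trans ?_) (by positivity)
  calc #(fareySet M) * (p * #(fareySet M) + (#(fareySet M) : ℝ) ^ 2)
      = (#(fareySet M) : ℝ) ^ 2 * (p + #(fareySet M)) := by ring
    _ ≤ (2 * M ^ 2 : ℝ) ^ 2 * (p + 2 * p) := by gcongr; linarith
    _ ≤ 16 * M ^ 4 * p := by nlinarith [show (0 : ℝ) ≤ M ^ 4 * p by positivity]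
    _ = (4 * √p * M ^ 2) ^ 2 := by rw [mul_pow, mul_pow, Real.sq_sqrt p.cast_nonneg]; ring

end FareyEmbedding

section Amplification

open ComplexConjugate

variable {p V M n : ℕ} [Fact p.Prime] {χ : MulChar (ZMod p) ℂ} {T : Finset (ZMod p)}
  {F F' : Finset ℚ} {ξ ζ : ℚ → ℂ} {β τ : ℝ}

lemma norm_sum_sum_mulChar_fareyEmb_sub_sq_le (χ : MulChar (ZMod p) ℂ) (hM : M < p)
    (hF : F ⊆ fareySet M) (hF' : F' ⊆ fareySet M) (hξ : ∀ x, ‖ξ x‖ ≤ 1) :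
    ‖∑ x ∈ F, ∑ y ∈ F', ξ x * ζ y * χ (fareyEmb p x - fareyEmb p y)‖ ^ 2 ≤
      #F * ∑ x ∈ F, ‖∑ y ∈ F', ζ y * χ (y.den : ZMod p)⁻¹ * χ (crossDiff x y)‖ ^ 2 := by
  have hpull : ‖∑ x ∈ F, ∑ y ∈ F', ξ x * ζ y * χ (fareyEmb p x - fareyEmb p y)‖ ≤
      ∑ x ∈ F, ‖∑ y ∈ F', ζ y * χ (y.den : ZMod p)⁻¹ * χ (crossDiff x y)‖ := by
    refine norm_sum_le_of_le F fun x hx => ?_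
    have hfactor : ∑ y ∈ F', ξ x * ζ y * χ (fareyEmb p x - fareyEmb p y) =
        ξ x * χ (x.den : ZMod p)⁻¹ *
          ∑ y ∈ F', ζ y * χ (y.den : ZMod p)⁻¹ * χ (crossDiff x y) := by
      rw [mul_sum]
      refine sum_congr rfl fun y hy => ?_
      rw [fareyEmb_sub_fareyEmb hM (hF hx) (hF' hy), map_mul, map_mul]
      ring
    rw [hfactor, norm_mul, norm_mul]
    exact mul_le_of_le_one_left (norm_nonneg _)
      (mul_le_one₀ (hξ x) (norm_nonneg _) (norm_mulChar_apply_le_one χ _))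
  calc _ ≤ (∑ x ∈ F, ‖∑ y ∈ F', ζ y * χ (y.den : ZMod p)⁻¹ * χ (crossDiff x y)‖) ^ 2 := by gcongr
    _ ≤ _ := sq_sum_le_card_mul_sum_sq

lemma card_mul_sq_mul_norm_sum_sum_sq_le (χ : MulChar (ZMod p) ℂ)
    (hT : ∀ t ∈ T, M < t.val * V ∧ t.val * V ≤ 4 * M) (hp : 6 * V * M < p) (hV : 0 < V)
    (hVM : V ≤ M) (hτ : ∀ n ≤ p, (#n.divisors : ℝ) ≤ τ) (hF : F ⊆ fareySet M)
    (hF' : F' ⊆ fareySet M) (hξ : ∀ x, ‖ξ x‖ ≤ 1) (hζ : ∀ x, ‖ζ x‖ ≤ 1) :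
    #T * V ^ 2 * ‖∑ x ∈ F, ∑ y ∈ F', ξ x * ζ y * χ (fareyEmb p x - fareyEmb p y)‖ ^ 2 ≤
      2 * M ^ 2 * τ * ∑ X ∈ frames V (17 * M), ∑ a ∈ F', ∑ b ∈ F',
        ‖∑ t ∈ T, χ (-X.moebius (ZMod p) a + t) * conj (χ (-X.moebius (ZMod p) b + t))‖ := by
  have hMp : M < p := by nlinarith
  have hVp : 2 * V ≤ p := by linarith [Nat.le_mul_of_pos_left M hV]
  have hcard : (#F : ℝ) ≤ 2 * M ^ 2 :=
    (Nat.cast_le.2 (card_le_card hF)).trans (card_fareySet_le M.cast_nonneg)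
  have hpairs := sq_le_mul_card_coprimePairs fun n hn => hτ n (hn.trans hVp)
  have hτ₀ : 0 ≤ τ := by simpa using hτ 0 p.zero_le
  set S := ∑ x ∈ F, ‖∑ y ∈ F', ζ y * χ (y.den : ZMod p)⁻¹ * χ (crossDiff x y)‖ ^ 2 with hS
  have hS₀ : 0 ≤ S := sum_nonneg fun _ _ => by positivity
  calc _ ≤ #T * (τ * #(coprimePairs V)) * (#F * S) := by
        gcongr
        exact norm_sum_sum_mulChar_fareyEmb_sub_sq_le χ hMp hF hF' hξ
    _ ≤ #T * (τ * #(coprimePairs V)) * (2 * M ^ 2 * S) := by gcongr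
    _ = 2 * M ^ 2 * τ * (#T * (#(coprimePairs V) * S)) := by ring
    _ ≤ _ := by
        gcongr
        refine card_mul_card_mul_sum_norm_sq_le χ hT hp hF hF' fun y _ => ?_
        rw [norm_mul]
        exact mul_le_one₀ (hζ y) (norm_nonneg _) (norm_mulChar_apply_le_one χ _)

lemma pow_mul_pow_mul_sq_add_le {t q : ℝ} (hn : 0 < n) (hq : 0 ≤ q) (h : q ≤ t ^ n) :
    t ^ n * n ^ (2 * n) * q ^ 2 + (2 * n) ^ 2 * q * t ^ (2 * n) ≤ 5 * (n * t) ^ (2 * n) * q := by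
  have hn₁ : (1 : ℝ) ≤ n := by exact_mod_cast hn
  have hn₂ : (n : ℝ) ^ 2 ≤ n ^ (2 * n) := pow_le_pow_right₀ hn₁ (by omega)
  have ht : t ^ (2 * n) = t ^ n * t ^ n := by rw [two_mul, pow_add]
  have htn : 0 ≤ t ^ n := hq.trans h
  calc t ^ n * n ^ (2 * n) * q ^ 2 + (2 * n) ^ 2 * q * t ^ (2 * n)
      = t ^ n * n ^ (2 * n) * q * q + 4 * n ^ 2 * q * (t ^ n * t ^ n) := by rw [ht]; ring
    _ ≤ t ^ n * n ^ (2 * n) * q * t ^ n + 4 * n ^ (2 * n) * q * (t ^ n * t ^ n) := by gcongr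
    _ = 5 * (n * t) ^ (2 * n) * q := by rw [mul_pow, ht]; ring

lemma sum_norm_sum_mulChar_moebius_pow_mul_le (hχ : χ ≠ 1) (hn : 0 < n)
    (hp : 1156 * M ^ 3 * V < p) (hV : 0 < V) (hVM : V ≤ M) (hpT : p ≤ #T ^ n)
    (hτ : ∀ n ≤ p, (#n.divisors : ℝ) ≤ τ) (hlog : 1 + Real.log p ≤ τ) (hF : F ⊆ fareySet M)
    (hβ₁ : 1 ≤ β) (hβ : ∀ q ∈ F, (M : ℝ) ≤ β * q.den) :
    (∑ X ∈ frames V (17 * M), ∑ a ∈ F, ∑ b ∈ F,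
      ‖∑ t ∈ T, χ (-X.moebius (ZMod p) a + t) * conj (χ (-X.moebius (ZMod p) b + t))‖) ^ (2 * n) *
        (V ^ 2 * M ^ 6) ≤
    (18496 * (V ^ 2 * M ^ 6) * (n * #T)) ^ (2 * n) * (10 ^ 9 * τ ^ 7 * β ^ 4 * p) := by
  have hmoment := sum_norm_sum_mulChar_moebius_pow_le hχ T hn hp hV hVM hτ hlog hF hβ₁ hβ
  set Z := ∑ X ∈ frames V (17 * M), ∑ a ∈ F, ∑ b ∈ F,
    ‖∑ t ∈ T, χ (-X.moebius (ZMod p) a + t) * conj (χ (-X.moebius (ZMod p) b + t))‖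
  set W : ℝ := V ^ 2 * M ^ 6
  have hτ₀ : 0 ≤ τ := (by positivity : 0 ≤ 1 + Real.log p).trans hlog
  have hcard : (#F : ℝ) ≤ 2 * M ^ 2 :=
    (Nat.cast_le.2 (card_le_card hF)).trans (card_fareySet_le M.cast_nonneg)
  have htriples : 16 * V ^ 2 * (17 * M) ^ 2 * (#F : ℝ) ^ 2 ≤ 18496 * W :=
    calc 16 * V ^ 2 * (17 * M) ^ 2 * (#F : ℝ) ^ 2
        ≤ 16 * V ^ 2 * (17 * M) ^ 2 * (2 * M ^ 2) ^ 2 := by gcongr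
      _ = 18496 * W := by ring
  have hpow : (18496 * W) ^ (2 * n) = (18496 * W) ^ (2 * (n - 1)) * (18496 * W) ^ 2 := by
    rw [← pow_add]
    congr 1
    omega
  calc Z ^ (2 * n) * W
      ≤ (18496 * W) ^ (2 * (n - 1)) * (2 * 10 ^ 8 * τ ^ 7 * β ^ 4 * V ^ 2 * M ^ 6) *
          (5 * (n * #T) ^ (2 * n) * p) * W := by
        gcongr
        refine hmoment.trans ?_
        gcongr
        exact pow_mul_pow_mul_sq_add_le hn p.cast_nonneg (by exact_mod_cast hpT)
    _ = (18496 * W) ^ (2 * (n - 1)) * W ^ 2 * (n * #T) ^ (2 * n) *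
          (10 ^ 9 * τ ^ 7 * β ^ 4 * p) := by ring
    _ ≤ (18496 * W) ^ (2 * (n - 1)) * (18496 * W) ^ 2 * (n * #T) ^ (2 * n) *
          (10 ^ 9 * τ ^ 7 * β ^ 4 * p) := by
        have : W ≤ 18496 * W := le_mul_of_one_le_left (by positivity) (by norm_num)
        gcongr
    _ = _ := by rw [← hpow, ← mul_pow]

theorem norm_sum_sum_mulChar_fareyEmb_sub_pow_mul_le (hχ : χ ≠ 1) (hn : 0 < n)
    (hp : 1156 * M ^ 3 * V < p) (hV : 0 < V) (hVM : V ≤ M) (hpT : p ≤ #T ^ n)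
    (hT : ∀ t ∈ T, M < t.val * V ∧ t.val * V ≤ 4 * M)
    (hτ : ∀ n ≤ p, (#n.divisors : ℝ) ≤ τ) (hlog : 1 + Real.log p ≤ τ) (hF : F ⊆ fareySet M)
    (hF' : F' ⊆ fareySet M) (hβ₁ : 1 ≤ β) (hβ : ∀ q ∈ F', (M : ℝ) ≤ β * q.den)
    (hξ : ∀ x, ‖ξ x‖ ≤ 1) (hζ : ∀ x, ‖ζ x‖ ≤ 1) :
    ‖∑ x ∈ F, ∑ y ∈ F', ξ x * ζ y * χ (fareyEmb p x - fareyEmb p y)‖ ^ (4 * n) *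
        (V ^ 2 * M ^ 6) ≤
      (36992 * n * τ * M ^ 8) ^ (2 * n) * (10 ^ 9 * τ ^ 7 * β ^ 4 * p) := by
  have hMV : M * V ≤ M ^ 3 * V := Nat.mul_le_mul_right V (Nat.le_self_pow three_ne_zero M)
  have hamplify := card_mul_sq_mul_norm_sum_sum_sq_le χ hT (by linarith) hV hVM hτ hF hF' hξ hζ
  have hmoment := sum_norm_sum_mulChar_moebius_pow_mul_le hχ hn hp hV hVM hpT hτ hlog hF' hβ₁ hβ
  set S := ‖∑ x ∈ F, ∑ y ∈ F', ξ x * ζ y * χ (fareyEmb p x - fareyEmb p y)‖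
  set Z := ∑ X ∈ frames V (17 * M), ∑ a ∈ F', ∑ b ∈ F',
    ‖∑ t ∈ T, χ (-X.moebius (ZMod p) a + t) * conj (χ (-X.moebius (ZMod p) b + t))‖
  have hT₀ : 0 < #T := by
    by_contra! h
    rw [Nat.le_zero.1 h, zero_pow hn.ne'] at hpT
    exact (Fact.out : p.Prime).ne_zero (Nat.le_zero.1 hpT)
  refine le_of_mul_le_mul_left ?_ (by positivity : (0 : ℝ) < (#T * V ^ 2) ^ (2 * n))
  calc (#T * V ^ 2 : ℝ) ^ (2 * n) * (S ^ (4 * n) * (V ^ 2 * M ^ 6))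
      = (#T * V ^ 2 * S ^ 2) ^ (2 * n) * (V ^ 2 * M ^ 6) := by
        rw [mul_pow _ (S ^ 2), ← pow_mul S, show 2 * (2 * n) = 4 * n by ring, mul_assoc]
    _ ≤ (2 * M ^ 2 * τ * Z) ^ (2 * n) * (V ^ 2 * M ^ 6) := by gcongr
    _ = (2 * M ^ 2 * τ) ^ (2 * n) * (Z ^ (2 * n) * (V ^ 2 * M ^ 6)) := by
        rw [mul_pow _ Z, mul_assoc]
    _ ≤ (2 * M ^ 2 * τ) ^ (2 * n) * ((18496 * (V ^ 2 * M ^ 6) * (n * #T)) ^ (2 * n) *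
          (10 ^ 9 * τ ^ 7 * β ^ 4 * p)) := by
        have : (0 : ℝ) ≤ (2 * M ^ 2 * τ) ^ (2 * n) := (even_two_mul n).pow_nonneg _
        gcongr
    _ = ((#T * V ^ 2) * (36992 * n * τ * M ^ 8)) ^ (2 * n) * (10 ^ 9 * τ ^ 7 * β ^ 4 * p) := by
        rw [← mul_assoc, ← mul_pow]
        ring
    _ = _ := by rw [mul_pow, mul_assoc]

end Amplification

section ParameterChoice

lemma exists_forall_card_divisors_le_and_log_le {ε : ℝ} (hε : 0 < ε) :
    ∃ c : ℝ, 1 ≤ c ∧ ∀ p : ℕ, 0 < p →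
      (∀ n ≤ p, (#n.divisors : ℝ) ≤ c * (p : ℝ) ^ ε) ∧ 1 + Real.log p ≤ c * (p : ℝ) ^ ε := by
  obtain ⟨C, hC, hdivisors⟩ := exists_forall_card_divisors_le_mul_rpow hε
  have hε' : 0 < 1 / ε := one_div_pos.2 hε
  refine ⟨C + 1 + 1 / ε, by linarith, fun p hp => ?_⟩
  have hu : 1 ≤ (p : ℝ) ^ ε := Real.one_le_rpow (Nat.one_le_cast.2 hp) hε.le
  refine ⟨fun n hn => ?_, ?_⟩
  · rcases eq_or_ne n 0 with rfl | hn₀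
    · rw [Nat.divisors_zero, card_empty, Nat.cast_zero]
      positivity
    · calc (#n.divisors : ℝ) ≤ C * (n : ℝ) ^ ε := hdivisors n hn₀
        _ ≤ (C + 1 + 1 / ε) * (p : ℝ) ^ ε := by
          gcongr
          linarith
  · calc 1 + Real.log p ≤ (p : ℝ) ^ ε + (p : ℝ) ^ ε / ε :=
          add_le_add hu (Real.log_le_rpow_div p.cast_nonneg hε)
      _ = (1 + 1 / ε) * (p : ℝ) ^ ε := by ring
      _ ≤ (C + 1 + 1 / ε) * (p : ℝ) ^ ε := by
        gcongr
        linarith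

lemma exists_finset_zmod_mul_mem_Ioc {p V M : ℕ} (hV : 0 < V) (hVM : V ≤ M) (hp : 4 * M < p) :
    ∃ T : Finset (ZMod p), M < #T * V ∧ ∀ t ∈ T, M < t.val * V ∧ t.val * V ≤ 4 * M := by
  set T₀ := M / V + 1
  have hlower : M < T₀ * V := Nat.lt_mul_of_div_lt (Nat.lt_succ_self _) hV
  have hupper : T₀ * V ≤ 2 * M := by
    rw [add_mul, one_mul]
    linarith [Nat.div_mul_le_self M V]
  have hT₀ : 2 * T₀ < p := by linarith [Nat.le_mul_of_pos_right T₀ hV]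
  have hval : ∀ t ∈ Ioc T₀ (2 * T₀), ((t : ℕ) : ZMod p).val = t := fun t ht =>
    ZMod.val_cast_of_lt ((mem_Ioc.1 ht).2.trans_lt hT₀)
  refine ⟨(Ioc T₀ (2 * T₀)).image (Nat.cast : ℕ → ZMod p), ?_, ?_⟩
  · have hinj : Set.InjOn (Nat.cast : ℕ → ZMod p) (Ioc T₀ (2 * T₀)) := fun s hs t ht hst => by
      rw [← hval s hs, hst, hval t ht]
    rwa [card_image_of_injOn hinj, Nat.card_Ioc, two_mul, Nat.add_sub_cancel]
  · refine forall_mem_image.2 fun t ht => ?_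
    obtain ⟨hlt, hle⟩ := mem_Ioc.1 ht
    rw [hval t ht]
    exact ⟨hlower.trans_le (Nat.mul_le_mul_right V hlt.le),
      (Nat.mul_le_mul_right V hle).trans (by linarith)⟩

lemma pow_mul_le_of_pow_mul_le_mul_pow {S K c u A b P W : ℝ} {n : ℕ} (hS : 0 ≤ S) (hb : 0 < b)
    (hP : 0 < P) (hub : u ^ (2 * n + 7) = b) (hW : P * b ^ 6 ≤ 256 * W)
    (h : S ^ (4 * n) * W ≤ (K * (c * u) * A ^ 2) ^ (2 * n) * (10 ^ 9 * (c * u) ^ 7 * b ^ 4 * P)) :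
    S ^ (4 * n) * b ≤ 256 * (K * c) ^ (2 * n) * (10 ^ 9 * c ^ 7) * A ^ (4 * n) := by
  refine le_of_mul_le_mul_right ?_ (by positivity : 0 < P * b ^ 5)
  calc S ^ (4 * n) * b * (P * b ^ 5) = S ^ (4 * n) * (P * b ^ 6) := by ring
    _ ≤ S ^ (4 * n) * (256 * W) := by gcongr
    _ = 256 * (S ^ (4 * n) * W) := by ring
    _ ≤ 256 * ((K * (c * u) * A ^ 2) ^ (2 * n) * (10 ^ 9 * (c * u) ^ 7 * b ^ 4 * P)) := by gcongr
    _ = 256 * (K * c) ^ (2 * n) * (10 ^ 9 * c ^ 7) * A ^ (4 * n) * (P * b ^ 4) *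
          u ^ (2 * n + 7) := by
        rw [show 4 * n = 2 * (2 * n) by ring, pow_mul A, pow_add u]
        simp only [mul_pow]
        ring
    _ = _ := by
        rw [hub]
        ring

lemma le_mul_mul_of_pow_mul_le {S D A w b : ℝ} {m : ℕ} (hm : m ≠ 0) (hD : 0 ≤ D) (hA : 0 ≤ A)
    (hw : 0 ≤ w) (hb : 0 < b) (hwb : w ^ m * b = 1) (h : S ^ m * b ≤ D * A ^ m) :
    S ≤ (D + 1) * (A * w) := by
  refine le_of_pow_le_pow_left₀ hm (by positivity) (le_of_mul_le_mul_right ?_ hb)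
  calc S ^ m * b ≤ D * A ^ m := h
    _ ≤ (D + 1) ^ m * A ^ m := by
        gcongr
        linarith [le_self_pow₀ (by linarith : 1 ≤ D + 1) hm]
    _ = (D + 1) ^ m * A ^ m * (w ^ m * b) := by rw [hwb, mul_one]
    _ = ((D + 1) * (A * w)) ^ m * b := by
        rw [mul_pow, mul_pow]
        ring

end ParameterChoice

section SmallRange

theorem norm_sum_sum_mulChar_fareyEmb_sub_pow_mul_le_pow {p M n : ℕ} [Fact p.Prime]
    {χ : MulChar (ZMod p) ℂ} {F F' : Finset ℚ} {ξ ζ : ℚ → ℂ} {v b u c : ℝ} (hχ : χ ≠ 1)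
    (hn : 0 < n) (hv : 1 ≤ v) (hvp : v ^ 8 = p) (hb : 1 ≤ b) (hpb : p ≤ b ^ n)
    (hub : u ^ (2 * n + 7) = b) (hM : v * b < M + 1) (hp : 1156 * M ^ 3 * ⌊v⌋₊ < p)
    (hdiv : ∀ n ≤ p, (#n.divisors : ℝ) ≤ c * u) (hlog : 1 + Real.log p ≤ c * u)
    (hF : F ⊆ fareySet M) (hF' : F' ⊆ fareySet M) (hden : ∀ q ∈ F', (M : ℝ) ≤ b * q.den)
    (hξ : ∀ x, ‖ξ x‖ ≤ 1) (hζ : ∀ x, ‖ζ x‖ ≤ 1) :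
    ‖∑ x ∈ F, ∑ y ∈ F', ξ x * ζ y * χ (fareyEmb p x - fareyEmb p y)‖ ^ (4 * n) * b ≤
      256 * (36992 * n * c) ^ (2 * n) * (10 ^ 9 * c ^ 7) * ((M : ℝ) ^ 4) ^ (4 * n) := by
  have hP : (0 : ℝ) < p := by rw [← hvp]; positivity
  have hV : 0 < ⌊v⌋₊ := Nat.floor_pos.2 hv
  have hVv : ⌊v⌋₊ ≤ v := Nat.floor_le (zero_le_one.trans hv)
  have hvV : v ≤ 2 * ⌊v⌋₊ := by
    have : (1 : ℝ) ≤ ⌊v⌋₊ := Nat.one_le_cast.2 hV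
    linarith [Nat.lt_floor_add_one v]
  have hVM : ⌊v⌋₊ ≤ M := by
    have : (⌊v⌋₊ : ℝ) < M + 1 := (hVv.trans (le_mul_of_one_le_right (by linarith) hb)).trans_lt hM
    exact Nat.lt_succ_iff.1 (by exact_mod_cast this)
  have hvbM : v * b ≤ 2 * M := by
    have : (1 : ℝ) ≤ M := Nat.one_le_cast.2 (hV.trans_le hVM)
    linarith
  have hMp : 4 * M < p := by
    linarith [Nat.le_self_pow three_ne_zero M, Nat.le_mul_of_pos_right (M ^ 3) hV]
  obtain ⟨T, hTM, hT⟩ := exists_finset_zmod_mul_mem_Ioc hV hVM hMp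
  have hbT : b ≤ #T := by
    have hTM' : (M : ℝ) + 1 ≤ #T * ⌊v⌋₊ := by exact_mod_cast hTM
    refine le_of_mul_le_mul_left ?_ (by linarith : 0 < v)
    calc v * b ≤ #T * ⌊v⌋₊ := hM.le.trans hTM'
      _ ≤ #T * v := by gcongr
      _ = v * #T := mul_comm _ _
  have hpT : p ≤ #T ^ n := by
    have : (p : ℝ) ≤ #T ^ n := hpb.trans (by gcongr)
    exact_mod_cast this
  have hW : (p : ℝ) * b ^ 6 ≤ 256 * ((⌊v⌋₊ : ℝ) ^ 2 * M ^ 6) :=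
    calc (p : ℝ) * b ^ 6 = v ^ 2 * (v * b) ^ 6 := by rw [← hvp]; ring
      _ ≤ (2 * ⌊v⌋₊ : ℝ) ^ 2 * (2 * M) ^ 6 := by gcongr
      _ = _ := by ring
  refine pow_mul_le_of_pow_mul_le_mul_pow (norm_nonneg _) (by linarith) hP hub hW ?_
  rw [← pow_mul]
  exact norm_sum_sum_mulChar_fareyEmb_sub_pow_mul_le hχ hn hp hV hVM hpT hT hdiv hlog hF hF' hb
    hden hξ hζ

theorem exists_norm_sum_sum_filter_le_den_le {η : ℝ} (hη : 0 < η) :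
    ∃ κ : ℝ, 0 < κ ∧ κ ≤ η ∧ ∃ C : ℝ, 0 < C ∧ ∀ (p M : ℕ) [Fact p.Prime],
      (p : ℝ) ^ (1 / 8 + η) < M + 1 → 1156 * M ^ 3 * ⌊(p : ℝ) ^ (1 / 8 : ℝ)⌋₊ < p →
      ∀ χ : MulChar (ZMod p) ℂ, χ ≠ 1 → ∀ ξ ζ : ℚ → ℂ, (∀ x, ‖ξ x‖ ≤ 1) → (∀ y, ‖ζ y‖ ≤ 1) →
      ‖∑ x ∈ fareySet M, ∑ y ∈ fareySet M with (M : ℝ) ≤ (p : ℝ) ^ η * y.den,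
          ξ x * ζ y * χ (fareyEmb p x - fareyEmb p y)‖ ≤ C * (M ^ 4 * (p : ℝ) ^ (-κ)) := by
  set n := ⌈1 / η⌉₊
  have hn : 0 < n := Nat.ceil_pos.2 (one_div_pos.2 hη)
  have hn₁ : (1 : ℝ) ≤ n := Nat.one_le_cast.2 hn
  have hηn : 1 ≤ η * n := (div_le_iff₀' hη).1 (Nat.le_ceil (1 / η))
  obtain ⟨c, hc, hdivlog⟩ :=
    exists_forall_card_divisors_le_and_log_le (by positivity : 0 < η / (2 * n + 7))
  have hκη : η / (4 * n) ≤ η := div_le_self hη.le (by linarith)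
  refine ⟨η / (4 * n), by positivity, hκη,
    256 * (36992 * n * c) ^ (2 * n) * (10 ^ 9 * c ^ 7) + 1, by positivity, ?_⟩
  intro p M _ hM hp χ hχ ξ ζ hξ hζ
  have hP₁ : (1 : ℝ) ≤ p := Nat.one_le_cast.2 (Fact.out : p.Prime).one_le
  have hP : (0 : ℝ) < p := by linarith
  obtain ⟨hdiv, hlog⟩ := hdivlog p (Fact.out : p.Prime).pos
  have hb : 1 ≤ (p : ℝ) ^ η := Real.one_le_rpow hP₁ hη.le
  have hvp : ((p : ℝ) ^ (1 / 8 : ℝ)) ^ 8 = p := by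
    rw [← Real.rpow_mul_natCast hP.le]
    norm_num
  have hpb : (p : ℝ) ≤ ((p : ℝ) ^ η) ^ n := by
    rw [← Real.rpow_mul_natCast hP.le]
    exact Real.self_le_rpow_of_one_le hP₁ hηn
  have hub : ((p : ℝ) ^ (η / (2 * n + 7))) ^ (2 * n + 7) = (p : ℝ) ^ η := by
    rw [← Real.rpow_mul_natCast hP.le]
    push_cast
    rw [div_mul_cancel₀ _ (by positivity)]
  have hwb : ((p : ℝ) ^ (-(η / (4 * n)))) ^ (4 * n) * (p : ℝ) ^ η = 1 := by
    rw [← Real.rpow_mul_natCast hP.le, ← Real.rpow_add hP]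
    push_cast
    rw [neg_mul, div_mul_cancel₀ _ (by positivity), neg_add_cancel, Real.rpow_zero]
  refine le_mul_mul_of_pow_mul_le (by positivity) (by positivity) (by positivity) (by positivity)
    (by linarith) hwb ?_
  exact norm_sum_sum_mulChar_fareyEmb_sub_pow_mul_le_pow hχ hn
    (Real.one_le_rpow hP₁ (by norm_num)) hvp hb hpb hub (by rwa [← Real.rpow_add hP]) hp hdiv hlog
    subset_rfl (filter_subset _ _) (fun q hq => (mem_filter.1 hq).2) hξ hζ

lemma filter_not_le_den_fareySet_subset {M : ℕ} {b : ℝ} (hb : 0 < b) :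
    {y ∈ fareySet M | ¬(M : ℝ) ≤ b * y.den} ⊆ fareySet (M / b) := fun y hy => by
  obtain ⟨hy, hlt⟩ := mem_filter.1 hy
  obtain ⟨hnum, hle, -⟩ := mem_fareySet.1 hy
  refine mem_fareySet.2 ⟨hnum, hle, Nat.le_floor ?_⟩
  rw [le_div_iff₀ hb]
  linarith

lemma norm_sum_sum_filter_lt_den_le {p M : ℕ} [NeZero p] (χ : MulChar (ZMod p) ℂ) {ξ ζ : ℚ → ℂ}
    {b : ℝ} (hb : 0 < b) (hξ : ∀ x, ‖ξ x‖ ≤ 1) (hζ : ∀ y, ‖ζ y‖ ≤ 1) :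
    ‖∑ x ∈ fareySet M, ∑ y ∈ fareySet M with ¬(M : ℝ) ≤ b * y.den,
        ξ x * ζ y * χ (fareyEmb p x - fareyEmb p y)‖ ≤ 4 * (M ^ 4 * (b ^ 2)⁻¹) :=
  calc _ ≤ (#(fareySet M) : ℝ) * #{y ∈ fareySet M | ¬(M : ℝ) ≤ b * y.den} :=
        norm_sum_sum_mulChar_le_card_mul_card χ (fun x _ => hξ x) (fun y _ => hζ y) _
    _ ≤ #(fareySet M) * #(fareySet (M / b)) := by
        gcongr
        exact filter_not_le_den_fareySet_subset hb
    _ ≤ (2 * M ^ 2) * (2 * (M / b) ^ 2) := by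
        gcongr
        · exact card_fareySet_le M.cast_nonneg
        · exact card_fareySet_le (by positivity)
    _ = _ := by ring

theorem exists_norm_sum_sum_mulChar_fareyEmb_sub_le {η : ℝ} (hη : 0 < η) :
    ∃ κ : ℝ, 0 < κ ∧ ∃ C : ℝ, 0 < C ∧ ∀ (p M : ℕ) [Fact p.Prime],
      (p : ℝ) ^ (1 / 8 + η) < M + 1 → 1156 * M ^ 3 * ⌊(p : ℝ) ^ (1 / 8 : ℝ)⌋₊ < p →
      ∀ χ : MulChar (ZMod p) ℂ, χ ≠ 1 → ∀ ξ ζ : ℚ → ℂ, (∀ x, ‖ξ x‖ ≤ 1) → (∀ y, ‖ζ y‖ ≤ 1) →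
      ‖∑ x ∈ fareySet M, ∑ y ∈ fareySet M, ξ x * ζ y * χ (fareyEmb p x - fareyEmb p y)‖ ≤
        C * M ^ 4 * (p : ℝ) ^ (-κ) := by
  obtain ⟨κ, hκ, hκη, C, hC, hmain⟩ := exists_norm_sum_sum_filter_le_den_le hη
  refine ⟨κ, hκ, C + 4, by positivity, fun p M _ hM hp χ hχ ξ ζ hξ hζ => ?_⟩
  have hP₁ : (1 : ℝ) ≤ p := Nat.one_le_cast.2 (Fact.out : p.Prime).one_le
  have hP : (0 : ℝ) < p := by linarith
  have htail : (((p : ℝ) ^ η) ^ 2)⁻¹ ≤ (p : ℝ) ^ (-κ) := by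
    rw [← Real.rpow_mul_natCast hP.le, ← Real.rpow_neg hP.le]
    refine Real.rpow_le_rpow_of_exponent_le hP₁ ?_
    push_cast
    linarith
  simp only [← sum_filter_add_sum_filter_not (fareySet M)
    (fun y : ℚ => (M : ℝ) ≤ (p : ℝ) ^ η * y.den) (fun y => ξ _ * ζ y * _), sum_add_distrib]
  calc _ ≤ C * (M ^ 4 * (p : ℝ) ^ (-κ)) + 4 * (M ^ 4 * (((p : ℝ) ^ η) ^ 2)⁻¹) :=
        norm_add_le_of_le (hmain p M hM hp χ hχ ξ ζ hξ hζ)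
          (norm_sum_sum_filter_lt_den_le χ (by positivity) hξ hζ)
    _ ≤ C * (M ^ 4 * (p : ℝ) ^ (-κ)) + 4 * (M ^ 4 * (p : ℝ) ^ (-κ)) := by gcongr
    _ = (C + 4) * M ^ 4 * (p : ℝ) ^ (-κ) := by ring

end SmallRange

section Ranges

variable {p : ℕ} {R : ℝ} {χ : MulChar (ZMod p) ℂ} {ξ ζ : ℚ → ℂ}

lemma norm_sum_sum_mulChar_fareyEmb_sub_le_of_le [NeZero p] (χ : MulChar (ZMod p) ℂ) {B κ : ℝ}
    (hpB : p ≤ B) (hκ : 0 ≤ κ) (hR : 0 ≤ R) (hξ : ∀ x, ‖ξ x‖ ≤ 1) (hζ : ∀ y, ‖ζ y‖ ≤ 1) :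
    ‖∑ x ∈ fareySet R, ∑ y ∈ fareySet R, ξ x * ζ y * χ (fareyEmb p x - fareyEmb p y)‖ ≤
      4 * B ^ κ * R ^ 4 * (p : ℝ) ^ (-κ) := by
  have hP : (0 : ℝ) < p := Nat.cast_pos.2 (NeZero.pos p)
  have hBκ : 1 ≤ B ^ κ * (p : ℝ) ^ (-κ) := by
    rw [Real.rpow_neg hP.le, ← div_eq_mul_inv, one_le_div (by positivity)]
    exact Real.rpow_le_rpow hP.le hpB hκ
  calc _ ≤ (#(fareySet R) : ℝ) * #(fareySet R) :=
        norm_sum_sum_mulChar_le_card_mul_card χ (fun x _ => hξ x) (fun y _ => hζ y) _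
    _ ≤ (2 * R ^ 2) * (2 * R ^ 2) := by gcongr <;> exact card_fareySet_le hR
    _ = 4 * R ^ 4 * 1 := by ring
    _ ≤ 4 * R ^ 4 * (B ^ κ * (p : ℝ) ^ (-κ)) := by gcongr
    _ = _ := by ring

theorem norm_sum_sum_mulChar_fareyEmb_sub_le_of_rpow_le [Fact p.Prime] {α : ℝ} (hχ : χ ≠ 1)
    (hR : (p : ℝ) ^ α ≤ R) (hR' : R < (p : ℝ) ^ (1 / 2 : ℝ)) (hξ : ∀ x, ‖ξ x‖ ≤ 1)
    (hζ : ∀ y, ‖ζ y‖ ≤ 1) :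
    ‖∑ x ∈ fareySet R, ∑ y ∈ fareySet R, ξ x * ζ y * χ (fareyEmb p x - fareyEmb p y)‖ ≤
      4 * R ^ 4 * (p : ℝ) ^ (-(2 * α - 1 / 2)) := by
  have hP : (0 : ℝ) < p := Nat.cast_pos.2 (Fact.out : p.Prime).pos
  have hR₀ : 0 ≤ R := (by positivity : 0 ≤ (p : ℝ) ^ α).trans hR
  have hM : (⌊R⌋₊ : ℝ) ≤ R := Nat.floor_le hR₀
  have hMp : ⌊R⌋₊ ^ 2 < p := by
    rw [← Real.sqrt_eq_rpow, Real.lt_sqrt hR₀] at hR'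
    have : (⌊R⌋₊ : ℝ) ^ 2 < p := (pow_le_pow_left₀ (Nat.cast_nonneg _) hM 2).trans_lt hR'
    exact_mod_cast this
  rw [← fareySet_floor R]
  calc _ ≤ 4 * √p * (⌊R⌋₊ : ℝ) ^ 2 := norm_sum_sum_mulChar_fareyEmb_sub_le_sqrt hχ hMp hξ hζ
    _ = 4 * (((p : ℝ) ^ α) ^ 2 * (p : ℝ) ^ (-(2 * α - 1 / 2))) * (⌊R⌋₊ : ℝ) ^ 2 := by
        rw [Real.sqrt_eq_rpow, ← Real.rpow_mul_natCast hP.le, ← Real.rpow_add hP]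
        push_cast
        ring_nf
    _ ≤ 4 * (R ^ 2 * (p : ℝ) ^ (-(2 * α - 1 / 2))) * R ^ 2 := by gcongr
    _ = _ := by ring

lemma mul_floor_pow_mul_floor_rpow_lt (hp : 1156 ^ 20 < p) (hR : 0 ≤ R)
    (hR' : R < (p : ℝ) ^ (13 / 50 : ℝ)) : 1156 * ⌊R⌋₊ ^ 3 * ⌊(p : ℝ) ^ (1 / 8 : ℝ)⌋₊ < p := by
  have hP₁ : (1 : ℝ) ≤ p := Nat.one_le_cast.2 (by omega)
  have hP : (0 : ℝ) < p := by linarith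
  have hp' : (1156 : ℝ) < (p : ℝ) ^ (1 / 20 : ℝ) := by
    rw [← Real.rpow_lt_rpow_iff (z := 20) (by norm_num) (by positivity) (by norm_num),
      ← Real.rpow_mul hP.le]
    norm_num
    exact_mod_cast hp
  have : 1156 * (⌊R⌋₊ : ℝ) ^ 3 * ⌊(p : ℝ) ^ (1 / 8 : ℝ)⌋₊ < p :=
    calc 1156 * (⌊R⌋₊ : ℝ) ^ 3 * ⌊(p : ℝ) ^ (1 / 8 : ℝ)⌋₊
        ≤ 1156 * ((p : ℝ) ^ (13 / 50 : ℝ)) ^ 3 * (p : ℝ) ^ (1 / 8 : ℝ) := by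
          gcongr
          · exact (Nat.floor_le hR).trans hR'.le
          · exact Nat.floor_le (by positivity)
      _ < (p : ℝ) ^ (1 / 20 : ℝ) * ((p : ℝ) ^ (13 / 50 : ℝ)) ^ 3 * (p : ℝ) ^ (1 / 8 : ℝ) := by
          gcongr
      _ = (p : ℝ) ^ (191 / 200 : ℝ) := by
          rw [← Real.rpow_mul_natCast hP.le, ← Real.rpow_add hP, ← Real.rpow_add hP]
          norm_num
      _ ≤ p := Real.rpow_le_self_of_one_le hP₁ (by norm_num)
  exact_mod_cast this

end Ranges

/-- Corollary 2.15 (oscillation of characters on differences of Farey fractions). -/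
theorem farey_character_sum (η : ℝ) (hη : 0 < η) :
    ∃ κ : ℝ, 0 < κ ∧ ∃ C : ℝ, 0 < C ∧ ∀ (p : ℕ), p.Prime →
      ∀ (R : ℝ), (p : ℝ) ^ ((1 : ℝ) / 8 + η) ≤ R → R < (p : ℝ) ^ ((1 : ℝ) / 2) →
      ∀ (χ : MulChar (ZMod p) ℂ), χ ≠ 1 →
      ∀ (ξ ζ : ℚ → ℂ), (∀ ρ, ‖ξ ρ‖ ≤ 1) → (∀ ϱ, ‖ζ ϱ‖ ≤ 1) →
      ‖∑ ρ ∈ fareySet R, ∑ ϱ ∈ fareySet R,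
          ξ ρ * ζ ϱ * χ (fareyEmb p ρ - fareyEmb p ϱ)‖ ≤
        C * R ^ 4 * (p : ℝ) ^ (-κ) := by
  obtain ⟨κ, hκ, C, hC, hsmall⟩ := exists_norm_sum_sum_mulChar_fareyEmb_sub_le hη
  refine ⟨min κ (1 / 50), by positivity, C + 4 + 4 * (1156 ^ 20) ^ (1 / 50 : ℝ), by positivity, ?_⟩
  intro p hp R hR hR' χ hχ ξ ζ hξ hζ
  have : Fact p.Prime := ⟨hp⟩
  have hP₁ : (1 : ℝ) ≤ p := Nat.one_le_cast.2 hp.one_le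
  have hR₀ : 0 ≤ R := le_trans (by positivity) hR
  have hB : (0 : ℝ) < (1156 ^ 20) ^ (1 / 50 : ℝ) := by positivity
  rcases le_or_gt p (1156 ^ 20) with hpB | hpB
  · have hpB' : (p : ℝ) ≤ 1156 ^ 20 := by exact_mod_cast hpB
    refine (norm_sum_sum_mulChar_fareyEmb_sub_le_of_le (κ := 1 / 50) χ hpB' (by norm_num) hR₀ hξ
      hζ).trans ?_
    gcongr
    exacts [by linarith, min_le_right _ _]
  rcases le_or_gt ((p : ℝ) ^ (13 / 50 : ℝ)) R with hlarge | hlarge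
  · refine (norm_sum_sum_mulChar_fareyEmb_sub_le_of_rpow_le hχ hlarge hR' hξ hζ).trans ?_
    gcongr
    exacts [by linarith, (min_le_right _ _).trans (by norm_num)]
  · have hM : (p : ℝ) ^ (1 / 8 + η) < ⌊R⌋₊ + 1 := hR.trans_lt (Nat.lt_floor_add_one R)
    rw [← fareySet_floor R]
    refine (hsmall p ⌊R⌋₊ hM (mul_floor_pow_mul_floor_rpow_lt hpB hR₀ hlarge) χ hχ ξ ζ hξ
      hζ).trans ?_
    gcongr
    exacts [by linarith, Nat.floor_le hR₀, min_le_left _ _]
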